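/- Let β be an irrational real number, let λ1, λ2, λ3 ≥ 0 with at least one of them positive, and suppose max{1, λ2} ≤ λ1 + λ3 (region III of extended Harper's model). Let θ ∈ ℝ and let H be any bounded linear operator on ℓ²(ℤ, ℂ) satisfying (Hψ)_k = 2cos(2π(θ+βk))·ψ_k + c(θ+βk)·ψ_{k+1} + conj(c(θ+β(k−1)))·ψ_{k−1} for all ψ ∈ ℓ²(ℤ,ℂ) and k ∈ ℤ. Then for every real E in the spectrum of H, the Lyapunov exponent of the transfer-matrix cocycle satisfies L(β, A^E) = log(max{λ1, λ3}); equivalently, the Lyapunov exponent of extended Harper's model on the spectrum is zero throughout region III. -/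

import Mathlib

open MeasureTheory Filter Complex
open scoped ENNReal Real NNReal

noncomputable section

attribute [local instance] Matrix.frobeniusNormedAddCommGroup

/-- The `n`-step cocycle iterate `D^{(n)}_β(x) = D(x+(n-1)β)⋯D(x)`. -/
def cocycleIter (D : ℝ → Matrix (Fin 2) (Fin 2) ℂ) (β : ℝ) : ℕ → ℝ → Matrix (Fin 2) (Fin 2) ℂ
  | 0, _ => 1
  | n + 1, x => cocycleIter D β n (x + β) * D x

/-- The extended-real-valued integral `∫₀¹ log (g x) dx`, with value `-∞` allowed
(the positive and negative parts are integrated separately; `log 0 = -∞`). -/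
def logIntegral (g : ℝ → ℝ) : EReal :=
  ((∫⁻ x in Set.Ioc (0 : ℝ) 1, ENNReal.ofReal (Real.log (g x))) : EReal) -
    ((∫⁻ x in Set.Ioc (0 : ℝ) 1,
        if g x = 0 then (⊤ : ℝ≥0∞) else ENNReal.ofReal (-Real.log (g x))) : EReal)

/-- The Lyapunov exponent `L(β, D) = inf_{n ≥ 1} (1/n) ∫₀¹ log ‖D^{(n)}_β(x)‖ dx ∈ ℝ ∪ {-∞}`. -/
def lyapunov (β : ℝ) (D : ℝ → Matrix (Fin 2) (Fin 2) ℂ) : EReal :=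
  ⨅ n : ℕ, ((((n : ℝ) + 1)⁻¹ : ℝ) : EReal) * logIntegral fun x => ‖cocycleIter D β (n + 1) x‖

/-- `c(z) = λ₃ e^{-2πi(z+β/2)} + λ₂ + λ₁ e^{2πi(z+β/2)}` of extended Harper's model. -/
def harperC (lam1 lam2 lam3 β : ℝ) (z : ℂ) : ℂ :=
  (lam3 : ℂ) * Complex.exp (-(2 * (π : ℂ) * Complex.I) * (z + (β : ℂ) / 2)) + (lam2 : ℂ) +
    (lam1 : ℂ) * Complex.exp ((2 * (π : ℂ) * Complex.I) * (z + (β : ℂ) / 2))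

/-- `c̃(z) = λ₃ e^{2πi(z+β/2)} + λ₂ + λ₁ e^{-2πi(z+β/2)}`, the entire extension of
`x ↦ conj (c x)` from `ℝ`. -/
def harperCt (lam1 lam2 lam3 β : ℝ) (z : ℂ) : ℂ :=
  (lam3 : ℂ) * Complex.exp ((2 * (π : ℂ) * Complex.I) * (z + (β : ℂ) / 2)) + (lam2 : ℂ) +
    (lam1 : ℂ) * Complex.exp (-(2 * (π : ℂ) * Complex.I) * (z + (β : ℂ) / 2))

/-- The transfer matrix `A^E(z) = [[E - 2cos(2πz), -c̃(z-β)], [c(z), 0]]`. -/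
def harperA (lam1 lam2 lam3 β : ℝ) (E : ℂ) (z : ℂ) : Matrix (Fin 2) (Fin 2) ℂ :=
  !![E - 2 * Complex.cos (2 * (π : ℂ) * z), -harperCt lam1 lam2 lam3 β (z - (β : ℂ));
     harperC lam1 lam2 lam3 β z, 0]

/-!
Write `m = log (max λ₁ λ₃)` and `e(z) = exp (2πiz)`.

Lower bound. In the region `λ₂ ≤ λ₁ + λ₃` all zeros of `c` lie on the appropriate side of the unit
circle, so Jensen's formula gives `∫ log |c| = m`; since `det A` has modulus `|c(x)| |c(x - β)|` on
the real line and `|det M| ≤ ‖M‖²`, the Lyapunov exponent is at least `m`.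

Upper bound. Suppose the exponent exceeds `m`, and consider the growth rate of the iterates on the
lines `Im z = ε`. Transposition symmetry makes it even in `ε`, and the leading coefficients of `A`
at `+i∞`, together with `1 ≤ λ₁ + λ₃`, bound it by `m + 2πε` for large `ε`. The `n`-step iterate is
a Laurent polynomial of degree `n` in `e(z)`. As the rate has slope less than `2π` between suitable
heights, only the coefficients in a window of length `< n` matter, and a polynomial of small degree
is large at some point of every orbit segment of an irrational rotation: every orbit segment
carries a block of nearly maximal growth.

At small heights such blocks, together with the bound on the determinant, force the iterate over a
period of a rational approximant `p / q` of `β` to have a trace of nearly maximal size. That trace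
is `1 / q`-periodic, hence has only three Laurent coefficients, and these are controlled by the
real line and by large heights. So the rate is constant near height `0`, and there are blocks of
nearly maximal growth on the real line as well. Such a block makes each value of an approximate
solution of `(H - E) ψ = φ` a small multiple of its neighbours plus a multiple of nearby values of
`φ`, so `H - E` is bounded below; being self-adjoint, it is invertible, and `E` is not in the
spectrum.
-/

namespace ExtendedHarper

open scoped Matrix Matrix.Norms.Frobenius

/-! ### The exponential and rational approximation -/

/-- The character `e(z) = exp(2πiz)` of `ℂ / ℤ`. -/
def ee (z : ℂ) : ℂ := Complex.exp (2 * π * I * z)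

lemma ee_add (z w : ℂ) : ee (z + w) = ee z * ee w := by
  simp only [ee, mul_add, Complex.exp_add]

@[simp] lemma ee_zero : ee 0 = 1 := by simp [ee]

lemma ee_ne_zero (z : ℂ) : ee z ≠ 0 := Complex.exp_ne_zero _

lemma ee_neg (z : ℂ) : ee (-z) = (ee z)⁻¹ := by
  simp only [ee, mul_neg, Complex.exp_neg]

lemma ee_nat_mul (n : ℕ) (z : ℂ) : ee (n * z) = ee z ^ n := by
  rw [ee, ee, ← Complex.exp_nat_mul]
  ring_nf

lemma periodic_ee : Function.Periodic ee 1 := fun z => by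
  rw [ee_add, ee, ee, mul_one, Complex.exp_two_pi_mul_I, mul_one]

lemma continuous_ee : Continuous ee := by
  unfold ee
  fun_prop

lemma norm_ee (z : ℂ) : ‖ee z‖ = Real.exp (-2 * π * z.im) := by
  simp [ee, Complex.norm_exp]

@[simp] lemma norm_ee_ofReal (x : ℝ) : ‖ee x‖ = 1 := by simp [norm_ee]

lemma norm_ee_sub_ee (x y : ℝ) : ‖ee x - ee y‖ = ‖1 - ee ((x - y : ℝ))‖ := by
  have h : ee x = ee y * ee ((x - y : ℝ)) := by rw [← ee_add]; push_cast; ring_nf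
  rw [h, ← mul_sub_one, norm_mul, norm_ee_ofReal, one_mul, norm_sub_rev]

lemma norm_ee_sub_ee_le (x y : ℝ) : ‖ee x - ee y‖ ≤ 2 * π * |x - y| := by
  have h : ee ((x - y : ℝ)) = Complex.exp (I * (2 * π * (x - y) : ℝ)) := by
    rw [ee]; push_cast; ring_nf
  calc ‖ee x - ee y‖ ≤ ‖2 * π * (x - y)‖ := by
        rw [norm_ee_sub_ee, norm_sub_rev, h]
        exact Real.norm_exp_I_mul_ofReal_sub_one_le
    _ = 2 * π * |x - y| := by
        rw [norm_mul, Real.norm_of_nonneg Real.two_pi_pos.le, Real.norm_eq_abs]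

lemma exists_ee_eq {w : ℂ} (hw : ‖w‖ = 1) : ∃ x : ℝ, ee x = w := by
  refine ⟨w.arg / (2 * π), ?_⟩
  have h := Complex.norm_mul_exp_arg_mul_I w
  rw [hw, Complex.ofReal_one, one_mul] at h
  refine Eq.trans ?_ h
  rw [ee]
  congr 1
  push_cast
  field_simp

lemma isPrimitiveRoot_ee (r : ℚ) : IsPrimitiveRoot (ee (r : ℝ)) r.den := by
  simpa [ee] using Complex.isPrimitiveRoot_exp_rat r

lemma ee_ratCast_pow (r : ℚ) (l : ℕ) : ee (r : ℝ) ^ l = ee ((l * r : ℝ)) := by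
  rw [← ee_nat_mul]
  push_cast
  rfl

lemma exists_rat_mem_nhds_of_irrational {β : ℝ} (hβ : Irrational β) (Q : ℕ) {s : Set ℝ}
    (hs : s ∈ nhds β) :
    ∃ r : ℚ, (r : ℝ) ∈ s ∧ Q ≤ r.den ∧ |β - r| < 1 / (r.den : ℝ) ^ 2 := by
  obtain ⟨η, hη, hηs⟩ := Metric.mem_nhds_iff.mp hs
  obtain ⟨ε, ⟨hεQ, hεη⟩, hε⟩ := (((hβ.eventually_forall_le_dist_cast_rat_of_den_le Q).and
    (gt_mem_nhds hη)).filter_mono nhdsWithin_le_nhds |>.and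
      (self_mem_nhdsWithin (s := Set.Ioi (0 : ℝ)))).exists
  obtain ⟨n, hn⟩ := exists_nat_one_div_lt hε
  obtain ⟨r, hr, hrn⟩ := Real.exists_rat_abs_sub_le_and_den_le β n.succ_pos
  have hden : (1 : ℝ) ≤ r.den := by exact_mod_cast r.pos
  have hrε : |β - r| < ε := by
    refine (hr.trans ?_).trans_lt hn
    push_cast
    exact one_div_le_one_div_of_le (by positivity) (by nlinarith)
  refine ⟨r, hηs ?_, ?_, hr.trans_lt ?_⟩
  · rw [Metric.mem_ball, dist_comm, Real.dist_eq]
    exact hrε.trans hεη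
  · by_contra! hQ
    exact (hεQ r hQ.le).not_gt (by rwa [Real.dist_eq])
  · have : (r.den : ℝ) ≤ n + 1 := by exact_mod_cast hrn
    push_cast
    exact one_div_lt_one_div_of_lt (by positivity) (by nlinarith)

lemma eventually_mul_pow_le_exp {κ : ℝ} (hκ : 0 < κ) (C : ℝ) (k : ℕ) :
    ∀ᶠ n : ℕ in atTop, C * ((n : ℝ) + 1) ^ k ≤ Real.exp (κ * n) := by
  have ht : Tendsto (fun n : ℕ => (n : ℝ) + 1) atTop atTop :=
    tendsto_atTop_add_const_right _ _ tendsto_natCast_atTop_atTop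
  have ho := ((isLittleO_pow_exp_pos_mul_atTop k hκ).const_mul_left C).comp_tendsto ht
  filter_upwards [ho.bound (Real.exp_pos (-κ))] with n hn
  calc C * ((n : ℝ) + 1) ^ k ≤ Real.exp (-κ) * Real.exp (κ * (n + 1)) := by
        simpa using (le_abs_self _).trans hn
    _ = Real.exp (κ * n) := by rw [← Real.exp_add]; ring_nf

/-! ### Cocycles -/

section Cocycle

variable {X Y M N : Type*} [Monoid M] [Monoid N]

/-- The `n`-step iterate `A (T^[n-1] x) * ⋯ * A (T x) * A x` of the cocycle `A` over the map `T`. -/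
def cocycleOver (T : X → X) (A : X → M) : ℕ → X → M
  | 0, _ => 1
  | n + 1, x => cocycleOver T A n (T x) * A x

variable {T : X → X} {A : X → M}

@[simp] lemma cocycleOver_zero (x : X) : cocycleOver T A 0 x = 1 := rfl

lemma cocycleOver_succ (n : ℕ) (x : X) :
    cocycleOver T A (n + 1) x = cocycleOver T A n (T x) * A x := rfl

@[simp] lemma cocycleOver_one (x : X) : cocycleOver T A 1 x = A x := one_mul _

lemma cocycleOver_add (m n : ℕ) (x : X) :
    cocycleOver T A (m + n) x = cocycleOver T A m (T^[n] x) * cocycleOver T A n x := by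
  induction n generalizing x with
  | zero => simp
  | succ n ih =>
    rw [← Nat.add_assoc, cocycleOver_succ, ih, cocycleOver_succ, Function.iterate_succ_apply,
      mul_assoc]

lemma map_cocycleOver (f : M →* N) (n : ℕ) (x : X) :
    f (cocycleOver T A n x) = cocycleOver T (f ∘ A) n x := by
  induction n generalizing x with
  | zero => exact map_one f
  | succ n ih => rw [cocycleOver_succ, map_mul, ih]; rfl

lemma cocycleOver_comp {S : Y → Y} {φ : Y → X} (h : Function.Semiconj φ S T) (n : ℕ) (y : Y) :
    cocycleOver S (A ∘ φ) n y = cocycleOver T A n (φ y) := by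
  induction n generalizing y with
  | zero => rfl
  | succ n ih => rw [cocycleOver_succ, ih, h.eq]; rfl

lemma cocycleOver_eq_prod {M : Type*} [CommMonoid M] {A : X → M} (n : ℕ) (x : X) :
    cocycleOver T A n x = ∏ j ∈ Finset.range n, A (T^[j] x) := by
  induction n generalizing x with
  | zero => rfl
  | succ n ih =>
    rw [cocycleOver_succ, ih, Finset.prod_range_succ']
    rfl

lemma cocycleOver_of_isFixedPt {x : X} (hx : Function.IsFixedPt T x) (n : ℕ) :
    cocycleOver T A n x = A x ^ n := by
  induction n with
  | zero => simp
  | succ n ih => rw [cocycleOver_succ, hx, ih, pow_succ]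

lemma cocycleOver_smul {S : Type*} [CommMonoid S] [MulAction S M] [IsScalarTower S M M]
    [SMulCommClass S M M] (f : X → S) (n : ℕ) (x : X) :
    cocycleOver T (fun x => f x • A x) n x = cocycleOver T f n x • cocycleOver T A n x := by
  induction n generalizing x with
  | zero => simp
  | succ n ih => simp only [cocycleOver_succ, ih, smul_mul_smul_comm]

lemma continuous_cocycleOver [TopologicalSpace X] [TopologicalSpace M] [ContinuousMul M]
    (hT : Continuous T) (hA : Continuous A) (n : ℕ) : Continuous (cocycleOver T A n) := by
  induction n with
  | zero => exact continuous_const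
  | succ n ih => exact (ih.comp hT).mul hA

end Cocycle

/-- The iterates of a cocycle on `ℂ` over the translation by `b`. -/
abbrev cocycle {M : Type*} [Monoid M] (A : ℂ → M) (b : ℝ) : ℕ → ℂ → M :=
  cocycleOver (· + (b : ℂ)) A

lemma cocycle_succ {M : Type*} [Monoid M] (A : ℂ → M) (b : ℝ) (n : ℕ) (z : ℂ) :
    cocycle A b (n + 1) z = cocycle A b n (z + b) * A z := rfl

lemma cocycleIter_eq_cocycle (A : ℂ → Matrix (Fin 2) (Fin 2) ℂ) (b : ℝ) (n : ℕ) (x : ℝ) :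
    cocycleIter (fun x : ℝ => A x) b n x = cocycle A b n x := by
  induction n generalizing x with
  | zero => rfl
  | succ n ih => rw [cocycleIter, ih, ofReal_add, cocycle_succ]

section Monoid

variable {M : Type*} [Monoid M] {A : ℂ → M}

lemma cocycle_add (b : ℝ) (m n : ℕ) (z : ℂ) :
    cocycle A b (m + n) z = cocycle A b m (z + n * b) * cocycle A b n z := by
  rw [cocycle, cocycleOver_add, add_right_iterate, nsmul_eq_mul]

lemma cocycle_succ' (b : ℝ) (n : ℕ) (z : ℂ) :
    cocycle A b (n + 1) z = A (z + n * b) * cocycle A b n z := by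
  rw [add_comm, cocycle_add, cocycle, cocycleOver_one]

lemma cocycle_eq_prod {M : Type*} [CommMonoid M] {A : ℂ → M} (b : ℝ) (n : ℕ) (z : ℂ) :
    cocycle A b n z = ∏ j ∈ Finset.range n, A (z + j * b) := by
  simp_rw [cocycle, cocycleOver_eq_prod, add_right_iterate, nsmul_eq_mul]

lemma periodic_cocycle {c : ℂ} (hA : Function.Periodic A c) (b : ℝ) (n : ℕ) :
    Function.Periodic (cocycle A b n) c := fun z => by
  have hsemi : Function.Semiconj (· + c) (· + (b : ℂ)) (· + (b : ℂ)) := fun z =>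
    add_right_comm z b c
  rw [cocycle, ← cocycleOver_comp hsemi]
  exact congrArg (fun B => cocycleOver _ B n z) (funext hA)

lemma continuous_cocycle [TopologicalSpace M] [ContinuousMul M] (hA : Continuous A) (n : ℕ) :
    Continuous fun p : ℝ × ℂ => cocycle A p.1 n p.2 := by
  have hskew (p : ℝ × ℂ) : cocycle A p.1 n p.2 =
      cocycleOver (fun q : ℝ × ℂ => (q.1, q.2 + q.1)) (fun q => A q.2) n p :=
    cocycleOver_comp (A := fun q : ℝ × ℂ => A q.2) (φ := Prod.mk p.1) (fun _ => rfl) n p.2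
  simp_rw [hskew]
  exact continuous_cocycleOver (by fun_prop) (by fun_prop) n

end Monoid

lemma det_cocycle (A : ℂ → Matrix (Fin 2) (Fin 2) ℂ) (b : ℝ) (n : ℕ) (z : ℂ) :
    (cocycle A b n z).det = cocycle (fun z => (A z).det) b n z :=
  map_cocycleOver (Matrix.detMonoidHom (n := Fin 2) (R := ℂ)) n z

/-- The point `x + iε` of the horizontal line at height `ε`. -/
def linePt (x ε : ℝ) : ℂ := x + ε * I

lemma linePt_add (x ε b : ℝ) : linePt x ε + b = linePt (x + b) ε := by
  simp only [linePt]
  push_cast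
  ring

lemma linePt_add_nat_mul (x ε b : ℝ) (n : ℕ) : linePt x ε + n * b = linePt (x + n * b) ε := by
  rw [← linePt_add]
  push_cast
  rfl

lemma linePt_add_one (x ε : ℝ) : linePt (x + 1) ε = linePt x ε + 1 := by
  rw [← linePt_add, ofReal_one]

@[simp] lemma linePt_zero (x : ℝ) : linePt x 0 = x := by simp [linePt]

@[simp] lemma linePt_im (x ε : ℝ) : (linePt x ε).im = ε := by simp [linePt]

@[fun_prop] lemma continuous_linePt (ε : ℝ) : Continuous fun x : ℝ => linePt x ε := by
  unfold linePt
  fun_prop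

lemma eventually_forall_of_periodic {P : ℝ → ℝ → Prop} {β : ℝ}
    (hper : ∀ b, Function.Periodic (P b) 1)
    (hP : ∀ x, ∀ᶠ p : ℝ × ℝ in nhds (β, x), P p.1 p.2) :
    ∀ᶠ b in nhds β, ∀ x, P b x := by
  filter_upwards [(isCompact_Icc (a := (0 : ℝ)) (b := 1)).eventually_forall_of_forall_eventually
    (x₀ := β) (P := P) (fun x _ => hP x)] with b hb x
  obtain ⟨y, hy, hxy⟩ := (hper b).exists_mem_Ico₀ one_pos x
  exact hxy ▸ hb y (Set.Ico_subset_Icc_self hy)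

section Growth

variable {R : Type*} [NormedRing R] {A : ℂ → R} {β ε a : ℝ}

/-- On the line at height `ε` the exponential growth rate of `A` over the rotation by `β` is less
than `a`; since the sup norms of the iterates are submultiplicative, one time suffices. -/
def RateLT (A : ℂ → R) (β ε a : ℝ) : Prop :=
  ∃ n : ℕ, 0 < n ∧ ∀ x, ‖cocycle A β n (linePt x ε)‖ < Real.exp (a * n)

/-- On the line at height `ε` the iterates of `A` are `O(exp (a * l))`, uniformly over rotations
by frequencies near `β`. -/
def ExpBoundNear (A : ℂ → R) (β ε a : ℝ) : Prop :=
  ∃ K, 1 ≤ K ∧ ∀ᶠ b in nhds β, ∀ (l : ℕ) x,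
    ‖cocycle A b l (linePt x ε)‖ ≤ K * Real.exp (a * l)

lemma exists_norm_linePt_le (hA : Function.Periodic A 1) (hc : Continuous A) (ε : ℝ) :
    ∃ C, 1 ≤ C ∧ ∀ x, ‖A (linePt x ε)‖ ≤ C := by
  have hper : Function.Periodic (fun x => A (linePt x ε)) 1 := fun x =>
    (congrArg A (linePt_add_one x ε)).trans (hA _)
  obtain ⟨C, hC⟩ := (hper.isBounded_of_continuous one_ne_zero (by fun_prop)).exists_norm_le
  exact ⟨max C 1, le_max_right _ _, fun x => (hC _ ⟨x, rfl⟩).trans (le_max_left _ _)⟩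

lemma norm_cocycle_le_pow {C : ℝ} (hC0 : 0 ≤ C) (hC : ∀ x, ‖A (linePt x ε)‖ ≤ C) (b : ℝ) (n : ℕ)
    (x : ℝ) : ‖cocycle A b n (linePt x ε)‖ ≤ ‖(1 : R)‖ * C ^ n := by
  induction n generalizing x with
  | zero => simp
  | succ n ih =>
    rw [cocycle_succ, linePt_add]
    calc _ ≤ _ := norm_mul_le _ _
      _ ≤ (‖(1 : R)‖ * C ^ n) * C := by gcongr; exacts [ih _, hC x]
      _ = _ := by ring

lemma eventually_forall_norm_cocycle_lt (hA : Function.Periodic A 1) (hc : Continuous A) {n : ℕ}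
    {B : ℝ} (h : ∀ x, ‖cocycle A β n (linePt x ε)‖ < B) :
    ∀ᶠ b in nhds β, ∀ x, ‖cocycle A b n (linePt x ε)‖ < B := by
  refine eventually_forall_of_periodic (fun b x => ?_) fun x => ?_
  · rw [linePt_add_one, periodic_cocycle hA]
  · have hcont : Continuous fun p : ℝ × ℝ => ‖cocycle A p.1 n (linePt p.2 ε)‖ :=
      ((continuous_cocycle hc n).comp (f := fun p : ℝ × ℝ => (p.1, linePt p.2 ε))
        (by fun_prop)).norm
    exact hcont.continuousAt.eventually_lt continuousAt_const (h x)

lemma norm_cocycle_le_of_period {b K : ℝ} {n : ℕ} (hn : 0 < n)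
    (hb : ∀ x, ‖cocycle A b n (linePt x ε)‖ ≤ Real.exp (a * n))
    (hK : ∀ l < n, ∀ x, ‖cocycle A b l (linePt x ε)‖ ≤ K * Real.exp (a * l)) (l : ℕ) (x : ℝ) :
    ‖cocycle A b l (linePt x ε)‖ ≤ K * Real.exp (a * l) := by
  induction l using Nat.strong_induction_on generalizing x with
  | _ l ih =>
    rcases lt_or_ge l n with hl | hl
    · exact hK l hl x
    · obtain ⟨m, rfl⟩ := Nat.exists_eq_add_of_le' hl
      rw [cocycle_add, linePt_add_nat_mul]
      calc _ ≤ _ := norm_mul_le _ _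
        _ ≤ (K * Real.exp (a * m)) * Real.exp (a * n) := by
            have hm := ih m (by omega) (x + n * b)
            exact mul_le_mul hm (hb x) (norm_nonneg _) ((norm_nonneg _).trans hm)
        _ = _ := by rw [mul_assoc, ← Real.exp_add]; push_cast; ring_nf

lemma RateLT.expBoundNear (h : RateLT A β ε a) (hA : Function.Periodic A 1) (hc : Continuous A) :
    ExpBoundNear A β ε a := by
  obtain ⟨n, hn, h⟩ := h
  obtain ⟨C, hC1, hC⟩ := exists_norm_linePt_le hA hc ε
  refine ⟨max 1 (‖(1 : R)‖ * C ^ n * Real.exp (|a| * n)), le_max_left _ _, ?_⟩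
  filter_upwards [eventually_forall_norm_cocycle_lt hA hc h] with b hb
  refine norm_cocycle_le_of_period hn (fun x => (hb x).le) fun l hl x => ?_
  have hexp : 1 ≤ Real.exp (|a| * n) * Real.exp (a * l) := by
    rw [← Real.exp_add]
    apply Real.one_le_exp
    have hln : (l : ℝ) ≤ n := by exact_mod_cast hl.le
    nlinarith [neg_abs_le a, abs_nonneg a, (Nat.cast_nonneg l : (0 : ℝ) ≤ l)]
  calc _ ≤ ‖(1 : R)‖ * C ^ l := norm_cocycle_le_pow (by linarith) hC b l x
    _ ≤ ‖(1 : R)‖ * C ^ n * (Real.exp (|a| * n) * Real.exp (a * l)) := by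
        rw [← mul_one (_ * C ^ l)]
        gcongr
    _ = (‖(1 : R)‖ * C ^ n * Real.exp (|a| * n)) * Real.exp (a * l) := by ring
    _ ≤ _ := by gcongr; exact le_max_right _ _

end Growth

/-! ### Products along an irrational rotation -/

lemma prod_norm_mul_pow_sub {q : ℕ} (hq : 0 < q) {ζ : ℂ} (hζ : IsPrimitiveRoot ζ q) (x u : ℂ) :
    ∏ l ∈ Finset.range q, ‖x * ζ ^ l - u‖ = ‖x ^ q - u ^ q‖ := by
  have h := congrArg (Polynomial.eval u) (X_pow_sub_C_eq_prod hζ hq (rfl : x ^ q = x ^ q))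
  simp only [Polynomial.eval_sub, Polynomial.eval_pow, Polynomial.eval_X, Polynomial.eval_C,
    Polynomial.eval_prod] at h
  rw [norm_sub_rev, h, norm_prod]
  exact Finset.prod_congr rfl fun l _ => by rw [norm_sub_rev, mul_comm]

lemma norm_sub_le_norm_smul_sub {w u : ℂ} (hw : ‖w‖ = 1) (hu : ‖u‖ ≤ 1) {R : ℝ} (hR : 1 ≤ R) :
    ‖w - u‖ ≤ ‖(R : ℂ) * w - u‖ := by
  rw [← sq_le_sq₀ (norm_nonneg _) (norm_nonneg _), ← Complex.normSq_eq_norm_sq,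
    ← Complex.normSq_eq_norm_sq, Complex.normSq_sub, Complex.normSq_sub, map_mul,
    Complex.normSq_ofReal, Complex.normSq_eq_norm_sq w, hw, mul_assoc (R : ℂ),
    Complex.re_ofReal_mul]
  have : (w * (starRingEnd ℂ) u).re ≤ 1 := by
    refine (Complex.re_le_norm _).trans ?_
    rw [norm_mul, hw, RCLike.norm_conj, one_mul]
    exact hu
  nlinarith

lemma norm_sub_le_norm_smul_sub_mul_exp {h : ℝ} (hh : 0 < h) {w w' u : ℂ} (hw : ‖w‖ = 1)
    (hw' : ‖w'‖ = 1) (hu : ‖u‖ ≤ 1) :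
    ‖w - u‖ ≤ ‖((1 + h : ℝ) : ℂ) * w' - u‖ * Real.exp ((1 + h) * ‖w - w'‖ / h) := by
  set R := 1 + h
  have hR : ‖(R : ℂ)‖ = R := Complex.norm_of_nonneg (by positivity)
  have hfar : h ≤ ‖(R : ℂ) * w' - u‖ := by
    have := norm_sub_norm_le ((R : ℂ) * w') u
    rw [norm_mul, hw', hR] at this
    linarith
  calc ‖w - u‖ ≤ ‖(R : ℂ) * w - u‖ := norm_sub_le_norm_smul_sub hw hu (by linarith)
    _ = ‖((R : ℂ) * w' - u) + (R : ℂ) * (w - w')‖ := by ring_nf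
    _ ≤ ‖(R : ℂ) * w' - u‖ + h * (R * ‖w - w'‖ / h) := by
        rw [mul_div_cancel₀ _ hh.ne']
        exact (norm_add_le _ _).trans_eq (by rw [norm_mul (R : ℂ), hR])
    _ ≤ ‖(R : ℂ) * w' - u‖ + ‖(R : ℂ) * w' - u‖ * (R * ‖w - w'‖ / h) := by gcongr
    _ = ‖(R : ℂ) * w' - u‖ * (R * ‖w - w'‖ / h + 1) := by ring
    _ ≤ _ := by gcongr; exact Real.add_one_le_exp _

lemma norm_ee_mul_sub_ee_mul_le {b r : ℝ} {q : ℕ} (hb : |b - r| < 1 / (q : ℝ) ^ 2)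
    (l : ℕ) : ‖ee ((l * b : ℝ)) - ee ((l * r : ℝ))‖ ≤ 2 * π * (l / (q : ℝ) ^ 2) := by
  refine (norm_ee_sub_ee_le _ _).trans ?_
  rw [← mul_sub, abs_mul, Nat.abs_cast, ← mul_one_div (l : ℝ)]
  gcongr

/-- Pushing `w` out to radius `1 + h` keeps the factors away from zero, so that `b` may be replaced
by `r` at bounded cost, and the rational product over a period is `|x ^ q - u ^ q|`. -/
lemma prod_norm_rotation_sub_le {h : ℝ} (hh : 0 < h) {b : ℝ} {r : ℚ}
    (hb : |b - r| < 1 / (r.den : ℝ) ^ 2) {w u : ℂ} (hw : ‖w‖ = 1) (hu : ‖u‖ ≤ 1) :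
    ∏ l ∈ Finset.range r.den, ‖w * ee ((l * b : ℝ)) - u‖ ≤
      2 * (1 + h) ^ r.den * Real.exp (2 * π * (1 + h) / h) := by
  set q := r.den
  set R := 1 + h
  have hq : (0 : ℝ) < q := by exact_mod_cast r.pos
  have hR : ‖(R : ℂ) * w‖ = R := by
    rw [norm_mul, hw, mul_one, Complex.norm_of_nonneg (by positivity)]
  have hfactor : ∀ l ∈ Finset.range q, ‖w * ee ((l * b : ℝ)) - u‖ ≤
      ‖((R : ℂ) * w) * ee (r : ℝ) ^ l - u‖ * Real.exp (2 * π * R / (q * h)) := by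
    intro l hl
    have hlq : (l : ℝ) ≤ q := by exact_mod_cast (Finset.mem_range.mp hl).le
    have hdist : ‖w * ee ((l * b : ℝ)) - w * ee ((l * r : ℝ))‖ ≤ 2 * π / q := by
      rw [← mul_sub, norm_mul, hw, one_mul]
      calc _ ≤ 2 * π * (l / (q : ℝ) ^ 2) := norm_ee_mul_sub_ee_mul_le hb l
        _ ≤ 2 * π * (q / (q : ℝ) ^ 2) := by gcongr
        _ = 2 * π / q := by field_simp
    have hunit (x : ℝ) : ‖w * ee x‖ = 1 := by rw [norm_mul, hw, norm_ee_ofReal, one_mul]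
    rw [ee_ratCast_pow, mul_assoc]
    refine (norm_sub_le_norm_smul_sub_mul_exp hh (hunit _) (hunit (l * r)) hu).trans
      (mul_le_mul_of_nonneg_left (Real.exp_le_exp.mpr ?_) (norm_nonneg _))
    calc _ ≤ R * (2 * π / q) / h := by gcongr
      _ = 2 * π * R / (q * h) := by field_simp
  have hexp : (q : ℝ) * (2 * π * R / (q * h)) = 2 * π * R / h := by field_simp
  calc _ ≤ _ := Finset.prod_le_prod (fun _ _ => norm_nonneg _) hfactor
    _ = ‖((R : ℂ) * w) ^ q - u ^ q‖ * Real.exp (2 * π * R / h) := by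
        rw [Finset.prod_mul_distrib, prod_norm_mul_pow_sub r.pos (isPrimitiveRoot_ee r),
          Finset.prod_const, Finset.card_range, ← Real.exp_nat_mul, hexp]
    _ ≤ _ := by
        gcongr
        have hu' : ‖u‖ ^ q ≤ 1 := pow_le_one₀ (norm_nonneg _) hu
        have hR' : 1 ≤ R ^ q := one_le_pow₀ (by linarith)
        calc _ ≤ ‖((R : ℂ) * w) ^ q‖ + ‖u ^ q‖ := norm_sub_le _ _
          _ ≤ 2 * R ^ q := by rw [norm_pow, norm_pow, hR]; linarith

lemma norm_cocycle_ee_sub (b x : ℝ) (u : ℂ) (n : ℕ) :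
    ‖cocycle (fun z => ee z - u) b n (linePt x 0)‖ =
      ∏ l ∈ Finset.range n, ‖ee ((x + l * b : ℝ)) - u‖ := by
  simp_rw [cocycle_eq_prod, norm_prod, linePt_add_nat_mul, linePt_zero]

lemma rateLT_ee_sub {β : ℝ} (hβ : Irrational β) {κ : ℝ} (hκ : 0 < κ) {u : ℂ} (hu : ‖u‖ ≤ 1) :
    RateLT (fun z => ee z - u) β 0 κ := by
  set C := 2 * Real.exp (2 * π * (1 + κ / 2) / (κ / 2))
  have hlarge : ∀ᶠ q : ℕ in atTop, C + 1 ≤ Real.exp (κ / 2 * q) := by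
    simpa using eventually_mul_pow_le_exp (half_pos hκ) (C + 1) 0
  obtain ⟨Q, hQ⟩ := eventually_atTop.mp hlarge
  obtain ⟨r, -, hrQ, hr⟩ := exists_rat_mem_nhds_of_irrational hβ Q univ_mem
  refine ⟨r.den, r.pos, fun x => ?_⟩
  have hpow : (1 + κ / 2) ^ r.den ≤ Real.exp (κ / 2 * r.den) := by
    rw [mul_comm, Real.exp_nat_mul, add_comm]
    gcongr
    exact Real.add_one_le_exp _
  simp_rw [norm_cocycle_ee_sub, ofReal_add, ee_add]
  calc _ ≤ 2 * (1 + κ / 2) ^ r.den * Real.exp (2 * π * (1 + κ / 2) / (κ / 2)) :=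
        prod_norm_rotation_sub_le (half_pos hκ) hr (norm_ee_ofReal x) hu
    _ = C * (1 + κ / 2) ^ r.den := by ring
    _ ≤ C * Real.exp (κ / 2 * r.den) := by gcongr
    _ < Real.exp (κ / 2 * r.den) * Real.exp (κ / 2 * r.den) := by
        gcongr
        linarith [hQ r.den hrQ]
    _ = Real.exp (κ * r.den) := by rw [← Real.exp_add]; ring_nf

lemma expBoundNear_ee_sub {β : ℝ} (hβ : Irrational β) {κ : ℝ} (hκ : 0 < κ) {u : ℂ}
    (hu : ‖u‖ ≤ 1) : ExpBoundNear (fun z => ee z - u) β 0 κ :=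
  (rateLT_ee_sub hβ hκ hu).expBoundNear (fun z => congrArg (· - u) (periodic_ee z))
    (continuous_ee.sub continuous_const)

/-! ### Interpolation along an irrational rotation -/

lemma two_div_le_sin {k q : ℕ} (hk : 0 < k) (hkq : k < q) :
    2 / (q : ℝ) ≤ Real.sin (π * k / q) := by
  have hpi := Real.pi_pos
  have hk' : (1 : ℝ) ≤ k := by exact_mod_cast hk
  have hkq' : (k : ℝ) + 1 ≤ q := by exact_mod_cast hkq
  have hq : (0 : ℝ) < q := by linarith
  have of_le_half : ∀ t : ℝ, 1 ≤ t → 2 * t ≤ q → 2 / (q : ℝ) ≤ Real.sin (π * t / q) := by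
    intro t ht htq
    have h : π * t / q ≤ π / 2 := by
      rw [div_le_div_iff₀ hq two_pos]
      nlinarith
    calc 2 / (q : ℝ) ≤ 2 * t / q := by gcongr; linarith
      _ = 2 / π * (π * t / q) := by field_simp
      _ ≤ _ := Real.mul_le_sin (by positivity) h
  rcases le_total (2 * (k : ℝ)) q with h | h
  · exact of_le_half k hk' h
  · rw [← Real.sin_pi_sub, show π - π * k / q = π * (q - k) / q by field_simp]
    exact of_le_half _ (by linarith) (by linarith)

lemma four_div_le_norm_one_sub_pow {q : ℕ} {ζ : ℂ} (hζ : IsPrimitiveRoot ζ q) {l : ℕ}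
    (hl0 : 0 < l) (hlq : l < q) : 4 / (q : ℝ) ≤ ‖1 - ζ ^ l‖ := by
  have : NeZero q := ⟨by omega⟩
  obtain ⟨k, hk, hkl⟩ := (Complex.isPrimitiveRoot_exp q (by omega)).eq_pow_of_pow_eq_one
    (ξ := ζ ^ l) (by rw [pow_right_comm, hζ.pow_eq_one, one_pow])
  have hk0 : 0 < k := by
    rw [pos_iff_ne_zero]
    rintro rfl
    exact hζ.pow_ne_one_of_pos_of_lt hl0.ne' hlq (by rw [← hkl, pow_zero])
  have hexp : ζ ^ l = Complex.exp (I * (2 * (π * k / q) : ℝ)) := by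
    rw [← hkl, ← Complex.exp_nat_mul]
    push_cast
    ring_nf
  rw [hexp, norm_sub_rev, Complex.norm_exp_I_mul_ofReal_sub_one, mul_div_cancel_left₀ _ two_ne_zero,
    norm_mul, Real.norm_two]
  calc 4 / (q : ℝ) = 2 * (2 / q) := by ring
    _ ≤ _ := by gcongr; exact (two_div_le_sin hk0 hk).trans (Real.le_norm_self _)

lemma exp_neg_four_mul_le {τ : ℝ} (h0 : 0 ≤ τ) (h1 : τ ≤ 1 / 4) :
    Real.exp (-(4 * τ)) ≤ 1 - 2 * τ := by
  rw [Real.exp_neg]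
  refine (inv_anti₀ (by linarith) (Real.add_one_le_exp (4 * τ))).trans ?_
  rw [inv_le_iff_one_le_mul₀ (by linarith)]
  nlinarith

lemma norm_one_sub_ee_rat_mul_exp_le {β : ℝ} {r : ℚ} (hr : |β - r| < 1 / (r.den : ℝ) ^ 2)
    {l m : ℕ} (hl : 0 < l) (hm : 4 ≤ m) (hlm : m * l ≤ r.den) :
    ‖1 - ee ((l * r : ℝ))‖ * Real.exp (-(4 / m)) ≤ ‖1 - ee ((l * β : ℝ))‖ := by
  have : (0 : ℝ) < r.den := by exact_mod_cast r.pos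
  have hmR : (4 : ℝ) ≤ m := by exact_mod_cast hm
  have hlmR : (m : ℝ) * l ≤ r.den := by exact_mod_cast hlm
  have hlow : 4 / (r.den : ℝ) ≤ ‖1 - ee ((l * r : ℝ))‖ := by
    rw [← ee_ratCast_pow]
    exact four_div_le_norm_one_sub_pow (isPrimitiveRoot_ee r) hl (by nlinarith)
  have hdist : ‖ee ((l * β : ℝ)) - ee ((l * r : ℝ))‖ ≤ 2 / m * ‖1 - ee ((l * r : ℝ))‖ := by
    have hlq : l / (r.den : ℝ) ^ 2 ≤ 1 / (m * r.den) := by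
      rw [div_le_div_iff₀ (by positivity) (by positivity)]
      nlinarith
    calc _ ≤ 2 * π * (l / (r.den : ℝ) ^ 2) := norm_ee_mul_sub_ee_mul_le hr l
      _ ≤ 2 * 4 * (1 / (m * r.den)) := by gcongr; exact Real.pi_le_four
      _ = 2 / m * (4 / r.den) := by field_simp
      _ ≤ _ := by gcongr
  have htri : ‖1 - ee ((l * r : ℝ))‖ ≤
      ‖1 - ee ((l * β : ℝ))‖ + ‖ee ((l * β : ℝ)) - ee ((l * r : ℝ))‖ :=
    norm_sub_le_norm_sub_add_norm_sub _ _ _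
  have hexp : Real.exp (-(4 / m)) ≤ 1 - 2 / m := by
    have h := exp_neg_four_mul_le (τ := 1 / m) (by positivity)
      (one_div_le_one_div_of_le (by norm_num) hmR)
    rwa [mul_one_div, mul_one_div] at h
  calc _ ≤ ‖1 - ee ((l * r : ℝ))‖ * (1 - 2 / m) := by gcongr
    _ ≤ _ := by linarith

lemma prod_norm_one_sub_pow_mul_prod {L M : ℕ} {ζ : ℂ} (hζ : IsPrimitiveRoot ζ (L + M + 1)) :
    (∏ k ∈ Finset.range L, ‖1 - ζ ^ (k + 1)‖) * ∏ k ∈ Finset.range M, ‖1 - ζ ^ (L + k + 1)‖ =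
      L + M + 1 := by
  rw [← Finset.prod_range_add (fun k => ‖1 - ζ ^ (k + 1)‖), ← norm_prod,
    hζ.prod_one_sub_pow_eq_order]
  exact_mod_cast Complex.norm_natCast _

lemma inv_le_prod_norm_one_sub_ee_rat {K a : ℝ} {r : ℚ} (ha : 0 ≤ a)
    (hK : ∀ (n : ℕ) x, ‖cocycle (fun z => ee z - 1) r n (linePt x 0)‖ ≤ K * Real.exp (a * n))
    {L : ℕ} (hL : L < r.den) :
    (K * Real.exp (a * r.den))⁻¹ ≤
      ∏ l ∈ Finset.range L, ‖1 - ee (((l + 1 : ℕ) * r : ℝ))‖ := by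
  obtain ⟨M, hM⟩ := Nat.exists_eq_add_of_lt hL
  have hK0 : 1 ≤ K := by simpa using hK 0 0
  have hhigh : ∏ k ∈ Finset.range M, ‖1 - ee (r : ℝ) ^ (L + k + 1)‖ ≤
      K * Real.exp (a * r.den) := by
    calc _ = ‖cocycle (fun z => ee z - 1) r M (linePt ((L + 1) * r) 0)‖ := by
          rw [norm_cocycle_ee_sub]
          refine Finset.prod_congr rfl fun k _ => ?_
          rw [norm_sub_rev, ee_ratCast_pow]
          push_cast
          ring_nf
      _ ≤ K * Real.exp (a * M) := hK M _
      _ ≤ _ := by gcongr; omega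
  have hprod := prod_norm_one_sub_pow_mul_prod (hM ▸ isPrimitiveRoot_ee r)
  simp_rw [← ee_ratCast_pow]
  rw [inv_le_iff_one_le_mul₀ (by positivity)]
  calc (1 : ℝ) ≤ L + M + 1 := by linarith [L.cast_nonneg (α := ℝ), M.cast_nonneg (α := ℝ)]
    _ ≤ _ := by rw [← hprod]; gcongr

lemma prod_norm_one_sub_ee_rat_mul_exp_le {β : ℝ} {r : ℚ}
    (hr : |β - r| < 1 / (r.den : ℝ) ^ 2) {L m : ℕ} (hm : 4 ≤ m) (hLm : m * L ≤ r.den) :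
    (∏ l ∈ Finset.range L, ‖1 - ee (((l + 1 : ℕ) * r : ℝ))‖) * Real.exp (-(4 / m)) ^ L ≤
      ∏ l ∈ Finset.range L, ‖1 - ee (((l + 1 : ℕ) * β : ℝ))‖ := by
  calc _ = ∏ l ∈ Finset.range L, ‖1 - ee (((l + 1 : ℕ) * r : ℝ))‖ * Real.exp (-(4 / m)) := by
        rw [Finset.prod_mul_distrib, Finset.prod_const, Finset.card_range]
    _ ≤ _ := Finset.prod_le_prod (fun _ _ => by positivity) fun l hl =>
        norm_one_sub_ee_rat_mul_exp_le hr l.succ_pos hm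
          ((Nat.mul_le_mul_left m (Finset.mem_range.mp hl)).trans hLm)

lemma exists_exp_neg_le_prod_norm_one_sub_ee {β : ℝ} (hβ : Irrational β) {κ : ℝ} (hκ : 0 < κ)
    (N₀ : ℕ) :
    ∃ N : ℕ, N₀ ≤ N ∧ ∀ L < N,
      Real.exp (-(κ * N)) ≤ ∏ l ∈ Finset.range L, ‖1 - ee (((l + 1 : ℕ) * β : ℝ))‖ := by
  obtain ⟨m, hm⟩ := exists_nat_ge (max 4 (8 / κ))
  have hm4 : 4 ≤ m := by exact_mod_cast (le_max_left _ _).trans hm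
  have hmR : (0 : ℝ) < m := by exact_mod_cast (by omega : 0 < m)
  have hmκ : 4 / m ≤ κ / 2 := by
    rw [div_le_div_iff₀ hmR two_pos, ← div_le_iff₀' hκ]
    linarith [(le_max_right _ _).trans hm]
  obtain ⟨K, hK1, hK⟩ :=
    expBoundNear_ee_sub hβ (κ := κ / (4 * m)) (by positivity) (u := 1) (by simp)
  obtain ⟨N₁, hN₁⟩ := eventually_atTop.mp
    (eventually_mul_pow_le_exp (κ := κ / 4) (by positivity) (K * Real.exp (κ / 4)) 0)
  obtain ⟨r, hrK, hrQ, hr⟩ := exists_rat_mem_nhds_of_irrational hβ (m * max N₀ N₁) hK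
  set q := r.den
  set N := q / m
  have hmax : max N₀ N₁ ≤ N := (Nat.le_div_iff_mul_le (by omega)).mpr (by rwa [mul_comm])
  have hmN : m * N ≤ q := Nat.mul_div_le q m
  have hqN : (q : ℝ) ≤ m * (N + 1) := by exact_mod_cast (Nat.lt_mul_div_succ q (by omega)).le
  refine ⟨N, (le_max_left _ _).trans hmax, fun L hL => ?_⟩
  have hLN : (L : ℝ) ≤ N := by exact_mod_cast hL.le
  have hlow :=
    inv_le_prod_norm_one_sub_ee_rat (by positivity) hrK (hL.trans_le (Nat.div_le_self q m))
  have hKN : K * Real.exp (κ / (4 * m) * q) ≤ Real.exp (κ / 2 * N) := by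
    have h := hN₁ N ((le_max_right _ _).trans hmax)
    rw [pow_zero, mul_one] at h
    calc _ ≤ K * Real.exp (κ / (4 * m) * (m * (N + 1))) := by gcongr
      _ = K * Real.exp (κ / 4) * Real.exp (κ / 4 * N) := by
          rw [mul_assoc, ← Real.exp_add]
          field_simp
          ring_nf
      _ ≤ Real.exp (κ / 4 * N) * Real.exp (κ / 4 * N) := by gcongr
      _ = Real.exp (κ / 2 * N) := by rw [← Real.exp_add]; ring_nf
  calc Real.exp (-(κ * N)) = (Real.exp (κ / 2 * N))⁻¹ * Real.exp (-(N * (κ / 2))) := by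
        rw [← Real.exp_neg, ← Real.exp_add]
        ring_nf
    _ ≤ (K * Real.exp (κ / (4 * m) * q))⁻¹ * Real.exp (-(L * (4 / m))) := by gcongr
    _ ≤ (∏ l ∈ Finset.range L, ‖1 - ee (((l + 1 : ℕ) * r : ℝ))‖) *
          Real.exp (-(4 / m)) ^ L := by
        rw [← Real.exp_nat_mul, mul_neg]
        gcongr
    _ ≤ _ := prod_norm_one_sub_ee_rat_mul_exp_le hr hm4
        ((Nat.mul_le_mul_left m hL.le).trans hmN)

lemma norm_eval_le_of_interpolation {F ι : Type*} [NormedField F] [DecidableEq ι] {s : Finset ι}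
    {v : ι → F} {w : F} {a δ η : ℝ} (hδ : 0 < δ) (hη0 : 0 ≤ η)
    (hsep : ∀ i ∈ s, δ ≤ ∏ j ∈ s.erase i, ‖v i - v j‖)
    (hw : ∀ i ∈ s, ∏ j ∈ s.erase i, ‖w - v j‖ ≤ a)
    {p : Polynomial F} (hp : p.degree < s.card) (hη : ∀ i ∈ s, ‖p.eval (v i)‖ ≤ η) :
    ‖p.eval w‖ ≤ s.card * (η * (a / δ)) := by
  have hinj : Set.InjOn v s := by
    intro i hi j hj hij
    by_contra hne
    have hzero : ∏ k ∈ s.erase i, ‖v i - v k‖ = 0 :=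
      Finset.prod_eq_zero (Finset.mem_erase.mpr ⟨Ne.symm hne, hj⟩)
        (by rw [hij, sub_self, norm_zero])
    exact (hδ.trans_le (hsep i hi)).ne' hzero
  rw [Lagrange.eq_interpolate hinj hp, Lagrange.interpolate_apply, Polynomial.eval_finsetSum,
    ← nsmul_eq_mul]
  refine (norm_sum_le _ _).trans (Finset.sum_le_card_nsmul _ _ _ fun i hi => ?_)
  rw [Polynomial.eval_mul, Polynomial.eval_C, norm_mul]
  have hbasis : ‖(Lagrange.basis s v i).eval w‖ ≤ a / δ := by
    have hdiv (j : ι) : ‖(Lagrange.basisDivisor (v i) (v j)).eval w‖ =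
        ‖w - v j‖ / ‖v i - v j‖ := by simp [Lagrange.basisDivisor, div_eq_inv_mul]
    simp_rw [Lagrange.basis, Polynomial.eval_prod, norm_prod, hdiv, Finset.prod_div_distrib]
    have ha : 0 ≤ a := (Finset.prod_nonneg fun _ _ => norm_nonneg _).trans (hw i hi)
    exact div_le_div₀ ha (hw i hi) hδ (hsep i hi)
  exact mul_le_mul (hη i hi) hbasis (norm_nonneg _) hη0

lemma prod_range_erase {α : Type*} [CommMonoid α] (f : ℕ → α) (i M : ℕ) :
    ∏ j ∈ (Finset.range (i + 1 + M)).erase i, f j =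
      (∏ j ∈ Finset.range i, f j) * ∏ j ∈ Finset.range M, f (i + 1 + j) := by
  have h : (Finset.range (i + 1 + M)).erase i =
      Finset.range i ∪ (Finset.range M).map (addLeftEmbedding (i + 1)) := by
    ext j
    simp only [Finset.mem_erase, Finset.mem_range, Finset.mem_union, Finset.mem_map,
      addLeftEmbedding_apply]
    refine ⟨fun ⟨hj, _⟩ => ?_, by rintro (hj | ⟨k, hk, rfl⟩) <;> omega⟩
    rcases lt_or_gt_of_ne hj with hji | hij
    · exact .inl hji
    · exact .inr ⟨j - (i + 1), by omega, by omega⟩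
  rw [h, Finset.prod_union, Finset.prod_map]
  · rfl
  · simp only [Finset.disjoint_left, Finset.mem_range, Finset.mem_map, addLeftEmbedding_apply]
    rintro j hj ⟨k, -, rfl⟩
    omega

lemma le_prod_norm_orbit_sub_orbit {β δ : ℝ} (hδ : 0 ≤ δ) {N : ℕ}
    (h : ∀ L < N, δ ≤ ∏ l ∈ Finset.range L, ‖1 - ee (((l + 1 : ℕ) * β : ℝ))‖) (y : ℝ) {i : ℕ}
    (hi : i < N) :
    δ ^ 2 ≤ ∏ j ∈ (Finset.range N).erase i, ‖ee ((y + i * β : ℝ)) - ee ((y + j * β : ℝ))‖ := by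
  obtain ⟨M, rfl⟩ := Nat.exists_eq_add_of_le hi
  have hpast : ∏ j ∈ Finset.range i, ‖ee ((y + i * β : ℝ)) - ee ((y + j * β : ℝ))‖ =
      ∏ l ∈ Finset.range i, ‖1 - ee (((l + 1 : ℕ) * β : ℝ))‖ := by
    rw [← Finset.prod_range_reflect]
    refine Finset.prod_congr rfl fun j hj => ?_
    have hj' := Finset.mem_range.mp hj
    rw [norm_ee_sub_ee, Nat.sub_sub, Nat.cast_sub (by omega)]
    push_cast
    ring_nf
  have hfuture : ∏ j ∈ Finset.range M,
      ‖ee ((y + i * β : ℝ)) - ee ((y + (i + 1 + j : ℕ) * β : ℝ))‖ =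
      ∏ l ∈ Finset.range M, ‖1 - ee (((l + 1 : ℕ) * β : ℝ))‖ := by
    refine Finset.prod_congr rfl fun j _ => ?_
    rw [norm_sub_rev, norm_ee_sub_ee]
    push_cast
    ring_nf
  rw [prod_range_erase (fun j => ‖ee ((y + i * β : ℝ)) - ee ((y + j * β : ℝ))‖), hpast, hfuture, sq]
  exact mul_le_mul (h i (by omega)) (h M (by omega)) hδ (hδ.trans (h i (by omega)))

lemma prod_norm_sub_orbit_le {β K a : ℝ} (ha : 0 ≤ a)
    (hK : ∀ (n : ℕ) x, ‖cocycle (fun z => ee z - 1) β n (linePt x 0)‖ ≤ K * Real.exp (a * n))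
    (y y' : ℝ) {i N : ℕ} (hi : i < N) :
    ∏ j ∈ (Finset.range N).erase i, ‖ee y' - ee ((y + j * β : ℝ))‖ ≤
      (K * Real.exp (a * N)) ^ 2 := by
  obtain ⟨M, rfl⟩ := Nat.exists_eq_add_of_le hi
  have hK0 : 1 ≤ K := by simpa using hK 0 0
  have hsegment (x : ℝ) {n : ℕ} (hn : n ≤ i + 1 + M) :
      ∏ j ∈ Finset.range n, ‖ee y' - ee ((x + j * β : ℝ))‖ ≤
        K * Real.exp (a * (i + 1 + M : ℕ)) := by
    calc _ = ‖cocycle (fun z => ee z - 1) β n (linePt (x - y') 0)‖ := by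
          rw [norm_cocycle_ee_sub]
          refine Finset.prod_congr rfl fun j _ => ?_
          rw [norm_sub_rev, norm_ee_sub_ee, norm_sub_rev]
          ring_nf
      _ ≤ K * Real.exp (a * n) := hK n _
      _ ≤ _ := by gcongr
  have hshift (j : ℕ) : y + (i + 1 + j : ℕ) * β = y + (i + 1) * β + j * β := by push_cast; ring
  rw [prod_range_erase (fun j => ‖ee y' - ee ((y + j * β : ℝ))‖), sq]
  simp_rw [hshift]
  gcongr
  exacts [hsegment y (by omega), hsegment _ (by omega)]

lemma exists_norm_eval_ee_le_of_orbit {β : ℝ} (hβ : Irrational β) {κ : ℝ} (hκ : 0 < κ) (N₀ : ℕ) :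
    ∃ N : ℕ, N₀ ≤ N ∧ ∀ p : Polynomial ℂ, p.degree < N → ∀ y η : ℝ,
      (∀ j < N, ‖p.eval (ee ((y + j * β : ℝ)))‖ ≤ η) →
      ∀ y' : ℝ, ‖p.eval (ee y')‖ ≤ η * Real.exp (κ * N) := by
  obtain ⟨K, -, hK⟩ := expBoundNear_ee_sub hβ (κ := κ / 8) (by positivity) (u := 1) (by simp)
  obtain ⟨N₁, hN₁⟩ := eventually_atTop.mp
    (eventually_mul_pow_le_exp (κ := κ / 2) (by positivity) (K ^ 2) 1)
  obtain ⟨N, hN, hsep⟩ :=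
    exists_exp_neg_le_prod_norm_one_sub_ee hβ (κ := κ / 8) (by positivity) (max N₀ (max N₁ 1))
  simp only [max_le_iff] at hN
  refine ⟨N, hN.1, fun p hp y η hη y' => ?_⟩
  have hη0 : 0 ≤ η := (norm_nonneg _).trans (hη 0 hN.2.2)
  have h := norm_eval_le_of_interpolation (s := Finset.range N)
    (v := fun j : ℕ => ee ((y + j * β : ℝ))) (by positivity) hη0
    (fun i hi => le_prod_norm_orbit_sub_orbit (Real.exp_pos _).le hsep y (Finset.mem_range.mp hi))
    (fun i hi => prod_norm_sub_orbit_le (by positivity) hK.self_of_nhds y y'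
      (Finset.mem_range.mp hi)) (by rwa [Finset.card_range])
    fun j hj => hη j (Finset.mem_range.mp hj)
  calc _ ≤ _ := h
    _ = η * (K ^ 2 * N * Real.exp (κ / 2 * N)) := by
        rw [Finset.card_range, div_eq_mul_inv, ← inv_pow, ← Real.exp_neg, neg_neg, mul_pow,
          mul_assoc, ← mul_pow, ← Real.exp_add, ← Real.exp_nat_mul]
        ring_nf
    _ ≤ η * (Real.exp (κ / 2 * N) * Real.exp (κ / 2 * N)) := by
        have := hN₁ N hN.2.1
        gcongr
        nlinarith [sq_nonneg K]
    _ = η * Real.exp (κ * N) := by rw [← Real.exp_add]; ring_nf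

/-- On every circle around `0`, polynomials of degree less than `N` are controlled, up to a factor
`exp (κ * N)`, by their values along `N` consecutive points of any orbit of the rotation by `β`. -/
def OrbitControls (β κ : ℝ) (N : ℕ) : Prop :=
  ∀ p : Polynomial ℂ, p.degree < N → ∀ (r : ℂ) (y η : ℝ),
    (∀ j < N, ‖p.eval (r * ee ((y + j * β : ℝ)))‖ ≤ η) →
    ∀ y' : ℝ, ‖p.eval (r * ee y')‖ ≤ η * Real.exp (κ * N)

lemma exists_orbitControls {β : ℝ} (hβ : Irrational β) {κ : ℝ} (hκ : 0 < κ) (N₀ : ℕ) :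
    ∃ N ≥ N₀, OrbitControls β κ N := by
  obtain ⟨N, hN, h⟩ := exists_norm_eval_ee_le_of_orbit hβ hκ N₀
  refine ⟨N, hN, fun p hp r y η hη y' => ?_⟩
  have heval (w : ℂ) : (p.comp (Polynomial.C r * Polynomial.X)).eval w = p.eval (r * w) := by simp
  have hdeg : (p.comp (Polynomial.C r * Polynomial.X)).degree < N := by
    rw [Polynomial.degree_lt_iff_coeff_zero] at hp ⊢
    intro i hi
    rw [Polynomial.comp_C_mul_X_coeff, hp i hi, zero_mul]
  simp_rw [← heval] at hη ⊢
  exact h _ hdeg y η hη y'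

/-! ### Laurent polynomials in `ee` -/

lemma ee_linePt (x ε : ℝ) : ee (linePt x ε) = (Real.exp (-2 * π * ε) : ℝ) * ee x := by
  rw [linePt, ee_add, mul_comm]
  congr 1
  rw [ee, Complex.ofReal_exp]
  congr 1
  push_cast
  linear_combination (2 * π * ε) * Complex.I_mul_I

lemma norm_ee_mul_linePt (t x ε : ℝ) :
    ‖ee ((t : ℂ) * linePt x ε)‖ = Real.exp (-2 * π * ε * t) := by
  rw [norm_ee, Complex.im_ofReal_mul, linePt_im]
  ring_nf

lemma norm_coeff_le_of_forall_norm_eval_ee_le (p : Polynomial ℂ) {B : ℝ}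
    (hB : ∀ x : ℝ, ‖p.eval (ee x)‖ ≤ B) (i : ℕ) : ‖p.coeff i‖ ≤ B := by
  have hB0 : 0 ≤ B := (norm_nonneg _).trans (hB 0)
  refine abs_le_of_sq_le_sq' ?_ hB0 |>.2
  have hparseval : ∑ i ∈ p.support, ‖p.coeff i‖ ^ 2 ≤ B ^ 2 := by
    rw [p.sum_sq_norm_coeff_eq_circleAverage]
    refine Real.circleAverage_mono_on_of_le_circle
      (ContinuousOn.circleIntegrable zero_le_one (by fun_prop)) fun w hw => ?_
    obtain ⟨x, rfl⟩ := exists_ee_eq (w := w) (by simpa using hw)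
    gcongr
    exact hB x
  by_cases hi : i ∈ p.support
  · exact (Finset.single_le_sum (f := fun i => ‖p.coeff i‖ ^ 2) (fun _ _ => by positivity) hi).trans
      hparseval
  · rw [Polynomial.notMem_support_iff.mp hi, norm_zero, zero_pow two_ne_zero]
    positivity

lemma norm_coeff_mul_pow_le (p : Polynomial ℂ) {r B : ℝ} (hr : 0 ≤ r)
    (hB : ∀ x : ℝ, ‖p.eval (r * ee x)‖ ≤ B) (i : ℕ) : ‖p.coeff i‖ * r ^ i ≤ B := by
  have h := norm_coeff_le_of_forall_norm_eval_ee_le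
    (p.comp (Polynomial.C (r : ℂ) * Polynomial.X)) (B := B) (fun x => by simpa using hB x) i
  rwa [Polynomial.comp_C_mul_X_coeff, norm_mul, norm_pow, Complex.norm_real,
    Real.norm_of_nonneg hr] at h

/-- `P` represents `F` as a Laurent polynomial of degree at most `n` in `ee`: the coefficient of
`ee z ^ k` for `-n ≤ k ≤ n` is `P.coeff (k + n)`. -/
structure LaurentRep (n : ℕ) (P : Polynomial ℂ) (F : ℂ → ℂ) : Prop where
  natDegree_le : P.natDegree ≤ 2 * n
  eq_eval : ∀ z, F z = ee (-(n * z)) * P.eval (ee z)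

/-- `F` is a Laurent polynomial of degree at most `n` in `ee`. -/
def IsLaurent (n : ℕ) (F : ℂ → ℂ) : Prop := ∃ P, LaurentRep n P F

section Laurent

variable {n m : ℕ} {F G : ℂ → ℂ} {P : Polynomial ℂ} {x ε B : ℝ}

lemma IsLaurent.periodic (hF : IsLaurent n F) : Function.Periodic F 1 := fun z => by
  obtain ⟨P, hP⟩ := hF
  have hn : ee (-(n * 1)) = 1 := by
    rw [ee_neg, ee_nat_mul, periodic_ee.eq, ee_zero, one_pow, inv_one]
  rw [hP.eq_eval, hP.eq_eval, mul_add, neg_add, ee_add, hn, mul_one, periodic_ee]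

lemma IsLaurent.continuous (hF : IsLaurent n F) : Continuous F := by
  obtain ⟨P, hP⟩ := hF
  rw [funext hP.eq_eval]
  exact (continuous_ee.comp (by fun_prop)).mul (P.continuous.comp continuous_ee)

lemma IsLaurent.add (hF : IsLaurent n F) (hG : IsLaurent n G) :
    IsLaurent n (fun z => F z + G z) := by
  obtain ⟨P, hP⟩ := hF
  obtain ⟨Q, hQ⟩ := hG
  refine ⟨P + Q, (Polynomial.natDegree_add_le _ _).trans (max_le hP.1 hQ.1), fun z => ?_⟩
  rw [hP.eq_eval, hQ.eq_eval, Polynomial.eval_add, mul_add]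

lemma IsLaurent.mul (hF : IsLaurent n F) (hG : IsLaurent m G) :
    IsLaurent (n + m) (fun z => F z * G z) := by
  obtain ⟨P, hP⟩ := hF
  obtain ⟨Q, hQ⟩ := hG
  refine ⟨P * Q, Polynomial.natDegree_mul_le.trans (by linarith [hP.1, hQ.1]), fun z => ?_⟩
  have hexp : -(((n + m : ℕ) : ℂ) * z) = -(n * z) + -(m * z) := by push_cast; ring
  rw [hP.eq_eval, hQ.eq_eval, Polynomial.eval_mul, hexp, ee_add]
  ring

lemma isLaurent_const (n : ℕ) (a : ℂ) : IsLaurent n (fun _ => a) := by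
  refine ⟨Polynomial.C a * Polynomial.X ^ n,
    (Polynomial.natDegree_C_mul_X_pow_le a n).trans (by omega), fun z => ?_⟩
  rw [Polynomial.eval_mul, Polynomial.eval_C, Polynomial.eval_pow, Polynomial.eval_X,
    ← ee_nat_mul, mul_left_comm, ← ee_add, neg_add_cancel, ee_zero, mul_one]

lemma IsLaurent.const_mul (hF : IsLaurent n F) (a : ℂ) : IsLaurent n (fun z => a * F z) := by
  simpa using (isLaurent_const 0 a).mul hF

lemma isLaurent_ee : IsLaurent 1 ee := by
  refine ⟨Polynomial.X ^ 2, by simp, fun z => ?_⟩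
  rw [Polynomial.eval_pow, Polynomial.eval_X, ← ee_nat_mul, ← ee_add]
  push_cast
  ring_nf

lemma isLaurent_ee_neg : IsLaurent 1 (fun z => ee (-z)) :=
  ⟨1, by simp, fun z => by simp⟩

lemma IsLaurent.comp_add (hF : IsLaurent n F) (a : ℂ) : IsLaurent n (fun z => F (z + a)) := by
  obtain ⟨P, hP⟩ := hF
  refine ⟨Polynomial.C (ee (-(n * a))) * P.comp (Polynomial.C (ee a) * Polynomial.X), ?_,
    fun z => ?_⟩
  · calc _ ≤ P.natDegree * (Polynomial.C (ee a) * Polynomial.X).natDegree :=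
          (Polynomial.natDegree_C_mul_le _ _).trans Polynomial.natDegree_comp_le
      _ ≤ P.natDegree * 1 := by gcongr; simpa using Polynomial.natDegree_C_mul_X_pow_le (ee a) 1
      _ ≤ 2 * n := by rw [mul_one]; exact hP.natDegree_le
  · have hexp : -((n : ℂ) * (z + a)) = -(n * z) + -(n * a) := by ring
    simp only [hP.eq_eval, hexp, ee_add, Polynomial.eval_mul, Polynomial.eval_C,
      Polynomial.eval_comp, Polynomial.eval_X]
    ring_nf

lemma LaurentRep.norm_eval_eq (h : LaurentRep n P F) (x ε : ℝ) :
    ‖P.eval ((Real.exp (-2 * π * ε) : ℝ) * ee x)‖ =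
      Real.exp (-2 * π * ε * n) * ‖F (linePt x ε)‖ := by
  have hone : ee (n * linePt x ε) * ee (-(n * linePt x ε)) = 1 := by
    rw [← ee_add, add_neg_cancel, ee_zero]
  have hn := norm_ee_mul_linePt n x ε
  rw [ofReal_natCast] at hn
  rw [h.eq_eval, ← ee_linePt, ← hn, ← norm_mul, ← mul_assoc, hone, one_mul]

lemma LaurentRep.norm_coeff_mul_le (h : LaurentRep n P F) (hB : ∀ x, ‖F (linePt x ε)‖ ≤ B)
    (i : ℕ) : ‖P.coeff i‖ * Real.exp (-2 * π * ε * (i - n)) ≤ B := by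
  have hi := norm_coeff_mul_pow_le P (r := Real.exp (-2 * π * ε))
    (B := Real.exp (-2 * π * ε * n) * B) (Real.exp_pos _).le
    (fun x => by rw [h.norm_eval_eq]; gcongr; exact hB x) i
  rw [← Real.exp_nat_mul, mul_comm (i : ℝ), mul_comm _ B] at hi
  rwa [mul_sub, Real.exp_sub, ← mul_div_assoc, div_le_iff₀ (Real.exp_pos _)]

lemma LaurentRep.eq_sum (h : LaurentRep n P F) (z : ℂ) :
    F z = ∑ i ∈ Finset.range (2 * n + 1), P.coeff i * ee ((i - n : ℝ) * z) := by
  rw [h.eq_eval, Polynomial.eval_eq_sum_range' (Nat.lt_succ_of_le h.natDegree_le), Finset.mul_sum]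
  refine Finset.sum_congr rfl fun i _ => ?_
  rw [← ee_nat_mul, mul_left_comm, ← ee_add]
  push_cast
  ring_nf

lemma LaurentRep.norm_le_sum (h : LaurentRep n P F) (x ε : ℝ) :
    ‖F (linePt x ε)‖ ≤
      ∑ i ∈ Finset.range (2 * n + 1), ‖P.coeff i‖ * Real.exp (-2 * π * ε * (i - n)) := by
  rw [h.eq_sum]
  refine norm_sum_le_of_le _ fun i _ => ?_
  rw [norm_mul, norm_ee_mul_linePt]

lemma LaurentRep.norm_le (h : LaurentRep n P F)
    (hB : ∀ i ≤ 2 * n, ‖P.coeff i‖ * Real.exp (-2 * π * ε * (i - n)) ≤ B) (x : ℝ) :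
    ‖F (linePt x ε)‖ ≤ (2 * n + 1) * B := by
  refine (h.norm_le_sum x ε).trans ((Finset.sum_le_card_nsmul _ _ B fun i hi => ?_).trans_eq ?_)
  · exact hB i (Nat.lt_succ_iff.mp (Finset.mem_range.mp hi))
  · rw [Finset.card_range, nsmul_eq_mul]
    push_cast
    rfl

lemma IsLaurent.norm_le_of_line (h : IsLaurent n F) (hB : ∀ x, ‖F (linePt x ε)‖ ≤ B)
    (x ε' : ℝ) : ‖F (linePt x ε')‖ ≤ (2 * n + 1) * (B * Real.exp (2 * π * n * |ε - ε'|)) := by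
  obtain ⟨P, hP⟩ := h
  refine hP.norm_le (fun i hi => ?_) x
  have hi' : (i : ℝ) ≤ 2 * n := by exact_mod_cast hi
  have habs : |(i : ℝ) - n| ≤ n := abs_le.mpr ⟨by linarith [(Nat.cast_nonneg i : (0 : ℝ) ≤ i)],
    by linarith⟩
  have hshift : ((i : ℝ) - n) * (ε - ε') ≤ n * |ε - ε'| :=
    (le_abs_self _).trans (by rw [abs_mul]; gcongr)
  have hB0 : 0 ≤ B := (norm_nonneg _).trans (hB 0)
  calc _ = ‖P.coeff i‖ * Real.exp (-2 * π * ε * (i - n)) *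
        Real.exp (2 * π * ((i - n) * (ε - ε'))) := by
        rw [mul_assoc ‖_‖, ← Real.exp_add]
        ring_nf
    _ ≤ B * Real.exp (2 * π * (n * |ε - ε'|)) := by
        gcongr
        exact hP.norm_coeff_mul_le hB i
    _ = _ := by rw [mul_assoc (2 * π)]

lemma IsLaurent.norm_le_of_two_lines (h : IsLaurent n F) (hε : 0 ≤ ε)
    (hp : ∀ x, ‖F (linePt x ε)‖ ≤ B) (hm : ∀ x, ‖F (linePt x (-ε))‖ ≤ B) (x : ℝ) :
    ‖F (linePt x 0)‖ ≤ (2 * n + 1) * B := by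
  obtain ⟨P, hP⟩ := h
  refine hP.norm_le (fun i _ => ?_) x
  rw [mul_zero, zero_mul, Real.exp_zero, mul_one]
  rcases le_total (n : ℝ) i with hi | hi
  · have hexp : 0 ≤ π * ε * (i - n) := mul_nonneg (by positivity) (by linarith)
    exact (le_mul_of_one_le_right (norm_nonneg _) (Real.one_le_exp (by linarith))).trans
      (hP.norm_coeff_mul_le hm i)
  · have hexp : 0 ≤ π * ε * (n - i) := mul_nonneg (by positivity) (by linarith)
    exact (le_mul_of_one_le_right (norm_nonneg _) (Real.one_le_exp (by linarith))).trans
      (hP.norm_coeff_mul_le hp i)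

end Laurent

/-! ### Matrix cocycles -/

lemma periodic_of_isLaurent {m n : Type*} {k : ℕ} {A : ℂ → Matrix m n ℂ}
    (hA : ∀ i j, IsLaurent k (fun z => A z i j)) : Function.Periodic A 1 := fun z =>
  Matrix.ext fun i j => (hA i j).periodic z

lemma continuous_of_isLaurent {m n : Type*} {k : ℕ} {A : ℂ → Matrix m n ℂ}
    (hA : ∀ i j, IsLaurent k (fun z => A z i j)) : Continuous A :=
  continuous_matrix fun i j => (hA i j).continuous

section Matrix

variable {m n α : Type*} [Fintype m] [Fintype n] [SeminormedAddCommGroup α]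

lemma norm_entry_le (M : Matrix m n α) (i : m) (j : n) : ‖M i j‖ ≤ ‖M‖ :=
  (PiLp.norm_apply_le (WithLp.toLp 2 (M i)) j).trans
    (PiLp.norm_apply_le (WithLp.toLp 2 fun i => WithLp.toLp 2 (M i)) i)

lemma norm_sq_eq_sum_norm_entry_sq (M : Matrix m n α) : ‖M‖ ^ 2 = ∑ i, ∑ j, ‖M i j‖ ^ 2 := by
  rw [Matrix.frobenius_norm_def, ← Real.sqrt_eq_rpow]
  simp_rw [Real.rpow_two]
  exact Real.sq_sqrt (by positivity)

lemma norm_le_card_mul {M : Matrix n n α} {B : ℝ} (hB0 : 0 ≤ B) (hB : ∀ i j, ‖M i j‖ ≤ B) :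
    ‖M‖ ≤ Fintype.card n * B := by
  refine abs_le_of_sq_le_sq' ?_ (by positivity) |>.2
  calc ‖M‖ ^ 2 = ∑ i, ∑ j, ‖M i j‖ ^ 2 := norm_sq_eq_sum_norm_entry_sq M
    _ ≤ ∑ _i : n, ∑ _j : n, B ^ 2 := by gcongr; exact hB _ _
    _ = (Fintype.card n * B) ^ 2 := by simp; ring

lemma IsLaurent.sum {ι : Type*} {d : ℕ} {F : ι → ℂ → ℂ} (s : Finset ι)
    (hF : ∀ i ∈ s, IsLaurent d (F i)) : IsLaurent d (fun z => ∑ i ∈ s, F i z) := by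
  classical
  induction s using Finset.induction_on with
  | empty => simpa using isLaurent_const d 0
  | insert i s hi ih =>
    simp_rw [Finset.sum_insert hi]
    exact (hF i (Finset.mem_insert_self i s)).add
      (ih fun j hj => hF j (Finset.mem_insert_of_mem hj))

lemma isLaurent_cocycle [DecidableEq n] {A : ℂ → Matrix n n ℂ}
    (hA : ∀ i j, IsLaurent 1 (fun z => A z i j)) (b : ℝ) (k : ℕ) (i j : n) :
    IsLaurent k (fun z => cocycle A b k z i j) := by
  induction k generalizing i j with
  | zero => exact isLaurent_const 0 _
  | succ k ih =>
    simp_rw [cocycle_succ, Matrix.mul_apply]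
    exact IsLaurent.sum _ fun l _ => ((ih i l).comp_add b).mul (hA l j)

lemma isLaurent_det {d : ℕ} {A : ℂ → Matrix (Fin 2) (Fin 2) ℂ}
    (hA : ∀ i j, IsLaurent d (fun z => A z i j)) : IsLaurent (d + d) (fun z => (A z).det) := by
  simp_rw [Matrix.det_fin_two, sub_eq_add_neg, ← neg_one_mul (A _ 0 1 * _)]
  exact ((hA 0 0).mul (hA 1 1)).add (((hA 0 1).mul (hA 1 0)).const_mul (-1))

end Matrix

section Reflection

lemma cocycle_neg {M : Type*} [Monoid M] {A : ℂ → M} {σ : M → M} (hσ1 : σ 1 = 1)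
    (hσ : ∀ g h, σ (g * h) = σ h * σ g) (hA : ∀ z, A (-z) = σ (A z)) (b : ℝ) (n : ℕ) (z : ℂ) :
    cocycle A b n (b - (z + n * b)) = σ (cocycle A b n z) := by
  induction n with
  | zero => exact hσ1.symm
  | succ n ih =>
    have hz : (b : ℂ) - (z + (n + 1 : ℕ) * b) = -(z + n * b) := by push_cast; ring
    rw [hz, cocycle_succ, cocycle_succ', hσ, ← hA, ← ih, neg_add_eq_sub]

lemma RateLT.neg {R : Type*} [NormedRing R] {A : ℂ → R} {σ : R → R} (hσ1 : σ 1 = 1)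
    (hσ : ∀ g h, σ (g * h) = σ h * σ g) (hnorm : ∀ g, ‖σ g‖ = ‖g‖) (hA : ∀ z, A (-z) = σ (A z))
    {β ε a : ℝ} (h : RateLT A β ε a) : RateLT A β (-ε) a := by
  obtain ⟨n, hn, h⟩ := h
  refine ⟨n, hn, fun x => ?_⟩
  have hpt : linePt x (-ε) = β - (linePt (β - x - n * β) ε + n * β) := by
    simp only [linePt]
    push_cast
    ring
  rw [hpt, cocycle_neg hσ1 hσ hA, hnorm]
  exact h _

end Reflection

/-! ### The coefficients and the transfer matrix of extended Harper's model -/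

section Growth

lemma ExpBoundNear.mul {R : Type*} [NormedCommRing R] {f g : ℂ → R} {β ε a a' : ℝ}
    (hf : ExpBoundNear f β ε a) (hg : ExpBoundNear g β ε a') :
    ExpBoundNear (fun z => f z * g z) β ε (a + a') := by
  obtain ⟨K, hK1, hK⟩ := hf
  obtain ⟨K', hK'1, hK'⟩ := hg
  refine ⟨K * K', one_le_mul_of_one_le_of_one_le hK1 hK'1, ?_⟩
  filter_upwards [hK, hK'] with b hb hb' l x
  have hmul : cocycle (fun z => f z * g z) b l (linePt x ε) =
      cocycle f b l (linePt x ε) * cocycle g b l (linePt x ε) := by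
    simp only [cocycle_eq_prod, Finset.prod_mul_distrib]
  calc _ ≤ ‖cocycle f b l (linePt x ε)‖ * ‖cocycle g b l (linePt x ε)‖ := by
        rw [hmul]
        exact norm_mul_le _ _
    _ ≤ (K * Real.exp (a * l)) * (K' * Real.exp (a' * l)) := by gcongr; exacts [hb l x, hb' l x]
    _ = K * K' * Real.exp ((a + a') * l) := by rw [mul_mul_mul_comm, ← Real.exp_add]; ring_nf

lemma ExpBoundNear.congr_norm {f g : ℂ → ℂ} {β ε a : ℝ} (hf : ExpBoundNear f β ε a) (s : ℝ)
    (hfg : ∀ x, ‖g (linePt x ε)‖ = ‖f (linePt (x + s) ε)‖) : ExpBoundNear g β ε a := by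
  obtain ⟨K, hK1, hK⟩ := hf
  refine ⟨K, hK1, hK.mono fun b hb l x => ?_⟩
  convert hb l (x + s) using 1
  simp_rw [cocycle_eq_prod, norm_prod, linePt_add_nat_mul, hfg, add_right_comm x s]

lemma expBoundNear_const {c : ℂ} (hc : c ≠ 0) (β ε : ℝ) :
    ExpBoundNear (fun _ => c) β ε (Real.log ‖c‖) := by
  refine ⟨1, le_rfl, .of_forall fun b l x => ?_⟩
  rw [cocycle_eq_prod, Finset.prod_const, Finset.card_range, norm_pow, one_mul, mul_comm,
    Real.exp_nat_mul, Real.exp_log (norm_pos_iff.mpr hc)]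

end Growth

lemma conj_ee (x : ℝ) : (starRingEnd ℂ) (ee x) = ee (-x) := by
  simp only [ee, ← Complex.exp_conj]
  congr 1
  simp [Complex.conj_ofNat]

lemma two_mul_cos_eq (z : ℂ) : 2 * Complex.cos (2 * π * z) = ee z + ee (-z) := by
  rw [Complex.two_cos, ee, ee]
  ring_nf

section Coefficients

variable {l1 l2 l3 β : ℝ}

lemma harperC_eq (z : ℂ) :
    harperC l1 l2 l3 β z = l3 * ee (-(z + β / 2)) + l2 + l1 * ee (z + β / 2) := by
  simp only [harperC, ee]
  ring_nf

lemma harperCt_eq_harperC (z : ℂ) : harperCt l1 l2 l3 β z = harperC l3 l2 l1 β z := by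
  simp only [harperC, harperCt]
  ring

lemma harperC_neg (z : ℂ) : harperC l1 l2 l3 β (-z) = harperCt l1 l2 l3 β (z - β) := by
  rw [harperCt_eq_harperC, harperC_eq, harperC_eq]
  ring_nf

lemma conj_harperC (x : ℝ) :
    (starRingEnd ℂ) (harperC l1 l2 l3 β x) = harperCt l1 l2 l3 β x := by
  have h := conj_ee (x + β / 2)
  have h' := conj_ee (-(x + β / 2))
  push_cast at h h'
  rw [harperCt_eq_harperC, harperC_eq, harperC_eq]
  simp only [map_add, map_mul, Complex.conj_ofReal, h, h', neg_neg]
  ring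

lemma norm_harperCt (x : ℝ) : ‖harperCt l1 l2 l3 β x‖ = ‖harperC l1 l2 l3 β x‖ := by
  rw [← conj_harperC, RCLike.norm_conj]

lemma isLaurent_harperC : IsLaurent 1 (harperC l1 l2 l3 β) := by
  have h := ((isLaurent_ee_neg.comp_add (β / 2)).const_mul l3).add (isLaurent_const 1 l2) |>.add
    ((isLaurent_ee.comp_add (β / 2)).const_mul l1)
  simpa only [← harperC_eq] using h

lemma periodic_harperC : Function.Periodic (harperC l1 l2 l3 β) 1 := fun z => by
  rw [harperC_eq, harperC_eq, add_right_comm z, ee_neg, ee_neg, periodic_ee]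

lemma norm_le_one_of_quadratic_eq_zero {a b c : ℝ} (ha : 0 < a) (hc : c ≤ a) (hb : |b| ≤ a + c)
    {u : ℂ} (hu : a * u ^ 2 + b * u + c = 0) : ‖u‖ ≤ 1 := by
  obtain ⟨hre, him⟩ := Complex.ext_iff.mp hu
  simp only [sq, add_re, add_im, mul_re, mul_im, ofReal_re, ofReal_im, zero_re, zero_im, zero_mul,
    sub_zero, add_zero] at hre him
  rw [← sq_le_one_iff₀ (norm_nonneg _), ← Complex.normSq_eq_norm_sq, Complex.normSq_apply]
  by_cases hy : u.im = 0
  · have hbu : -((a + c) * |u.re|) ≤ b * u.re := by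
      refine (neg_le_neg ?_).trans (neg_abs_le _)
      rw [abs_mul]
      gcongr
    rw [hy, mul_zero, add_zero, ← abs_mul_abs_self]
    by_contra! hx
    have h1 : 1 < |u.re| := by nlinarith [abs_nonneg u.re]
    rw [hy, mul_zero, sub_zero, ← abs_mul_abs_self] at hre
    nlinarith [mul_pos (sub_pos.mpr h1) (show 0 < a * |u.re| - c by nlinarith)]
  · have hb' : b = -2 * a * u.re := mul_left_cancel₀ hy (by linarith)
    subst hb'
    have : a * (u.re * u.re + u.im * u.im) = c := by linarith
    nlinarith

/-- The couplings for which the constant term of `c` is dominated by the two outer ones; for these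
`c` is, up to a unit, a polynomial in `ee` of leading coefficient `max l1 l3` with roots in the
closed unit disc. -/
structure OuterCoupling (l1 l2 l3 : ℝ) : Prop where
  nonneg₁ : 0 ≤ l1
  nonneg₂ : 0 ≤ l2
  nonneg₃ : 0 ≤ l3
  pos : 0 < max l1 l3
  le : l2 ≤ l1 + l3

lemma OuterCoupling.symm (h : OuterCoupling l1 l2 l3) : OuterCoupling l3 l2 l1 :=
  ⟨h.nonneg₃, h.nonneg₂, h.nonneg₁, max_comm l1 l3 ▸ h.pos, add_comm l1 l3 ▸ h.le⟩

lemma exists_quadratic_eq_mul {a : ℂ} (ha : a ≠ 0) (b c : ℂ) :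
    ∃ u₁ u₂ : ℂ, ∀ w, a * w ^ 2 + b * w + c = a * ((w - u₁) * (w - u₂)) := by
  obtain ⟨s, hs⟩ := IsAlgClosed.exists_pow_nat_eq (b ^ 2 - 4 * a * c) two_pos
  refine ⟨(-b + s) / (2 * a), (-b - s) / (2 * a), fun w => ?_⟩
  field_simp
  linear_combination hs

lemma OuterCoupling.exists_norm_harperC_eq_of_le (h : OuterCoupling l1 l2 l3) (h31 : l3 ≤ l1)
    (β : ℝ) : ∃ u₁ u₂ : ℂ, ‖u₁‖ ≤ 1 ∧ ‖u₂‖ ≤ 1 ∧ ∀ x : ℝ, ‖harperC l1 l2 l3 β x‖ =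
      max l1 l3 * (‖ee ((x + β / 2 : ℝ)) - u₁‖ * ‖ee ((x + β / 2 : ℝ)) - u₂‖) := by
  have hl : 0 < l1 := by simpa only [max_eq_left h31] using h.pos
  obtain ⟨u₁, u₂, hfac⟩ := exists_quadratic_eq_mul (ofReal_ne_zero.mpr hl.ne') l2 l3
  have hroot {u : ℂ} (hu : (u - u₁) * (u - u₂) = 0) : ‖u‖ ≤ 1 :=
    norm_le_one_of_quadratic_eq_zero hl h31 (by rw [abs_of_nonneg h.nonneg₂]; exact h.le)
      (by rw [hfac, hu, mul_zero])
  refine ⟨u₁, u₂, hroot (by ring), hroot (by ring), fun x => ?_⟩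
  set w := ee ((x + β / 2 : ℝ)) with hw
  have hw0 : w ≠ 0 := ee_ne_zero _
  have hC : harperC l1 l2 l3 β x = w⁻¹ * (l1 * w ^ 2 + l2 * w + l3) := by
    rw [hw, harperC_eq, ee_neg]
    push_cast at hw ⊢
    rw [← hw]
    field_simp
    ring
  rw [hC, hfac, norm_mul, norm_mul, norm_mul, norm_inv, hw, norm_ee_ofReal, inv_one, one_mul,
    Complex.norm_real, Real.norm_of_nonneg h.nonneg₁, max_eq_left h31]

lemma OuterCoupling.exists_norm_harperC_eq (h : OuterCoupling l1 l2 l3) (β : ℝ) :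
    ∃ u₁ u₂ : ℂ, ‖u₁‖ ≤ 1 ∧ ‖u₂‖ ≤ 1 ∧ ∀ x : ℝ, ‖harperC l1 l2 l3 β x‖ =
      max l1 l3 * (‖ee ((x + β / 2 : ℝ)) - u₁‖ * ‖ee ((x + β / 2 : ℝ)) - u₂‖) := by
  rcases le_total l3 l1 with h31 | h31
  · exact h.exists_norm_harperC_eq_of_le h31 β
  · simp_rw [← norm_harperCt, harperCt_eq_harperC, max_comm l1 l3]
    exact h.symm.exists_norm_harperC_eq_of_le h31 β

lemma OuterCoupling.expBoundNear_harperC (h : OuterCoupling l1 l2 l3) (hβ : Irrational β) {κ : ℝ}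
    (hκ : 0 < κ) : ExpBoundNear (harperC l1 l2 l3 β) β 0 (Real.log (max l1 l3) + κ) := by
  obtain ⟨u₁, u₂, hu₁, hu₂, hu⟩ := h.exists_norm_harperC_eq β
  have hbound := (expBoundNear_const (ofReal_ne_zero.mpr h.pos.ne') β 0).mul
    ((expBoundNear_ee_sub hβ (half_pos hκ) hu₁).mul (expBoundNear_ee_sub hβ (half_pos hκ) hu₂))
  rw [Complex.norm_real, Real.norm_of_nonneg h.pos.le, add_halves] at hbound
  refine hbound.congr_norm (β / 2) fun x => ?_
  rw [linePt_zero, linePt_zero, hu, norm_mul, norm_mul, Complex.norm_real,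
    Real.norm_of_nonneg h.pos.le]

end Coefficients

section TransferMatrix

variable {l1 l2 l3 β : ℝ} {E : ℂ}

lemma periodic_harperA : Function.Periodic (harperA l1 l2 l3 β E) 1 := fun z => by
  simp only [harperA, harperCt_eq_harperC, add_sub_right_comm, periodic_harperC _, mul_add, mul_one,
    Complex.cos_add_two_pi]

@[fun_prop] lemma continuous_harperA : Continuous (harperA l1 l2 l3 β E) := by
  have hC (m1 m3 : ℝ) : Continuous (harperC m1 l2 m3 β) := by
    unfold harperC
    fun_prop
  refine continuous_matrix fun i j => ?_
  fin_cases i <;> fin_cases j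
  · change Continuous fun z => E - 2 * Complex.cos (2 * π * z)
    fun_prop
  · change Continuous fun z => -harperCt l1 l2 l3 β (z - β)
    simp_rw [harperCt_eq_harperC]
    fun_prop
  · exact hC l1 l3
  · exact continuous_const

lemma isLaurent_harperA (i j : Fin 2) : IsLaurent 1 (fun z => harperA l1 l2 l3 β E z i j) := by
  fin_cases i <;> fin_cases j
  · change IsLaurent 1 fun z => E - 2 * Complex.cos (2 * π * z)
    have h := (isLaurent_const 1 E).add ((isLaurent_ee.add isLaurent_ee_neg).const_mul (-1))
    simpa only [neg_one_mul, ← sub_eq_add_neg, ← two_mul_cos_eq] using h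
  · change IsLaurent 1 fun z => -harperCt l1 l2 l3 β (z - β)
    have h := ((isLaurent_harperC (l1 := l3) (l2 := l2) (l3 := l1) (β := β)).comp_add
      (-β)).const_mul (-1)
    simpa only [neg_one_mul, ← sub_eq_add_neg, ← harperCt_eq_harperC] using h
  · exact isLaurent_harperC
  · exact isLaurent_const 1 0

lemma det_harperA (z : ℂ) : (harperA l1 l2 l3 β E z).det =
    harperC l1 l2 l3 β z * harperCt l1 l2 l3 β (z - β) := by
  rw [harperA, Matrix.det_fin_two_of]
  ring

lemma OuterCoupling.expBoundNear_det_harperA (h : OuterCoupling l1 l2 l3) (hβ : Irrational β)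
    {κ : ℝ} (hκ : 0 < κ) : ExpBoundNear (fun z => (harperA l1 l2 l3 β E z).det) β 0
      (2 * Real.log (max l1 l3) + κ) := by
  have hC := h.expBoundNear_harperC hβ (half_pos hκ)
  have hCt : ExpBoundNear (fun z => harperCt l1 l2 l3 β (z - β)) β 0
      (Real.log (max l1 l3) + κ / 2) := hC.congr_norm (-β) fun x => by
    rw [linePt_zero, linePt_zero, ← ofReal_sub, norm_harperCt, sub_eq_add_neg]
  simp_rw [det_harperA]
  have hrate : 2 * Real.log (max l1 l3) + κ =
      Real.log (max l1 l3) + κ / 2 + (Real.log (max l1 l3) + κ / 2) := by ring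
  exact hrate ▸ hC.mul hCt

/-- The anti-automorphism `M ↦ J Mᵀ J` with `J = diag (1, -1)`, which implements the reflection
`z ↦ -z` on transfer matrices. -/
def reflect (M : Matrix (Fin 2) (Fin 2) ℂ) : Matrix (Fin 2) (Fin 2) ℂ :=
  !![M 0 0, -M 1 0; -M 0 1, M 1 1]

lemma reflect_one : reflect 1 = 1 := by
  simp [reflect, Matrix.one_fin_two]

lemma reflect_mul (M N : Matrix (Fin 2) (Fin 2) ℂ) : reflect (M * N) = reflect N * reflect M := by
  ext i j
  fin_cases i <;> fin_cases j <;> simp [reflect, Matrix.mul_apply] <;> ring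

lemma norm_reflect (M : Matrix (Fin 2) (Fin 2) ℂ) : ‖reflect M‖ = ‖M‖ := by
  rw [← sq_eq_sq₀ (norm_nonneg _) (norm_nonneg _), norm_sq_eq_sum_norm_entry_sq,
    norm_sq_eq_sum_norm_entry_sq]
  simp [reflect, Fin.sum_univ_two]
  ring

lemma harperA_neg (z : ℂ) : harperA l1 l2 l3 β E (-z) = reflect (harperA l1 l2 l3 β E z) := by
  have h := harperC_neg (l1 := l1) (l2 := l2) (l3 := l3) (β := β) (-z)
  rw [neg_neg] at h
  simp [harperA, reflect, harperC_neg, h]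

lemma RateLT.harperA_neg {ε a : ℝ} (h : RateLT (harperA l1 l2 l3 β E) β ε a) :
    RateLT (harperA l1 l2 l3 β E) β (-ε) a :=
  h.neg reflect_one reflect_mul norm_reflect ExtendedHarper.harperA_neg

end TransferMatrix

/-! ### Growth at `+i∞` -/

lemma exists_norm_pow_lt_of_forall_spectrum_lt {R : Type*} [NormedRing R] [NormedAlgebra ℂ R]
    [CompleteSpace R] [Nontrivial R] {a : R} {r : ℝ} (h : ∀ μ ∈ spectrum ℂ a, ‖μ‖ < r) :
    ∃ N : ℕ, 0 < N ∧ ‖a ^ N‖ < r ^ N := by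
  obtain ⟨μ, hμ⟩ := spectrum.nonempty a
  lift r to ℝ≥0 using (norm_nonneg μ).trans (h μ hμ).le
  have hr : spectralRadius ℂ a < r :=
    spectrum.spectralRadius_lt_of_forall_lt a fun ν hν => NNReal.coe_lt_coe.mp (h ν hν)
  obtain ⟨N, hN, hN0⟩ := (((spectrum.pow_nnnorm_pow_one_div_tendsto_nhds_spectralRadius a
    ).eventually_lt_const hr).and (eventually_gt_atTop 0)).exists
  refine ⟨N, hN0, ?_⟩
  rw [one_div, ENNReal.rpow_inv_lt_iff (by positivity), ENNReal.rpow_natCast] at hN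
  exact_mod_cast hN

section Far

variable {l1 l2 l3 β : ℝ} {E : ℂ}

/-- The leading coefficient of the transfer matrix at `+i∞`. -/
def leadMat (l1 l3 β : ℝ) : Matrix (Fin 2) (Fin 2) ℂ :=
  !![-1, -(l1 * ee (β / 2)); l3 * ee (-(β / 2)), 0]

/-- The transfer matrix times `w = ee z`, written as a function of `w` so that it extends to
`w = 0`, that is, to `z = +i∞`. -/
def scaledMat (l1 l2 l3 β : ℝ) (E : ℂ) (w : ℂ) : Matrix (Fin 2) (Fin 2) ℂ :=
  !![E * w - w ^ 2 - 1, -(l3 * ee (-(β / 2)) * w ^ 2 + l2 * w + l1 * ee (β / 2));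
    l3 * ee (-(β / 2)) + l2 * w + l1 * ee (β / 2) * w ^ 2, 0]

lemma scaledMat_zero : scaledMat l1 l2 l3 β E 0 = leadMat l1 l3 β := by
  simp [scaledMat, leadMat]

lemma continuous_scaledMat : Continuous (scaledMat l1 l2 l3 β E) := by
  unfold scaledMat
  refine continuous_matrix fun i j => ?_
  fin_cases i <;> fin_cases j <;>
    simp only [Fin.zero_eta, Fin.mk_one, Matrix.of_apply, Matrix.cons_val', Matrix.cons_val_zero,
      Matrix.cons_val_one, Matrix.cons_val_fin_one] <;>
    fun_prop

lemma scaledMat_ee (z : ℂ) :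
    scaledMat l1 l2 l3 β E (ee z) = ee z • harperA l1 l2 l3 β E z := by
  have hz := ee_ne_zero z
  have hb := ee_ne_zero (β / 2)
  have hC : ee z * harperC l1 l2 l3 β z =
      l3 * ee (-(β / 2)) + l2 * ee z + l1 * ee (β / 2) * ee z ^ 2 := by
    rw [harperC_eq, neg_add, ee_add, ee_add, ee_neg, ee_neg]
    field_simp
  have hCt : ee z * harperCt l1 l2 l3 β (z - β) =
      l3 * ee (-(β / 2)) * ee z ^ 2 + l2 * ee z + l1 * ee (β / 2) := by
    rw [harperCt_eq_harperC, harperC_eq, show z - β + β / 2 = z + -(β / 2) by ring, neg_add,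
      neg_neg, ee_add, ee_add, ee_neg, ee_neg]
    field_simp
    ring
  have hcos : ee z * (2 * Complex.cos (2 * π * z)) = ee z ^ 2 + 1 := by
    rw [two_mul_cos_eq, ee_neg]
    field_simp
  rw [harperA, scaledMat]
  simp only [Matrix.smul_of, Matrix.smul_cons, Matrix.smul_empty, smul_eq_mul, mul_sub, mul_neg,
    hC, hCt, hcos, mul_zero, sub_sub, mul_comm E]

lemma cocycleOver_scaledMat_ee (n : ℕ) (z : ℂ) :
    cocycleOver (· * ee β) (scaledMat l1 l2 l3 β E) n (ee z) =
      cocycle ee β n z • cocycle (harperA l1 l2 l3 β E) β n z := by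
  have hsemi : Function.Semiconj ee (· + (β : ℂ)) (· * ee β) := fun z => ee_add z β
  rw [← cocycleOver_comp hsemi, ← cocycleOver_smul]
  exact congrArg (fun B => cocycleOver _ B n z) (funext scaledMat_ee)

lemma norm_cocycle_ee_linePt (b x ε : ℝ) (n : ℕ) :
    ‖cocycle ee b n (linePt x ε)‖ = Real.exp (-2 * π * ε * n) := by
  simp_rw [cocycle_eq_prod, norm_prod, linePt_add_nat_mul, norm_ee, linePt_im, Finset.prod_const,
    Finset.card_range, ← Real.exp_nat_mul, mul_comm]

lemma max_pos_of_one_le_add (h : 1 ≤ l1 + l3) : 0 < max l1 l3 := by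
  linarith [le_max_left l1 l3, le_max_right l1 l3]

lemma norm_le_max_of_mem_spectrum_leadMat (h : 1 ≤ l1 + l3) {μ : ℂ}
    (hμ : μ ∈ spectrum ℂ (leadMat l1 l3 β)) : ‖μ‖ ≤ max l1 l3 := by
  have hroot : μ ^ 2 + μ + l1 * l3 = 0 := by
    have hb : ee (β / 2) * ee (-(β / 2)) = 1 := by rw [← ee_add, add_neg_cancel, ee_zero]
    rw [Matrix.mem_spectrum_iff_isRoot_charpoly, Matrix.charpoly_fin_two, leadMat,
      Matrix.trace_fin_two_of, Matrix.det_fin_two_of] at hμ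
    simp only [Polynomial.IsRoot.def, Polynomial.eval_add, Polynomial.eval_sub,
      Polynomial.eval_mul, Polynomial.eval_pow, Polynomial.eval_X, Polynomial.eval_C] at hμ
    linear_combination hμ - l1 * l3 * hb
  set m := max l1 l3 with hm
  have hpos : 0 < m := max_pos_of_one_le_add h
  have hsum : m * (l1 + l3) = m ^ 2 + l1 * l3 := by
    rcases max_choice l1 l3 with h' | h' <;> rw [hm, h'] <;> ring
  have hle : l1 * l3 ≤ m ^ 2 := by nlinarith [le_max_left l1 l3, le_max_right l1 l3]
  have hm0 : (m : ℂ) ≠ 0 := ofReal_ne_zero.mpr hpos.ne'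
  have hu : ‖μ / m‖ ≤ 1 := by
    refine norm_le_one_of_quadratic_eq_zero (pow_pos hpos 2) hle (b := m) ?_ ?_
    · rw [abs_of_pos hpos, ← hsum]
      exact le_mul_of_one_le_right hpos.le h
    · push_cast
      field_simp
      linear_combination hroot
  rwa [norm_div, Complex.norm_real, Real.norm_of_nonneg hpos.le, div_le_one hpos] at hu

lemma exists_rateLT_harperA_far (h : 1 ≤ l1 + l3) {κ : ℝ} (hκ : 0 < κ) (ε₀ : ℝ) :
    ∃ ε ≥ ε₀, RateLT (harperA l1 l2 l3 β E) β ε (Real.log (max l1 l3) + κ + 2 * π * ε) := by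
  have hpos : 0 < max l1 l3 := max_pos_of_one_le_add h
  have hlt : max l1 l3 < Real.exp (Real.log (max l1 l3) + κ) := by
    rw [Real.exp_add, Real.exp_log hpos]
    exact lt_mul_of_one_lt_right hpos (Real.one_lt_exp_iff.mpr hκ)
  obtain ⟨N, hN, hlead⟩ := exists_norm_pow_lt_of_forall_spectrum_lt (a := leadMat l1 l3 β)
    fun μ hμ => (norm_le_max_of_mem_spectrum_leadMat h hμ).trans_lt hlt
  have hcont : Continuous fun w =>
      ‖cocycleOver (· * ee β) (scaledMat l1 l2 l3 β E) N w‖ :=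
    (continuous_cocycleOver (by fun_prop) continuous_scaledMat N).norm
  have hzero : cocycleOver (· * ee β) (scaledMat l1 l2 l3 β E) N 0 = leadMat l1 l3 β ^ N := by
    have hfix : Function.IsFixedPt (· * ee (β : ℂ)) 0 := zero_mul _
    rw [cocycleOver_of_isFixedPt hfix, scaledMat_zero]
  obtain ⟨ρ, hρ, hball⟩ := Metric.eventually_nhds_iff.mp
    (hcont.continuousAt.eventually_lt_const (hzero ▸ hlead))
  have hee : Tendsto (fun ε : ℝ => Real.exp (-2 * π * ε)) atTop (nhds 0) :=
    Real.tendsto_exp_atBot.comp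
      (tendsto_id.const_mul_atTop_of_neg (by linarith [Real.pi_pos]))
  obtain ⟨ε, hερ, hε⟩ := ((hee.eventually_lt_const hρ).and (eventually_ge_atTop ε₀)).exists
  refine ⟨ε, hε, N, hN, fun x => ?_⟩
  have hx := hball (y := ee (linePt x ε)) (by rwa [dist_zero_right, norm_ee, linePt_im])
  rw [cocycleOver_scaledMat_ee, norm_smul, norm_cocycle_ee_linePt, ← Real.exp_nat_mul,
    ← lt_div_iff₀' (Real.exp_pos _), ← Real.exp_sub] at hx
  refine hx.trans_eq (congrArg Real.exp ?_)
  ring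

end Far

/-! ### Jensen's formula and the lower bound on the Lyapunov exponent -/

section LogIntegral

lemma logIntegral_le_log {g : ℝ → ℝ} {S : ℝ} (hg0 : ∀ x, 0 ≤ g x) (hgS : ∀ x, g x ≤ S) :
    logIntegral g ≤ (Real.log S : ℝ) := by
  have hlog (x : ℝ) (hx : g x ≠ 0) : Real.log (g x) ≤ Real.log S :=
    Real.log_le_log ((hg0 x).lt_of_ne' hx) (hgS x)
  have hpos : ∫⁻ x in Set.Ioc (0 : ℝ) 1, ENNReal.ofReal (Real.log (g x)) ≤
      ENNReal.ofReal (Real.log S) := by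
    refine (lintegral_mono (g := fun _ => ENNReal.ofReal (Real.log S)) fun x => ?_).trans_eq
      (by simp)
    by_cases hx : g x = 0
    · simp [hx]
    · exact ENNReal.ofReal_le_ofReal (hlog x hx)
  have hneg : ENNReal.ofReal (-Real.log S) ≤ ∫⁻ x in Set.Ioc (0 : ℝ) 1,
      if g x = 0 then (⊤ : ℝ≥0∞) else ENNReal.ofReal (-Real.log (g x)) := by
    refine Eq.trans_le (by simp)
      (lintegral_mono (f := fun _ => ENNReal.ofReal (-Real.log S)) fun x => ?_)
    by_cases hx : g x = 0
    · simp only [hx, if_true, le_top]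
    · simpa only [hx, if_false] using ENNReal.ofReal_le_ofReal (neg_le_neg (hlog x hx))
  calc logIntegral g
      ≤ (ENNReal.ofReal (Real.log S) : EReal) - (ENNReal.ofReal (-Real.log S) : EReal) :=
        EReal.sub_le_sub (EReal.coe_ennreal_le_coe_ennreal_iff.mpr hpos)
          (EReal.coe_ennreal_le_coe_ennreal_iff.mpr hneg)
    _ = (Real.log S : ℝ) := by
        rw [EReal.coe_ennreal_ofReal, EReal.coe_ennreal_ofReal, ← EReal.coe_sub,
          max_zero_sub_max_neg_zero_eq_self]

lemma integral_le_logIntegral {g h : ℝ → ℝ}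
    (hh : Integrable h (volume.restrict (Set.Ioc (0 : ℝ) 1)))
    (hg : ∀ᵐ x ∂volume.restrict (Set.Ioc (0 : ℝ) 1), g x ≠ 0 ∧ h x ≤ Real.log (g x)) :
    ((∫ x in Set.Ioc (0 : ℝ) 1, h x : ℝ) : EReal) ≤ logIntegral g := by
  have hpos : ∫⁻ x in Set.Ioc (0 : ℝ) 1, ENNReal.ofReal (h x) ≤
      ∫⁻ x in Set.Ioc (0 : ℝ) 1, ENNReal.ofReal (Real.log (g x)) :=
    lintegral_mono_ae (hg.mono fun x hx => ENNReal.ofReal_le_ofReal hx.2)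
  have hneg : (∫⁻ x in Set.Ioc (0 : ℝ) 1,
      if g x = 0 then (⊤ : ℝ≥0∞) else ENNReal.ofReal (-Real.log (g x))) ≤
      ∫⁻ x in Set.Ioc (0 : ℝ) 1, ENNReal.ofReal (-h x) :=
    lintegral_mono_ae (hg.mono fun x hx => by
      simpa only [hx.1, if_false] using ENNReal.ofReal_le_ofReal (neg_le_neg hx.2))
  have hneg_ne_top : ∫⁻ x in Set.Ioc (0 : ℝ) 1, ENNReal.ofReal (-h x) ≠ ⊤ :=
    hh.neg.lintegral_lt_top.ne
  rw [integral_eq_lintegral_pos_part_sub_lintegral_neg_part hh, EReal.coe_sub,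
    EReal.coe_ennreal_toReal hh.lintegral_lt_top.ne, EReal.coe_ennreal_toReal hneg_ne_top]
  exact EReal.sub_le_sub (EReal.coe_ennreal_le_coe_ennreal_iff.mpr hpos)
    (EReal.coe_ennreal_le_coe_ennreal_iff.mpr hneg)

/-- `log g` has mean `a` over the unit interval; `g` is required to be nonzero almost everywhere
since `Real.log 0 = 0` would hide its zeros. -/
structure LogMean (g : ℝ → ℝ) (a : ℝ) : Prop where
  ae_ne_zero : ∀ᵐ x ∂volume.restrict (Set.Ioc (0 : ℝ) 1), g x ≠ 0
  integrable : Integrable (fun x => Real.log (g x)) (volume.restrict (Set.Ioc (0 : ℝ) 1))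
  integral_eq : ∫ x in Set.Ioc (0 : ℝ) 1, Real.log (g x) = a

lemma LogMean.mul {f g : ℝ → ℝ} {a b : ℝ} (hf : LogMean f a) (hg : LogMean g b) :
    LogMean (fun x => f x * g x) (a + b) := by
  have hlog : (fun x => Real.log (f x) + Real.log (g x)) =ᵐ[volume.restrict (Set.Ioc (0 : ℝ) 1)]
      fun x => Real.log (f x * g x) := by
    filter_upwards [hf.ae_ne_zero, hg.ae_ne_zero] with x hfx hgx
    rw [Real.log_mul hfx hgx]
  refine ⟨?_, (hf.integrable.add hg.integrable).congr hlog, ?_⟩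
  · filter_upwards [hf.ae_ne_zero, hg.ae_ne_zero] with x hfx hgx using mul_ne_zero hfx hgx
  · rw [← integral_congr_ae hlog, integral_add hf.integrable hg.integrable, hf.integral_eq,
      hg.integral_eq]

lemma logMean_const {c : ℝ} (hc : c ≠ 0) : LogMean (fun _ => c) (Real.log c) :=
  ⟨.of_forall fun _ => hc, integrable_const _, by simp⟩

lemma LogMean.prod {ι : Type*} {f : ι → ℝ → ℝ} {a : ι → ℝ} {s : Finset ι}
    (hf : ∀ j ∈ s, LogMean (f j) (a j)) :
    LogMean (fun x => ∏ j ∈ s, f j x) (∑ j ∈ s, a j) := by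
  classical
  induction s using Finset.induction_on with
  | empty => simpa using logMean_const one_ne_zero
  | insert j s hj ih =>
    simp only [Finset.prod_insert hj, Finset.sum_insert hj]
    exact (hf j (s.mem_insert_self j)).mul (ih fun i hi => hf i (Finset.mem_insert_of_mem hi))

lemma LogMean.exists_exp_le {g : ℝ → ℝ} {a : ℝ} (hg : LogMean g a) (hg0 : ∀ x, 0 ≤ g x) :
    ∃ x, Real.exp a ≤ g x := by
  have : IsProbabilityMeasure (volume.restrict (Set.Ioc (0 : ℝ) 1)) := ⟨by simp⟩
  obtain ⟨x, hx, hle⟩ := exists_notMem_null_integral_le hg.integrable (ae_iff.mp hg.ae_ne_zero)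
  refine ⟨x, (Real.le_log_iff_exp_le ((hg0 x).lt_of_ne' ?_)).mp (hg.integral_eq ▸ hle)⟩
  simpa using hx

lemma LogMean.le_logIntegral_of_le_sq {f g : ℝ → ℝ} {a : ℝ} (hg : LogMean g a)
    (hg0 : ∀ x, 0 ≤ g x) (hgf : ∀ x, g x ≤ f x ^ 2) :
    ((1 / 2 * a : ℝ) : EReal) ≤ logIntegral f := by
  rw [← hg.integral_eq, ← integral_const_mul]
  refine integral_le_logIntegral (hg.integrable.const_mul _) ?_
  filter_upwards [hg.ae_ne_zero] with x hx
  have hgx : 0 < g x := (hg0 x).lt_of_ne' hx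
  have hlog := Real.log_le_log hgx (hgf x)
  rw [Real.log_pow, Nat.cast_ofNat] at hlog
  exact ⟨fun hf => by simpa [hf] using hgx.trans_le (hgf x), by linarith⟩

lemma countable_setOf_ee_eq (u : ℂ) : {x : ℝ | ee x = u}.Countable := by
  rcases Set.eq_empty_or_nonempty {x : ℝ | ee x = u} with h | ⟨x₀, hx₀⟩
  · exact h ▸ Set.countable_empty
  refine (Set.countable_range fun k : ℤ => x₀ + k).mono fun x hx => ?_
  obtain ⟨k, hk⟩ := Complex.exp_eq_exp_iff_exists_int.mp (hx.trans hx₀.symm : ee x = ee x₀)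
  have hxk : (x : ℂ) = x₀ + k :=
    mul_left_cancel₀ Complex.two_pi_I_ne_zero (by rw [hk]; ring)
  exact ⟨k, by exact_mod_cast hxk.symm⟩

lemma norm_ee_add_sub (x t : ℝ) (u : ℂ) :
    ‖ee ((x + t : ℝ)) - u‖ = ‖ee x - ee (-t) * u‖ := by
  have h : ee ((x + t : ℝ)) - u = ee t * (ee x - ee (-t) * u) := by
    rw [mul_sub, ← mul_assoc, ← ee_add, ← ee_add, add_neg_cancel, ee_zero, one_mul, ofReal_add,
      add_comm]
  rw [h, norm_mul, norm_ee_ofReal, one_mul]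

lemma logMean_norm_ee_sub {u : ℂ} (hu : ‖u‖ ≤ 1) : LogMean (fun x => ‖ee x - u‖) 0 := by
  have hcircle (x : ℝ) : ee x = circleMap 0 1 (2 * π * x) := by
    simp only [circleMap, ee, zero_add, ofReal_one, one_mul]
    push_cast
    ring_nf
  have h2pi : (2 * π) ≠ 0 := by positivity
  refine ⟨ae_restrict_of_ae ?_, ?_, ?_⟩
  · filter_upwards [(countable_setOf_ee_eq u).ae_notMem volume] with x hx
    rwa [norm_ne_zero_iff, sub_ne_zero]
  · have hlog : IntervalIntegrable (fun θ => Real.log ‖circleMap 0 1 θ - u‖) volume 0 (2 * π) :=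
      circleIntegrable_log_norm_sub_const 1
    have hlog' := hlog.comp_mul_left (c := 2 * π)
    rw [zero_div, div_self h2pi, intervalIntegrable_iff_integrableOn_Ioc_of_le zero_le_one]
      at hlog'
    simpa only [hcircle, IntegrableOn] using hlog'
  · have hcomp := intervalIntegral.integral_comp_mul_left (a := 0) (b := 1)
      (fun θ => Real.log ‖circleMap 0 1 θ - u‖) h2pi
    have hjensen := circleAverage_log_norm_sub_const_of_mem_closedBall (a := u) (c := 0) (R := 1)
      (by simpa using hu)
    rw [mul_zero, mul_one] at hcomp
    rw [Real.log_one] at hjensen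
    simp only [hcircle]
    rw [← intervalIntegral.integral_of_le zero_le_one, hcomp]
    exact hjensen

end LogIntegral

lemma norm_det_le_sq (M : Matrix (Fin 2) (Fin 2) ℂ) : ‖M.det‖ ≤ ‖M‖ ^ 2 := by
  rw [Matrix.det_fin_two, norm_sq_eq_sum_norm_entry_sq]
  simp only [Fin.sum_univ_two]
  calc ‖M 0 0 * M 1 1 - M 0 1 * M 1 0‖ ≤ ‖M 0 0‖ * ‖M 1 1‖ + ‖M 0 1‖ * ‖M 1 0‖ := by
        rw [← norm_mul, ← norm_mul]
        exact norm_sub_le _ _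
    _ ≤ _ := by nlinarith [sq_nonneg (‖M 0 0‖ - ‖M 1 1‖), sq_nonneg (‖M 0 1‖ - ‖M 1 0‖)]

section Harper

variable {l1 l2 l3 : ℝ}

lemma OuterCoupling.logMean_harperC (h : OuterCoupling l1 l2 l3) (β t : ℝ) :
    LogMean (fun x => ‖harperC l1 l2 l3 β ((x + t : ℝ))‖) (Real.log (max l1 l3)) := by
  obtain ⟨u₁, u₂, hu₁, hu₂, hu⟩ := h.exists_norm_harperC_eq β
  have hrot {u : ℂ} (hu : ‖u‖ ≤ 1) : ‖ee (-((t + β / 2 : ℝ) : ℂ)) * u‖ ≤ 1 := by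
    rwa [norm_mul, ← ofReal_neg, norm_ee_ofReal, one_mul]
  simp_rw [hu, add_assoc, norm_ee_add_sub]
  simpa only [add_zero] using (logMean_const h.pos.ne').mul
    ((logMean_norm_ee_sub (hrot hu₁)).mul (logMean_norm_ee_sub (hrot hu₂)))

lemma OuterCoupling.logMean_det_cocycle (h : OuterCoupling l1 l2 l3) (β : ℝ) (E : ℂ) (b : ℝ)
    (n : ℕ) : LogMean (fun x : ℝ => ‖(cocycle (harperA l1 l2 l3 β E) b n x).det‖)
      (2 * Real.log (max l1 l3) * n) := by
  have hdet (x : ℝ) (j : ℕ) : ‖(harperA l1 l2 l3 β E (x + j * b)).det‖ =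
      ‖harperC l1 l2 l3 β ((x + j * b : ℝ))‖ * ‖harperC l1 l2 l3 β ((x + (j * b - β) : ℝ))‖ := by
    rw [det_harperA, norm_mul, ← norm_harperCt (x + (j * b - β))]
    push_cast
    rw [add_sub_assoc]
  simp_rw [det_cocycle, cocycle_eq_prod, norm_prod, hdet]
  have hmean := LogMean.prod (s := Finset.range n) fun j _ =>
    (h.logMean_harperC β (j * b)).mul (h.logMean_harperC β (j * b - β))
  rwa [← two_mul, Finset.sum_const, Finset.card_range, nsmul_eq_mul, mul_comm] at hmean

lemma OuterCoupling.log_max_le_lyapunov (h : OuterCoupling l1 l2 l3) (β : ℝ) (E : ℂ) :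
    (Real.log (max l1 l3) : EReal) ≤ lyapunov β (fun x : ℝ => harperA l1 l2 l3 β E x) := by
  refine le_iInf fun n => ?_
  have hle := (h.logMean_det_cocycle β E β (n + 1)).le_logIntegral_of_le_sq
    (fun x => norm_nonneg _) fun x => norm_det_le_sq _
  have hn : (0 : ℝ) < n + 1 := by positivity
  simp_rw [cocycleIter_eq_cocycle]
  calc (Real.log (max l1 l3) : EReal)
      = (((n : ℝ) + 1)⁻¹ : ℝ) * (1 / 2 * (2 * Real.log (max l1 l3) * (n + 1 : ℕ)) : ℝ) := by
        rw [← EReal.coe_mul, EReal.coe_eq_coe_iff]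
        push_cast
        field_simp
    _ ≤ _ := mul_le_mul_of_nonneg_left hle (by exact_mod_cast (inv_pos.mpr hn).le)

end Harper

lemma RateLT.lyapunov_le {A : ℂ → Matrix (Fin 2) (Fin 2) ℂ} {β a : ℝ} (h : RateLT A β 0 a) :
    lyapunov β (fun x : ℝ => A x) ≤ a := by
  obtain ⟨n, hn, hA⟩ := h
  obtain ⟨k, rfl⟩ := Nat.exists_eq_succ_of_ne_zero hn.ne'
  have hint := logIntegral_le_log (g := fun x : ℝ => ‖cocycle A β (k + 1) x‖)
    (fun x => norm_nonneg _) fun x => linePt_zero x ▸ (hA x).le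
  have hk : (0 : ℝ) < k + 1 := by positivity
  refine (iInf_le _ k).trans ?_
  simp_rw [cocycleIter_eq_cocycle]
  calc _ ≤ (((k : ℝ) + 1)⁻¹ : ℝ) * (Real.log (Real.exp (a * (k + 1 : ℕ))) : EReal) :=
        mul_le_mul_of_nonneg_left hint (by exact_mod_cast (inv_pos.mpr hk).le)
    _ = a := by
        rw [Real.log_exp, ← EReal.coe_mul, EReal.coe_eq_coe_iff]
        push_cast
        field_simp

/-! ### Large blocks along orbits -/

section Window

variable {n N i₀ : ℕ} {P : Polynomial ℂ} {F : ℂ → ℂ} {β κ ε ε' B D : ℝ}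

/-- The part `∑ j < N, P.coeff (i₀ + j) * X ^ j` of `P` seen through a window of length `N`. -/
def windowPoly (P : Polynomial ℂ) (i₀ N : ℕ) : Polynomial ℂ :=
  ∑ j ∈ Finset.range N, Polynomial.C (P.coeff (i₀ + j)) * Polynomial.X ^ j

lemma degree_windowPoly_lt (P : Polynomial ℂ) (i₀ N : ℕ) : (windowPoly P i₀ N).degree < N := by
  rw [windowPoly, Polynomial.degree_lt_iff_coeff_zero]
  intro k hk
  simp only [Polynomial.finsetSum_coeff, Polynomial.coeff_C_mul_X_pow]
  refine Finset.sum_eq_zero fun j hj => if_neg ?_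
  have := Finset.mem_range.mp hj
  omega

lemma LaurentRep.sub_windowPoly_eq_sum (h : LaurentRep n P F) (hwin : i₀ + N ≤ 2 * n + 1) (z : ℂ) :
    F z - ee ((i₀ - n : ℝ) * z) * (windowPoly P i₀ N).eval (ee z) =
      ∑ i ∈ Finset.range (2 * n + 1) \ Finset.Ico i₀ (i₀ + N),
        P.coeff i * ee ((i - n : ℝ) * z) := by
  have hsub : Finset.Ico i₀ (i₀ + N) ⊆ Finset.range (2 * n + 1) := fun i hi => by
    rw [Finset.mem_Ico] at hi
    rw [Finset.mem_range]
    omega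
  rw [sub_eq_iff_eq_add, h.eq_sum, ← Finset.sum_sdiff hsub, Finset.sum_Ico_eq_sum_range,
    add_tsub_cancel_left, windowPoly, Polynomial.eval_finsetSum, Finset.mul_sum]
  congr 1
  refine Finset.sum_congr rfl fun j _ => ?_
  rw [Polynomial.eval_mul, Polynomial.eval_C, Polynomial.eval_pow, Polynomial.eval_X,
    ← ee_nat_mul, mul_left_comm, ← ee_add]
  push_cast
  ring_nf

lemma LaurentRep.norm_sub_windowPoly_le (h : LaurentRep n P F) (hwin : i₀ + N ≤ 2 * n + 1)
    (hD : 0 ≤ D) (hout : ∀ i : ℕ, i < i₀ ∨ i₀ + N ≤ i →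
      ‖P.coeff i‖ * Real.exp (-2 * π * ε * (i - n)) ≤ D) (x : ℝ) :
    ‖F (linePt x ε) - ee ((i₀ - n : ℝ) * linePt x ε) *
      (windowPoly P i₀ N).eval (ee (linePt x ε))‖ ≤ (2 * n + 1) * D := by
  rw [h.sub_windowPoly_eq_sum hwin]
  calc _ ≤ ∑ _i ∈ Finset.range (2 * n + 1) \ Finset.Ico i₀ (i₀ + N), D := by
        refine norm_sum_le_of_le _ fun i hi => ?_
        rw [norm_mul, norm_ee_mul_linePt]
        simp only [Finset.mem_sdiff, Finset.mem_Ico, not_and_or, not_le, not_lt] at hi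
        exact hout i hi.2
    _ ≤ ∑ _i ∈ Finset.range (2 * n + 1), D :=
        Finset.sum_le_sum_of_subset_of_nonneg Finset.sdiff_subset fun _ _ _ => hD
    _ = _ := by simp

/-- A Laurent polynomial whose coefficients are small outside a window of length `N` is, up to a
small error, a polynomial of degree less than `N`, however large its own degree is. -/
lemma LaurentRep.norm_le_of_orbit (h : LaurentRep n P F) (hN : OrbitControls β κ N)
    (hwin : i₀ + N ≤ 2 * n + 1) (hD : 0 ≤ D)
    (hout : ∀ i : ℕ, i < i₀ ∨ i₀ + N ≤ i → ‖P.coeff i‖ * Real.exp (-2 * π * ε * (i - n)) ≤ D)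
    {y η : ℝ} (hη : ∀ j < N, ‖F (linePt (y + j * β) ε)‖ ≤ η) (y' : ℝ) :
    ‖F (linePt y' ε)‖ ≤ (η + (2 * n + 1) * D) * Real.exp (κ * N) + (2 * n + 1) * D := by
  set p := windowPoly P i₀ N
  set G := fun x => ee ((i₀ - n : ℝ) * linePt x ε) * p.eval (ee (linePt x ε))
  set ρ := Real.exp (-2 * π * ε * (i₀ - n))
  have hρ0 : 0 < ρ := Real.exp_pos _
  have herror (x : ℝ) : ‖F (linePt x ε) - G x‖ ≤ (2 * n + 1) * D :=
    h.norm_sub_windowPoly_le hwin hD hout x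
  have hG (x : ℝ) : ‖G x‖ = ρ * ‖p.eval ((Real.exp (-2 * π * ε) : ℝ) * ee x)‖ := by
    simp only [G]
    rw [norm_mul, norm_ee_mul_linePt, ee_linePt]
  have hnode : ∀ j < N, ‖p.eval ((Real.exp (-2 * π * ε) : ℝ) * ee ((y + j * β : ℝ)))‖ ≤
      (η + (2 * n + 1) * D) / ρ := by
    intro j hj
    rw [le_div_iff₀ hρ0, mul_comm, ← hG]
    linarith [herror (y + j * β), hη j hj,
      norm_le_norm_add_norm_sub (F (linePt (y + j * β) ε)) (G (y + j * β))]
  have hctrl : ‖G y'‖ ≤ (η + (2 * n + 1) * D) * Real.exp (κ * N) := by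
    rw [hG]
    calc _ ≤ ρ * ((η + (2 * n + 1) * D) / ρ * Real.exp (κ * N)) := by
          gcongr
          exact hN p (degree_windowPoly_lt P i₀ N) _ y _ hnode y'
      _ = _ := by field_simp
  linarith [herror y', norm_le_norm_add_norm_sub' (F (linePt y' ε)) (G y')]

lemma LaurentRep.norm_coeff_mul_exp_le_of_line (h : LaurentRep n P F)
    (hB : ∀ x, ‖F (linePt x ε')‖ ≤ B) (i : ℕ) :
    ‖P.coeff i‖ * Real.exp (-2 * π * ε * (i - n)) ≤
      B * Real.exp (2 * π * (ε' - ε) * (i - n)) :=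
  calc _ = ‖P.coeff i‖ * Real.exp (-2 * π * ε' * (i - n)) *
        Real.exp (2 * π * (ε' - ε) * (i - n)) := by
        rw [mul_assoc ‖_‖, ← Real.exp_add]
        ring_nf
    _ ≤ _ := by
        gcongr
        exact h.norm_coeff_mul_le hB i

/-- A bound on the line at height `ε'` makes the coefficients decay at height `ε` linearly in
`|ε' - ε|`, for the frequencies on the side determined by the sign of `ε' - ε`. -/
lemma LaurentRep.norm_coeff_mul_exp_le_of_slope (h : LaurentRep n P F) {K a s Λ : ℝ} (hK : 0 ≤ K)
    (hB : ∀ x, ‖F (linePt x ε')‖ ≤ K * Real.exp (a * n)) {i : ℕ}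
    (hi : (ε' - ε) * (i - n) ≤ -(s * |ε' - ε|) * n) (ha : a - 2 * π * s * |ε' - ε| ≤ Λ) :
    ‖P.coeff i‖ * Real.exp (-2 * π * ε * (i - n)) ≤ K * Real.exp (Λ * n) := by
  refine (h.norm_coeff_mul_exp_le_of_line hB i).trans ?_
  rw [mul_assoc, ← Real.exp_add]
  have hn : (a - 2 * π * s * |ε' - ε|) * n ≤ Λ * n := by gcongr
  have hi' := mul_le_mul_of_nonneg_left hi Real.two_pi_pos.le
  gcongr
  linarith

end Window

/-- The positions in a block of length `n` at relative distance at least `ν` from its ends. -/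
def bulk (ν : ℝ) (n : ℕ) : Set ℕ := {j | ν * n ≤ j ∧ j ≤ (1 - ν) * n}

/-- Every point of the line at height `ε` is the `j`-th point, for some `j ∈ S`, of a block of
length `n` over which the cocycle grows to norm at least `G`. -/
def HasLargeBlocks {R : Type*} [NormedRing R] (A : ℂ → R) (b ε : ℝ) (n : ℕ) (S : Set ℕ) (G : ℝ) :
    Prop :=
  ∀ x : ℝ, ∃ j ∈ S, G ≤ ‖cocycle A b n (linePt (x - j * b) ε)‖

/-- Blocks of length `n` see `2 * n + 1` Fourier modes, but only a proportion `1 - 8 * ν` of `n` of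
them matters; hence `N` nodes suffice, and they fit into the bulk of the block. -/
lemma exists_block_length {ν : ℝ} (hν : 0 < ν) (hν8 : 8 * ν ≤ 1) {N : ℕ} (hN : 1 ≤ ν * N) :
    ∃ n ≥ N, (N : ℝ) + 1 ≤ (1 - 2 * ν) * n ∧ (n : ℝ) * (1 - 8 * ν) + 1 ≤ N := by
  have hden : 0 < 1 - 4 * ν := by linarith
  have hle : (⌊(N : ℝ) / (1 - 4 * ν)⌋₊ : ℝ) * (1 - 4 * ν) ≤ N :=
    (le_div_iff₀ hden).mp (Nat.floor_le (by positivity))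
  have hlt : (N : ℝ) < (⌊(N : ℝ) / (1 - 4 * ν)⌋₊ + 1) * (1 - 4 * ν) :=
    (div_lt_iff₀ hden).mp (Nat.lt_floor_add_one _)
  have hNn : N ≤ ⌊(N : ℝ) / (1 - 4 * ν)⌋₊ := Nat.le_floor <| by
    rw [le_div_iff₀ hden]
    nlinarith
  have hNn' : (N : ℝ) ≤ ⌊(N : ℝ) / (1 - 4 * ν)⌋₊ := by exact_mod_cast hNn
  exact ⟨_, hNn, by nlinarith, by nlinarith⟩

lemma exists_orbit_subset_bulk {ν : ℝ} {n N : ℕ} (hν : 0 ≤ ν) (hN : (N : ℝ) + 1 ≤ (1 - 2 * ν) * n)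
    (x β : ℝ) : ∃ y : ℝ, ∀ j < N, ∃ k ∈ bulk ν n, y + j * β = x - k * β := by
  set j₀ := ⌈ν * n⌉₊
  have hj₀le : ν * n ≤ j₀ := Nat.le_ceil _
  have hj₀lt : (j₀ : ℝ) < ν * n + 1 := Nat.ceil_lt_add_one (by positivity)
  refine ⟨x - (j₀ + N - 1 : ℕ) * β, fun j hj => ⟨j₀ + N - 1 - j, ?_, ?_⟩⟩
  · have hge : (j₀ : ℝ) ≤ (j₀ + N - 1 - j : ℕ) := by exact_mod_cast (by omega)
    have hle : ((j₀ + N - 1 - j : ℕ) : ℝ) ≤ j₀ + N := by exact_mod_cast (by omega)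
    exact ⟨hj₀le.trans hge, by linarith⟩
  · rw [Nat.cast_sub (by omega : j ≤ j₀ + N - 1)]
    ring

section LargeBlocks

variable {A : ℂ → Matrix (Fin 2) (Fin 2) ℂ} {β ε εm εp am ap sm sp K Λ κ ν : ℝ} {n N : ℕ}

lemma norm_entry_cocycle_le_of_orbit (hN : OrbitControls β κ N)
    (hL : ∀ i j, IsLaurent 1 (fun z => A z i j))
    (hεm : εm ≤ ε) (hεp : ε ≤ εp) (hsm : 0 ≤ sm) (hsp : 0 ≤ sp) (hK : 0 ≤ K)
    (hKm : ∀ x, ‖cocycle A β n (linePt x εm)‖ ≤ K * Real.exp (am * n))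
    (hKp : ∀ x, ‖cocycle A β n (linePt x εp)‖ ≤ K * Real.exp (ap * n))
    (ham : am - 2 * π * sm * (ε - εm) ≤ Λ) (hap : ap - 2 * π * sp * (εp - ε) ≤ Λ)
    (hNn : N ≤ n) (hNs : (n : ℝ) * (sp + sm) + 1 ≤ N)
    {y η : ℝ} (hη : ∀ j < N, ‖cocycle A β n (linePt (y + j * β) ε)‖ ≤ η) (y' : ℝ) (i j : Fin 2) :
    ‖cocycle A β n (linePt y' ε) i j‖ ≤
      (η + (2 * n + 1) * (K * Real.exp (Λ * n))) * Real.exp (κ * N) +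
        (2 * n + 1) * (K * Real.exp (Λ * n)) := by
  obtain ⟨P, hP⟩ := isLaurent_cocycle hL β n i j
  have hNn' : (N : ℝ) ≤ n := by exact_mod_cast hNn
  have hsn : 0 ≤ sp * n ∧ 0 ≤ sm * n := ⟨by positivity, by positivity⟩
  set i₀ := ⌊(n : ℝ) * (1 - sp)⌋₊
  have hi₀le : (i₀ : ℝ) ≤ n * (1 - sp) := Nat.floor_le (by linarith)
  have hi₀lt : (n : ℝ) * (1 - sp) < i₀ + 1 := Nat.lt_floor_add_one _
  have hwin : i₀ + N ≤ 2 * n + 1 := by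
    have : (i₀ : ℝ) + N ≤ 2 * n + 1 := by linarith
    exact_mod_cast this
  refine hP.norm_le_of_orbit hN hwin (by positivity) ?_
    (fun k hk => (norm_entry_le _ i j).trans (hη k hk)) y'
  rintro k (hk | hk)
  · have hk' : (k : ℝ) < i₀ := by exact_mod_cast hk
    refine hP.norm_coeff_mul_exp_le_of_slope hK (fun x => (norm_entry_le _ i j).trans (hKp x))
      (s := sp) ?_ (by rwa [abs_of_nonneg (by linarith)])
    rw [abs_of_nonneg (by linarith)]
    nlinarith
  · have hk' : (i₀ : ℝ) + N ≤ k := by exact_mod_cast hk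
    refine hP.norm_coeff_mul_exp_le_of_slope hK (fun x => (norm_entry_le _ i j).trans (hKm x))
      (s := sm) ?_ (by rwa [abs_of_nonpos (by linarith), neg_sub])
    rw [abs_of_nonpos (by linarith)]
    nlinarith

/-- If a point `x` violated `HasLargeBlocks`, the cocycle would be small along the backward orbit
segment of `x` formed by the bulk positions, hence, by interpolation, on the whole line. -/
lemma norm_cocycle_lt_of_forall_bulk (hN : OrbitControls β (κ / 4) N)
    (hL : ∀ i j, IsLaurent 1 (fun z => A z i j)) (hκ : 0 ≤ κ) (hν : 0 ≤ ν)
    (hεm : εm ≤ ε) (hεp : ε ≤ εp) (hsm : 0 ≤ sm) (hsp : 0 ≤ sp) (hK : 0 ≤ K)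
    (hKm : ∀ x, ‖cocycle A β n (linePt x εm)‖ ≤ K * Real.exp (am * n))
    (hKp : ∀ x, ‖cocycle A β n (linePt x εp)‖ ≤ K * Real.exp (ap * n))
    (ham : am - 2 * π * sm * (ε - εm) ≤ Λ - 2 * κ) (hap : ap - 2 * π * sp * (εp - ε) ≤ Λ - 2 * κ)
    (hNn : N ≤ n) (hNs : (n : ℝ) * (sp + sm) + 1 ≤ N) (hNν : (N : ℝ) + 1 ≤ (1 - 2 * ν) * n)
    (hKn : 2 * K * ((n : ℝ) + 1) ≤ Real.exp (κ * n)) (hn : 7 ≤ Real.exp (κ / 2 * n)) {x : ℝ}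
    (hx : ∀ j ∈ bulk ν n, ‖cocycle A β n (linePt (x - j * β) ε)‖ < Real.exp ((Λ - κ) * n)) (y : ℝ) :
    ‖cocycle A β n (linePt y ε)‖ < Real.exp ((Λ - κ / 4) * n) := by
  set G := Real.exp ((Λ - κ) * n) with hG
  obtain ⟨x', hx'⟩ := exists_orbit_subset_bulk hν hNν x β
  have hnode (j : ℕ) (hj : j < N) : ‖cocycle A β n (linePt (x' + j * β) ε)‖ ≤ G := by
    obtain ⟨k, hk, heq⟩ := hx' j hj
    exact heq ▸ (hx k hk).le
  have herror : (2 * n + 1) * (K * Real.exp ((Λ - 2 * κ) * n)) ≤ G :=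
    calc _ ≤ (2 * K * ((n : ℝ) + 1)) * Real.exp ((Λ - 2 * κ) * n) := by
          rw [← mul_assoc]
          gcongr ?_ * _
          linarith
      _ ≤ Real.exp (κ * n) * Real.exp ((Λ - 2 * κ) * n) := by gcongr
      _ = G := by rw [hG, ← Real.exp_add]; ring_nf
  have hexp : 1 ≤ Real.exp (κ / 4 * n) := Real.one_le_exp (by positivity)
  have hentry (i j : Fin 2) : ‖cocycle A β n (linePt y ε) i j‖ ≤ 3 * (G * Real.exp (κ / 4 * n)) :=
    calc _ ≤ (G + G) * Real.exp (κ / 4 * N) + G :=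
          (norm_entry_cocycle_le_of_orbit hN hL hεm hεp hsm hsp hK hKm hKp ham hap hNn hNs hnode
            y i j).trans (by gcongr)
      _ ≤ (G + G) * Real.exp (κ / 4 * n) + G * Real.exp (κ / 4 * n) := by
          gcongr
          exact le_mul_of_one_le_right (Real.exp_pos _).le hexp
      _ = _ := by ring
  calc _ ≤ Fintype.card (Fin 2) * (3 * (G * Real.exp (κ / 4 * n))) :=
        norm_le_card_mul (by positivity) hentry
    _ < 7 * (G * Real.exp (κ / 4 * n)) := by
        rw [Fintype.card_fin]
        push_cast
        linarith [mul_pos (Real.exp_pos ((Λ - κ) * n)) (Real.exp_pos (κ / 4 * n))]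
    _ ≤ Real.exp (κ / 2 * n) * (G * Real.exp (κ / 4 * n)) := by gcongr
    _ = _ := by rw [hG, ← Real.exp_add, ← Real.exp_add]; ring_nf

/-- When the growth rate near the height `ε` varies with slopes `-sm` and `sp`, the Fourier modes of
the `n`-th iterate that matter at height `ε` lie in a window of length `(sp + sm) * n`. -/
lemma exists_hasLargeBlocks (hβ : Irrational β) (hL : ∀ i j, IsLaurent 1 (fun z => A z i j))
    (hκ : 0 < κ) (hν : 0 < ν) (hεm : εm ≤ ε) (hεp : ε ≤ εp) (hsm : 0 ≤ sm) (hsp : 0 ≤ sp)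
    (hs : sp + sm ≤ 1 - 8 * ν) (hm : ExpBoundNear A β εm am) (hp : ExpBoundNear A β εp ap)
    (ham : am - 2 * π * sm * (ε - εm) ≤ Λ - 2 * κ) (hap : ap - 2 * π * sp * (εp - ε) ≤ Λ - 2 * κ)
    (hΛ : ¬RateLT A β ε (Λ - κ / 4)) (n₀ : ℕ) :
    ∃ n ≥ n₀, HasLargeBlocks A β ε n (bulk ν n) (Real.exp ((Λ - κ) * n)) := by
  obtain ⟨Km, hKm1, hKm⟩ := hm
  obtain ⟨Kp, -, hKp⟩ := hp
  have hK : 0 ≤ max Km Kp := le_max_of_le_left (by linarith)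
  obtain ⟨n₁, hn₁⟩ := eventually_atTop.mp ((eventually_mul_pow_le_exp hκ (2 * max Km Kp) 1).and
    (eventually_mul_pow_le_exp (half_pos hκ) 7 0))
  obtain ⟨N, hN₀, hN⟩ := exists_orbitControls hβ (κ := κ / 4) (by positivity)
    (max (max n₀ n₁) (max 1 ⌈1 / ν⌉₊))
  simp only [ge_iff_le, max_le_iff] at hN₀
  have hνN : 1 ≤ ν * N := by
    rw [← div_le_iff₀' hν]
    exact Nat.ceil_le.mp hN₀.2.2
  obtain ⟨n, hNn, hNν, hnN⟩ := exists_block_length hν (by linarith) hνN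
  obtain ⟨hexp, hexp7⟩ := hn₁ n (hN₀.1.2.trans hNn)
  rw [pow_one] at hexp
  rw [pow_zero, mul_one] at hexp7
  refine ⟨n, hN₀.1.1.trans hNn, ?_⟩
  by_contra hcon
  simp only [HasLargeBlocks, not_forall, not_exists, not_and, not_le] at hcon
  obtain ⟨x, hx⟩ := hcon
  refine hΛ ⟨n, by omega, norm_cocycle_lt_of_forall_bulk hN hL hκ.le hν.le hεm hεp hsm hsp hK
    (fun x => (hKm.self_of_nhds n x).trans ?_) (fun x => (hKp.self_of_nhds n x).trans ?_)
    ham hap hNn (hnN.trans' ?_) hNν hexp hexp7 hx⟩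
  · gcongr
    exact le_max_left _ _
  · gcongr
    exact le_max_right _ _
  · gcongr

lemma HasLargeBlocks.eventually {R : Type*} [NormedRing R] {A : ℂ → R}
    (hA : Function.Periodic A 1) (hc : Continuous A) {S : Set ℕ} {G G' : ℝ} (hG : G' < G)
    (h : HasLargeBlocks A β ε n S G) : ∀ᶠ b in nhds β, HasLargeBlocks A b ε n S G' := by
  refine eventually_forall_of_periodic (fun b x => ?_) fun x => ?_
  · simp_rw [add_sub_right_comm x 1, linePt_add_one, periodic_cocycle hA b n _]
  · obtain ⟨j, hj, hx⟩ := h x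
    have hcont : Continuous fun p : ℝ × ℝ => ‖cocycle A p.1 n (linePt (p.2 - j * p.1) ε)‖ :=
      ((continuous_cocycle hc n).comp
        (f := fun p : ℝ × ℝ => (p.1, linePt (p.2 - j * p.1) ε)) (by fun_prop)).norm
    filter_upwards [continuousAt_const.eventually_lt hcont.continuousAt (hG.trans_le hx)] with p hp
    exact ⟨j, hj, hp.le⟩

end LargeBlocks

/-! ### Two-by-two matrices -/

section FinTwo

lemma norm_mul_sub_mul_le_norm_adjugate_mulVec (Q : Matrix (Fin 2) (Fin 2) ℂ) (v : Fin 2 → ℂ)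
    (k l b : Fin 2) : ‖v l * Q k b - v k * Q l b‖ ≤ ‖Q.adjugate *ᵥ v‖ := by
  have h0 : ‖v 0 * Q 1 1 - v 1 * Q 0 1‖ ≤ ‖Q.adjugate *ᵥ v‖ := by
    refine (congrArg norm ?_).trans_le (norm_le_pi_norm (Q.adjugate *ᵥ v) 0)
    simp only [Matrix.adjugate_fin_two, Matrix.mulVec, dotProduct, Fin.sum_univ_two,
      Matrix.of_apply, Matrix.cons_val_zero, Matrix.cons_val_one]
    ring
  have h1 : ‖v 1 * Q 0 0 - v 0 * Q 1 0‖ ≤ ‖Q.adjugate *ᵥ v‖ := by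
    refine (congrArg norm ?_).trans_le (norm_le_pi_norm (Q.adjugate *ᵥ v) 1)
    simp only [Matrix.adjugate_fin_two, Matrix.mulVec, dotProduct, Fin.sum_univ_two,
      Matrix.of_apply, Matrix.cons_val_zero, Matrix.cons_val_one]
    ring
  have h0' := (norm_sub_rev _ _).trans_le h0
  have h1' := (norm_sub_rev _ _).trans_le h1
  fin_cases k <;> fin_cases l <;> fin_cases b <;>
    first | assumption | simp

/-- The two-sided estimate behind every block argument: if `v` is the vector at the junction of the
blocks `Q` and `P`, then `P *ᵥ v` is its image at the far end, and `Q.adjugate *ᵥ v` is, up to the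
factor `Q.det`, its preimage at the near end. -/
lemma norm_mul_mul_norm_le (P Q : Matrix (Fin 2) (Fin 2) ℂ) (v : Fin 2 → ℂ) :
    ‖P * Q‖ * ‖v‖ ≤ 2 * (‖P *ᵥ v‖ * ‖Q‖ + ‖P‖ * ‖Q.adjugate *ᵥ v‖) := by
  set B := ‖P *ᵥ v‖ * ‖Q‖ + ‖P‖ * ‖Q.adjugate *ᵥ v‖ with hB
  have hB0 : 0 ≤ B := by positivity
  have hentry (k a b : Fin 2) : ‖v k‖ * ‖(P * Q) a b‖ ≤ B := by
    obtain ⟨l, hl⟩ : ∃ l, v k * (P * Q) a b =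
        (P *ᵥ v) a * Q k b - P a l * (v l * Q k b - v k * Q l b) := by
      refine ⟨1 - k, ?_⟩
      fin_cases k <;>
        simp only [Matrix.mul_apply, Matrix.mulVec, dotProduct, Fin.sum_univ_two, Fin.zero_eta,
          Fin.mk_one, sub_zero, sub_self] <;> ring
    rw [← norm_mul, hl]
    refine (norm_sub_le _ _).trans ?_
    rw [norm_mul, norm_mul, hB]
    gcongr
    exacts [norm_le_pi_norm _ a, norm_entry_le Q k b, norm_entry_le P a l,
      norm_mul_sub_mul_le_norm_adjugate_mulVec Q v k l b]
  have hscaled (k : Fin 2) : ‖v k‖ * ‖P * Q‖ ≤ 2 * B := by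
    rw [← norm_smul]
    refine (norm_le_card_mul hB0 fun a b => ?_).trans_eq (by rw [Fintype.card_fin, Nat.cast_two])
    rw [Matrix.smul_apply, norm_smul]
    exact hentry k a b
  rcases eq_or_ne (P * Q) 0 with hPQ | hPQ
  · rw [hPQ, norm_zero, zero_mul]
    positivity
  rw [← le_div_iff₀' (norm_pos_iff.mpr hPQ), pi_norm_le_iff_of_nonneg (by positivity)]
  exact fun k => (le_div_iff₀ (norm_pos_iff.mpr hPQ)).mpr (hscaled k)

lemma exists_spectrum_trace_det (M : Matrix (Fin 2) (Fin 2) ℂ) :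
    ∃ μ ∈ spectrum ℂ M, ∃ ν ∈ spectrum ℂ M, M.trace = μ + ν ∧ M.det = μ * ν := by
  have hcard : M.charpoly.roots.card = 2 := by
    rw [← (IsAlgClosed.splits M.charpoly).natDegree_eq_card_roots, Matrix.charpoly_natDegree_eq_dim,
      Fintype.card_fin]
  obtain ⟨μ, ν, hroots⟩ := Multiset.card_eq_two.mp hcard
  have hmem {t : ℂ} (ht : t ∈ M.charpoly.roots) : t ∈ spectrum ℂ M :=
    Matrix.mem_spectrum_iff_isRoot_charpoly.mpr (Polynomial.isRoot_of_mem_roots ht)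
  refine ⟨μ, hmem (by simp [hroots]), ν, hmem (by simp [hroots]), ?_, ?_⟩
  · rw [Matrix.trace_eq_sum_roots_charpoly, hroots]
    simp
  · rw [Matrix.det_eq_prod_roots_charpoly, hroots]
    simp

/-- The bounds on the determinant force one eigenvalue to be large and the other to be small. -/
lemma le_two_mul_norm_trace {M : Matrix (Fin 2) (Fin 2) ℂ} {ρ R : ℝ} (hR : 0 ≤ R) (hρR : 2 * ρ ≤ R)
    (hM : ∀ μ ∈ spectrum ℂ M, ‖μ‖ < ρ ∨ R < ‖μ‖) (hlow : ρ ^ 2 ≤ ‖M.det‖)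
    (hup : ‖M.det‖ ≤ R ^ 2) : R ≤ 2 * ‖M.trace‖ := by
  obtain ⟨μ, hμ, ν, hν, htr, hdet⟩ := exists_spectrum_trace_det M
  rw [hdet, norm_mul] at hlow hup
  have hsub := norm_sub_le_norm_add μ ν
  have hsub' := norm_sub_le_norm_add ν μ
  rw [add_comm ν] at hsub'
  rw [htr]
  rcases hM μ hμ with hμ | hμ <;> rcases hM ν hν with hν | hν
  · nlinarith [norm_nonneg μ, norm_nonneg ν]
  · linarith
  · linarith
  · nlinarith

lemma exists_mulVec_eq_smul_of_mem_spectrum {n : Type*} [Fintype n] [DecidableEq n]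
    {M : Matrix n n ℂ} {μ : ℂ} (hμ : μ ∈ spectrum ℂ M) : ∃ v ≠ 0, M *ᵥ v = μ • v := by
  rw [← Matrix.spectrum_toLin', ← Module.End.hasEigenvalue_iff_mem_spectrum] at hμ
  obtain ⟨v, hv⟩ := hμ.exists_hasEigenvector
  exact ⟨v, hv.2, by simpa using hv.apply_eq_smul⟩

end FinTwo

/-! ### Rational frequencies -/

section Invariant

variable {q : ℕ} {P : Polynomial ℂ} {T : ℂ → ℂ} {t : ℂ}

lemma LaurentRep.coeff_eq_zero_of_periodic (h : LaurentRep q P T) (ht : IsPrimitiveRoot (ee t) q)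
    (hT : Function.Periodic T t) {i : ℕ} (hi : ¬q ∣ i) : P.coeff i = 0 := by
  have hrot (x : ℝ) : P.eval (ee t * ee x) = P.eval (ee x) := by
    have hx := hT x
    rw [h.eq_eval, h.eq_eval, mul_add, neg_add, ee_add, ee_neg (q * t), ee_nat_mul, ht.pow_eq_one,
      inv_one, mul_one, ee_add, mul_comm (ee x)] at hx
    exact mul_left_cancel₀ (ee_ne_zero _) hx
  have hcoeff := norm_coeff_le_of_forall_norm_eval_ee_le
    (P.comp (Polynomial.C (ee t) * Polynomial.X) - P) (B := 0) (fun x => by simp [hrot]) i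
  rw [norm_le_zero_iff, Polynomial.coeff_sub, Polynomial.comp_C_mul_X_coeff, ← mul_sub_one,
    mul_eq_zero, sub_eq_zero, ht.pow_eq_one_iff_dvd] at hcoeff
  exact hcoeff.resolve_right hi

lemma LaurentRep.norm_le_of_periodic (h : LaurentRep q P T) (hq : 0 < q)
    (ht : IsPrimitiveRoot (ee t) q) (hT : Function.Periodic T t) (x ε : ℝ) :
    ‖T (linePt x ε)‖ ≤ ‖P.coeff 0‖ * Real.exp (2 * π * ε * q) + ‖P.coeff q‖ +
      ‖P.coeff (2 * q)‖ * Real.exp (-2 * π * ε * q) := by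
  have hsupp : ∑ i ∈ {0, q, 2 * q}, ‖P.coeff i‖ * Real.exp (-2 * π * ε * (i - q)) =
      ∑ i ∈ Finset.range (2 * q + 1), ‖P.coeff i‖ * Real.exp (-2 * π * ε * (i - q)) := by
    refine Finset.sum_subset (fun i hi => ?_) fun i hi hi' => ?_
    · simp only [Finset.mem_insert, Finset.mem_singleton] at hi
      rw [Finset.mem_range]
      omega
    · rw [h.coeff_eq_zero_of_periodic ht hT, norm_zero, zero_mul]
      rintro ⟨k, rfl⟩
      have hk : k < 3 := by
        by_contra! hk
        have := Finset.mem_range.mp hi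
        nlinarith
      interval_cases k <;> simp [mul_comm] at hi'
  refine (h.norm_le_sum x ε).trans_eq ?_
  rw [← hsupp, Finset.sum_insert (by simp [hq.ne, hq.ne']), Finset.sum_insert (by simp [hq.ne']),
    Finset.sum_singleton, ← add_assoc, sub_self, mul_zero, Real.exp_zero, mul_one]
  push_cast
  ring_nf

lemma ratCast_den_mul_self (r : ℚ) : (r.den : ℂ) * ((r : ℝ) : ℂ) = (r.num : ℂ) := by
  push_cast
  exact_mod_cast Rat.den_mul_eq_num r

end Invariant

section Rational

variable {M : Type*} [Monoid M] {A : ℂ → M}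

lemma periodic_cocycle_den_mul (hA : Function.Periodic A 1) (r : ℚ) (n : ℕ) :
    Function.Periodic (cocycle A r n) (r.den * ((r : ℝ) : ℂ)) := by
  rw [ratCast_den_mul_self]
  simpa using (periodic_cocycle hA r n).int_mul r.num

lemma periodic_trace_cocycle_den {A : ℂ → Matrix (Fin 2) (Fin 2) ℂ} (hA : Function.Periodic A 1)
    (r : ℚ) : Function.Periodic (fun z => (cocycle A r r.den z).trace) ((r : ℝ) : ℂ) := fun z => by
  obtain ⟨k, hk⟩ := Nat.exists_eq_add_of_lt r.den_pos
  rw [zero_add] at hk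
  have hz : z + ((r : ℝ) : ℂ) + k * ((r : ℝ) : ℂ) = z + r.den * ((r : ℝ) : ℂ) := by
    rw [hk]
    push_cast
    ring
  have hper := periodic_cocycle_den_mul hA r 1 z
  rw [cocycle, cocycleOver_one, cocycleOver_one] at hper
  beta_reduce
  rw [hk, cocycle_succ', cocycle_succ, Matrix.trace_mul_comm, hz, hper]

end Rational

lemma exists_forall_le_mul_exp {w : ℕ → ℝ} {q : ℕ} {g : ℝ} (hq : 0 < q) (hw0 : 0 < w 0)
    (hw : ∀ k, w (k + q) = Real.exp (g * q) * w k) (n : ℕ) :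
    ∃ k ≥ n, 0 < w k ∧ ∀ j : ℕ, w j ≤ w k * Real.exp (g * (j - k)) := by
  have hper : Function.Periodic (fun k => w k * Real.exp (-(g * k))) q := fun k => by
    beta_reduce
    rw [hw, mul_right_comm, ← Real.exp_add, mul_comm]
    push_cast
    ring_nf
  obtain ⟨k₀, -, hmax⟩ := Finset.exists_max_image (Finset.range q)
    (fun k => w k * Real.exp (-(g * k))) ⟨0, Finset.mem_range.mpr hq⟩
  have hle (j : ℕ) : w j * Real.exp (-(g * j)) ≤
      w (k₀ + n * q) * Real.exp (-(g * (k₀ + n * q : ℕ))) := by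
    have hk := hper.nat_mul n k₀
    have hj := hper.map_mod_nat j
    rw [← hj, Nat.cast_id] at *
    exact (hmax _ (Finset.mem_range.mpr (Nat.mod_lt _ hq))).trans_eq hk.symm
  refine ⟨k₀ + n * q, (Nat.le_mul_of_pos_right n hq).trans (Nat.le_add_left _ _), ?_, fun j => ?_⟩
  · exact (mul_pos_iff_of_pos_right (Real.exp_pos _)).mp ((hle 0).trans_lt' (by positivity))
  · calc w j = w j * Real.exp (-(g * j)) * Real.exp (g * j) := by
          rw [mul_assoc, ← Real.exp_add, neg_add_cancel, Real.exp_zero, mul_one]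
      _ ≤ w (k₀ + n * q) * Real.exp (-(g * (k₀ + n * q : ℕ))) * Real.exp (g * j) := by
          gcongr ?_ * _
          exact hle j
      _ = _ := by
          rw [mul_assoc, ← Real.exp_add]
          ring_nf

section Eigenvector

variable {A : ℂ → Matrix (Fin 2) (Fin 2) ℂ}

lemma norm_cocycle_mul_norm_mulVec_le (b : ℝ) (i j l : ℕ) (z : ℂ) (v : Fin 2 → ℂ) :
    ‖cocycle A b (l + j) (z + i * b)‖ * ‖cocycle A b (i + j) z *ᵥ v‖ ≤
      2 * (‖cocycle A b (i + j + l) z *ᵥ v‖ * ‖cocycle A b j (z + i * b)‖ +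
        ‖cocycle A b l (z + (i + j : ℕ) * b)‖ *
          (‖(cocycle A b j (z + i * b)).det‖ * ‖cocycle A b i z *ᵥ v‖)) := by
  have hz : z + i * b + j * b = z + (i + j : ℕ) * b := by push_cast; ring
  have hforward : cocycle A b l (z + (i + j : ℕ) * b) *ᵥ (cocycle A b (i + j) z *ᵥ v) =
      cocycle A b (i + j + l) z *ᵥ v := by
    rw [Matrix.mulVec_mulVec, ← cocycle_add, add_comm l]
  have hbackward : (cocycle A b j (z + i * b)).adjugate *ᵥ (cocycle A b (i + j) z *ᵥ v) =
      (cocycle A b j (z + i * b)).det • (cocycle A b i z *ᵥ v) := by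
    rw [add_comm i, cocycle_add, ← Matrix.mulVec_mulVec, Matrix.mulVec_mulVec,
      Matrix.adjugate_mul, Matrix.smul_mulVec, Matrix.one_mulVec]
  rw [cocycle_add, hz, ← hforward, ← norm_smul (cocycle A b j _).det, ← hbackward]
  exact norm_mul_mul_norm_le _ _ _

/-- The orbit of an eigenvector of the period-`r.den` iterate, divided by `exp (g * k)`, is periodic
in norm; at its maximum the vectors at both ends of a block are controlled. -/
lemma HasLargeBlocks.exists_le_of_eigenvector {r : ℚ} {ε g G x₀ : ℝ} {n : ℕ} {S : Set ℕ}
    (h : HasLargeBlocks A r ε n S G) (hA : Function.Periodic A 1) (hS : ∀ j ∈ S, j ≤ n)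
    {v : Fin 2 → ℂ} (hv : v ≠ 0) {μ : ℂ} (hμ : cocycle A r r.den (linePt x₀ ε) *ᵥ v = μ • v)
    (hg : ‖μ‖ = Real.exp (g * r.den)) :
    ∃ j ∈ S, ∃ x y : ℝ, G ≤ 2 * (Real.exp (g * (n - j)) * ‖cocycle A r j (linePt x ε)‖ +
      ‖cocycle A r (n - j) (linePt y ε)‖ *
        (‖(cocycle A r j (linePt x ε)).det‖ * Real.exp (-(g * j)))) := by
  obtain ⟨k, hnk, hk0, hk⟩ := exists_forall_le_mul_exp
    (w := fun k => ‖cocycle A r k (linePt x₀ ε) *ᵥ v‖) (g := g) r.den_pos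
    (by simpa using hv) (fun k => by
      rw [cocycle_add, periodic_cocycle_den_mul hA r k, ← Matrix.mulVec_mulVec, hμ,
        Matrix.mulVec_smul, norm_smul, hg]) n
  obtain ⟨j, hj, hG⟩ := h (x₀ + k * r)
  obtain ⟨l, rfl⟩ := Nat.exists_eq_add_of_le' (hS j hj)
  obtain ⟨i, rfl⟩ := Nat.exists_eq_add_of_le' (hnk.trans' (hS j hj))
  have hx : x₀ + (i + j : ℕ) * r - j * r = x₀ + i * r := by push_cast; ring
  rw [hx] at hG
  refine ⟨j, hj, x₀ + i * r, x₀ + (i + j : ℕ) * r, ?_⟩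
  have hblock := norm_cocycle_mul_norm_mulVec_le (A := A) r i j l (linePt x₀ ε) v
  simp only [linePt_add_nat_mul] at hblock
  refine le_of_mul_le_mul_right ?_ hk0
  rw [add_tsub_cancel_right]
  calc _ ≤ _ := mul_le_mul_of_nonneg_right hG hk0.le
    _ ≤ _ := hblock
    _ ≤ _ := mul_le_mul_of_nonneg_left (add_le_add
        (mul_le_mul_of_nonneg_right (hk (i + j + l)) (norm_nonneg _))
        (mul_le_mul_of_nonneg_left (mul_le_mul_of_nonneg_left (hk i) (norm_nonneg _))
          (norm_nonneg _))) zero_le_two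
    _ = _ := by push_cast; ring_nf

end Eigenvector

/-! ### Growth rates -/

section Rates

variable {A : ℂ → Matrix (Fin 2) (Fin 2) ℂ} {β ε Λ a a' : ℝ}

lemma RateLT.mono (h : RateLT A β ε a) (haa' : a ≤ a') : RateLT A β ε a' := by
  obtain ⟨n, hn, h⟩ := h
  exact ⟨n, hn, fun x => (h x).trans_le (by gcongr)⟩

lemma RateLT.expBoundNear_of_isLaurent (h : RateLT A β ε a)
    (hL : ∀ i j, IsLaurent 1 (fun z => A z i j)) : ExpBoundNear A β ε a :=
  h.expBoundNear (periodic_of_isLaurent hL) (continuous_of_isLaurent hL)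

/-- `Λ` is the exponential growth rate of the cocycle, uniformly over the line at height `ε`. -/
def HasRate (A : ℂ → Matrix (Fin 2) (Fin 2) ℂ) (β ε Λ : ℝ) : Prop := IsGLB {a | RateLT A β ε a} Λ

lemma HasRate.rateLT (h : HasRate A β ε Λ) (ha : Λ < a) : RateLT A β ε a := by
  obtain ⟨a', ha', -, hlt⟩ := h.exists_between ha
  exact ha'.mono hlt.le

lemma HasRate.not_rateLT (h : HasRate A β ε Λ) (ha : a < Λ) : ¬RateLT A β ε a := fun ha' =>
  (h.1 ha').not_gt ha

lemma exists_hasRate (hL : ∀ i j, IsLaurent 1 (fun z => A z i j)) (h : ¬RateLT A β ε a) :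
    ∃ Λ ≥ a, HasRate A β ε Λ := by
  obtain ⟨C, -, hC⟩ :=
    exists_norm_linePt_le (periodic_of_isLaurent hL) (continuous_of_isLaurent hL) ε
  have hlower : a ∈ lowerBounds {a' | RateLT A β ε a'} := fun a' ha' => by
    by_contra! hlt
    exact h (ha'.mono hlt.le)
  have hne : {a' | RateLT A β ε a'}.Nonempty := ⟨C, 1, one_pos, fun x => by
    rw [cocycle, cocycleOver_one, Nat.cast_one, mul_one]
    exact (hC x).trans_lt (by linarith [Real.add_one_le_exp C])⟩
  exact ⟨_, le_csInf hne hlower, isGLB_csInf hne ⟨a, hlower⟩⟩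

lemma RateLT.zero_of_two_lines (hL : ∀ i j, IsLaurent 1 (fun z => A z i j)) (hε : 0 ≤ ε)
    (hp : ExpBoundNear A β ε a) (hm : ExpBoundNear A β (-ε) a) (haa' : a < a') :
    RateLT A β 0 a' := by
  obtain ⟨Kp, hKp1, hKp⟩ := hp
  obtain ⟨Km, -, hKm⟩ := hm
  set K := max Kp Km
  have hK0 : 0 < K := lt_max_of_lt_left (by linarith)
  obtain ⟨n, hn, hn1⟩ := ((eventually_mul_pow_le_exp (sub_pos.mpr haa') (8 * K) 1).and
    (eventually_gt_atTop 0)).exists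
  refine ⟨n, hn1, fun x => ?_⟩
  have hentry (i j : Fin 2) :
      ‖cocycle A β n (linePt x 0) i j‖ ≤ (2 * n + 1) * (K * Real.exp (a * n)) := by
    refine (isLaurent_cocycle hL β n i j).norm_le_of_two_lines hε (fun x => ?_) (fun x => ?_) x
    · exact (norm_entry_le _ i j).trans ((hKp.self_of_nhds n x).trans
        (by gcongr; exact le_max_left _ _))
    · exact (norm_entry_le _ i j).trans ((hKm.self_of_nhds n x).trans
        (by gcongr; exact le_max_right _ _))
  calc ‖cocycle A β n (linePt x 0)‖
      ≤ Fintype.card (Fin 2) * ((2 * n + 1) * (K * Real.exp (a * n))) :=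
        norm_le_card_mul (by positivity) hentry
    _ = 2 * ((2 * n + 1) * K) * Real.exp (a * n) := by
        rw [Fintype.card_fin]
        push_cast
        ring
    _ < 8 * K * (n + 1) ^ 1 * Real.exp (a * n) := by
        refine mul_lt_mul_of_pos_right ?_ (Real.exp_pos _)
        nlinarith [mul_nonneg hK0.le (Nat.cast_nonneg (α := ℝ) n)]
    _ ≤ Real.exp ((a' - a) * n) * Real.exp (a * n) := by gcongr
    _ = Real.exp (a' * n) := by rw [← Real.exp_add]; ring_nf

/-- Up to an arbitrarily small loss in the exponent, the cocycle attains the growth rate `Λ` along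
arbitrarily long blocks whose bulk meets every orbit segment at height `ε`. -/
def HasBulkGrowth (A : ℂ → Matrix (Fin 2) (Fin 2) ℂ) (β ε Λ : ℝ) : Prop :=
  ∃ ν > 0, ∀ᶠ κ in nhdsWithin 0 (Set.Ioi 0), ∀ n₀ : ℕ, ∃ n ≥ n₀,
    HasLargeBlocks A β ε n (bulk ν n) (Real.exp ((Λ - κ) * n))

/-- The growth rate is flat to the left of `ε` and has slope less than one to its right. -/
lemma HasRate.hasBulkGrowth (h : HasRate A β ε Λ) (hβ : Irrational β)
    (hL : ∀ i j, IsLaurent 1 (fun z => A z i j)) {εm εp ap : ℝ} (hεm : εm < ε) (hεp : ε < εp)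
    (hm : ∀ a > Λ, ExpBoundNear A β εm a) (hp : ExpBoundNear A β εp ap)
    (hap : ap < Λ + 2 * π * (εp - ε)) : HasBulkGrowth A β ε Λ := by
  have hdm : 0 < 2 * π * (ε - εm) := mul_pos Real.two_pi_pos (sub_pos.mpr hεm)
  have hdp : 0 < 2 * π * (εp - ε) := mul_pos Real.two_pi_pos (sub_pos.mpr hεp)
  obtain ⟨s, hs, hs1⟩ : ∃ s, max 0 ((ap - Λ) / (2 * π * (εp - ε))) < s ∧ s < 1 :=
    exists_between (max_lt one_pos ((div_lt_one hdp).mpr (by linarith)))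
  obtain ⟨hs0, hslope⟩ := max_lt_iff.mp hs
  rw [div_lt_iff₀ hdp] at hslope
  refine ⟨(1 - s) / 16, by linarith, ?_⟩
  have hbound : 0 < min ((s * (2 * π * (εp - ε)) - (ap - Λ)) / 2)
      ((1 - s) / 2 * (2 * π * (ε - εm)) / 3) :=
    lt_min (by linarith) (by have := sub_pos.mpr hs1; positivity)
  filter_upwards [Ioo_mem_nhdsGT hbound] with κ hκ
  obtain ⟨hκ0, hκlt⟩ := hκ
  obtain ⟨hκp, hκm⟩ := lt_min_iff.mp hκlt
  have hsm : 3 * κ / (2 * π * (ε - εm)) * (2 * π * (ε - εm)) = 3 * κ := div_mul_cancel₀ _ hdm.ne'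
  refine exists_hasLargeBlocks (sm := 3 * κ / (2 * π * (ε - εm))) (sp := s) hβ hL hκ0 (by linarith)
    hεm.le hεp.le (by positivity) hs0.le ?_ (hm (Λ + κ) (by linarith)) hp (by linarith)
    (by linarith) (h.not_rateLT (by linarith))
  have := (div_lt_iff₀ hdm).mpr (show 3 * κ < (1 - s) / 2 * (2 * π * (ε - εm)) by linarith)
  linarith

lemma expBoundNear_det_of_line (hL : ∀ i j, IsLaurent 1 (fun z => A z i j))
    (h : ExpBoundNear (fun z => (A z).det) β ε a) {κ : ℝ} (hκ : 0 < κ) (ε' : ℝ) :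
    ExpBoundNear (fun z => (A z).det) β ε' (a + 4 * π * |ε - ε'| + κ) := by
  obtain ⟨K, hK1, hK⟩ := h
  have h4κ : 0 < 4 / κ := by positivity
  refine ⟨(1 + 4 / κ) * K, by nlinarith, ?_⟩
  filter_upwards [hK] with b hb l x
  have hl : (4 * l + 1 : ℝ) ≤ (1 + 4 / κ) * Real.exp (κ * l) := by
    have hexp := mul_le_mul_of_nonneg_left (Real.add_one_le_exp (κ * l)) h4κ.le
    have hone : 1 ≤ Real.exp (κ * l) := Real.one_le_exp (by positivity)
    have hcancel : 4 / κ * (κ * l) = 4 * l := by field_simp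
    linarith
  have hdet := isLaurent_det fun i j => isLaurent_cocycle hL b l i j
  simp_rw [det_cocycle] at hdet
  calc _ ≤ _ := hdet.norm_le_of_line (hb l) x ε'
    _ = (4 * l + 1) * (K * Real.exp (a * l) * Real.exp (4 * π * |ε - ε'| * l)) := by
        push_cast
        ring_nf
    _ ≤ (1 + 4 / κ) * Real.exp (κ * l) *
        (K * Real.exp (a * l) * Real.exp (4 * π * |ε - ε'| * l)) := by gcongr
    _ = (1 + 4 / κ) * K *
        (Real.exp (a * l) * Real.exp (4 * π * |ε - ε'| * l) * Real.exp (κ * l)) := by ring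
    _ = _ := by rw [← Real.exp_add, ← Real.exp_add]; ring_nf

lemma eventually_exists_exp_le_norm_det (hL : ∀ i j, IsLaurent 1 (fun z => A z i j))
    (h : ∀ (b : ℝ) (n : ℕ), ∃ x, Real.exp (a * n) ≤ ‖(cocycle A b n (linePt x ε)).det‖) {ε' : ℝ}
    (ha : a' + 4 * π * |ε' - ε| < a) :
    ∀ᶠ n : ℕ in atTop, ∀ b : ℝ, ∃ x, Real.exp (a' * n) ≤ ‖(cocycle A b n (linePt x ε')).det‖ := by
  filter_upwards [eventually_mul_pow_le_exp (sub_pos.mpr ha) 5 1] with n hn b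
  by_contra! hlt
  obtain ⟨x, hx⟩ := h b n
  have hle := (isLaurent_det fun i j => isLaurent_cocycle hL b n i j).norm_le_of_line
    (fun x => (hlt x).le) x ε
  refine hle.not_gt (hx.trans_lt' ?_)
  calc _ = (4 * n + 1) * Real.exp ((a' + 4 * π * |ε' - ε|) * n) := by
        rw [add_mul a', Real.exp_add]
        push_cast
        ring_nf
    _ < 5 * ((n : ℝ) + 1) ^ 1 * Real.exp ((a' + 4 * π * |ε' - ε|) * n) := by
        refine mul_lt_mul_of_pos_right ?_ (Real.exp_pos _)
        linarith [Nat.cast_nonneg (α := ℝ) n]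
    _ ≤ Real.exp ((a - (a' + 4 * π * |ε' - ε|)) * n) *
        Real.exp ((a' + 4 * π * |ε' - ε|) * n) := by gcongr
    _ = Real.exp (a * n) := by rw [← Real.exp_add]; ring_nf

end Rates

/-! ### Rational approximation -/

/-- Rational frequencies tending to `β` whose denominators tend to infinity. -/
def ratApprox (β : ℝ) : Filter ℚ :=
  comap (fun r : ℚ => (r : ℝ)) (nhds β) ⊓ comap Rat.den atTop

lemma tendsto_ratCast_ratApprox (β : ℝ) :
    Tendsto (fun r : ℚ => (r : ℝ)) (ratApprox β) (nhds β) :=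
  tendsto_comap.mono_left inf_le_left

lemma tendsto_den_ratApprox (β : ℝ) : Tendsto Rat.den (ratApprox β) atTop :=
  tendsto_comap.mono_left inf_le_right

lemma neBot_ratApprox {β : ℝ} (hβ : Irrational β) : (ratApprox β).NeBot := by
  refine inf_neBot_iff.mpr fun {s} hs {t} ht => ?_
  obtain ⟨u, hu, hus⟩ := mem_comap.mp hs
  obtain ⟨v, hv, hvt⟩ := mem_comap.mp ht
  obtain ⟨Q, hQ⟩ := mem_atTop_sets.mp hv
  obtain ⟨r, hru, hQr, -⟩ := exists_rat_mem_nhds_of_irrational hβ Q hu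
  exact ⟨r, hus hru, hvt (hQ r.den hQr)⟩

section RatApprox

variable {A : ℂ → Matrix (Fin 2) (Fin 2) ℂ} {β ε Λ ω d : ℝ}

lemma add_mul_add_mul_le_of_mul_add_le {κ ν g s t : ℝ} (hκ : 0 ≤ κ) (hω : 0 ≤ ω)
    (hκω : 4 * κ ≤ ω * ν) (hg : g ≤ Λ - ω) (ht : 0 ≤ t) (hst : 0 ≤ s + t)
    (hνt : ν * (s + t) ≤ t) : (Λ + κ) * s + g * t ≤ (Λ - 3 * κ) * (s + t) := by
  have hgt : g * t ≤ (Λ - ω) * t := by gcongr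
  have hgap : 4 * κ * (s + t) ≤ ω * t := by
    calc 4 * κ * (s + t) ≤ ω * ν * (s + t) := by gcongr
      _ = ω * (ν * (s + t)) := by ring
      _ ≤ ω * t := by gcongr
  linarith [mul_nonneg hκ ht]

lemma HasLargeBlocks.le_of_mem_spectrum {r : ℚ} {κ ν g G K K' x₀ : ℝ} {n : ℕ} {μ : ℂ}
    (h : HasLargeBlocks A r ε n (bulk ν n) G) (hA : Function.Periodic A 1)
    (hK : ∀ (l : ℕ) x, ‖cocycle A r l (linePt x ε)‖ ≤ K * Real.exp ((Λ + κ) * l))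
    (hK' : ∀ (l : ℕ) x, ‖(cocycle A r l (linePt x ε)).det‖ ≤ K' * Real.exp (d * l))
    (hμ : μ ∈ spectrum ℂ (cocycle A r r.den (linePt x₀ ε))) (hg : ‖μ‖ = Real.exp (g * r.den))
    (hκ : 0 ≤ κ) (hω : 0 ≤ ω) (hν : 0 ≤ ν) (hκω : 4 * κ ≤ ω * ν) (hgΛ : g ≤ Λ - ω)
    (hdg : d - g ≤ Λ - ω) : G ≤ 2 * (K + K * K') * Real.exp ((Λ - 3 * κ) * n) := by
  have hK0 : 0 ≤ K := nonneg_of_mul_nonneg_left ((norm_nonneg _).trans (hK 0 0)) (Real.exp_pos _)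
  have hle : ∀ j ∈ bulk ν n, j ≤ n := fun j hj =>
    Nat.cast_le.mp (hj.2.trans (mul_le_of_le_one_left (Nat.cast_nonneg (α := ℝ) n) (by linarith)))
  obtain ⟨v, hv, hvμ⟩ := exists_mulVec_eq_smul_of_mem_spectrum hμ
  obtain ⟨j, hj, x, y, hG⟩ := h.exists_le_of_eigenvector hA hle hv hvμ hg
  have hjn := hle j hj
  have hjn' : (j : ℝ) ≤ n := Nat.cast_le.mpr hjn
  obtain ⟨hjl, hjr⟩ := hj
  have hforward : Real.exp (g * (n - j)) * ‖cocycle A r j (linePt x ε)‖ ≤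
      K * Real.exp ((Λ - 3 * κ) * n) := by
    calc _ ≤ Real.exp (g * (n - j)) * (K * Real.exp ((Λ + κ) * j)) := by
          gcongr
          exact hK j x
      _ = K * Real.exp ((Λ + κ) * j + g * (n - j)) := by rw [Real.exp_add]; ring
      _ ≤ K * Real.exp ((Λ - 3 * κ) * (j + (n - j))) := by
          gcongr
          exact add_mul_add_mul_le_of_mul_add_le hκ hω hκω hgΛ (by linarith) (by simp)
            (by rw [add_sub_cancel]; linarith)
      _ = _ := by rw [add_sub_cancel]
  have hbackward : ‖cocycle A r (n - j) (linePt y ε)‖ *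
      (‖(cocycle A r j (linePt x ε)).det‖ * Real.exp (-(g * j))) ≤
      K * K' * Real.exp ((Λ - 3 * κ) * n) := by
    calc _ ≤ K * Real.exp ((Λ + κ) * (n - j : ℕ)) *
          (K' * Real.exp (d * j) * Real.exp (-(g * j))) := by
          gcongr
          exacts [hK _ y, hK' j x]
      _ = K * K' * Real.exp ((Λ + κ) * (n - j) + (d - g) * j) := by
          rw [Real.exp_add, sub_mul d, sub_eq_add_neg (d * _), Real.exp_add (d * _),
            Nat.cast_sub hjn]
          ring
      _ ≤ K * K' * Real.exp ((Λ - 3 * κ) * (n - j + j)) := by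
          gcongr
          · exact mul_nonneg hK0 (nonneg_of_mul_nonneg_left
              ((norm_nonneg _).trans (hK' 0 0)) (Real.exp_pos _))
          · exact add_mul_add_mul_le_of_mul_add_le hκ hω hκω hdg (Nat.cast_nonneg j) (by simp)
              (by rwa [sub_add_cancel])
      _ = _ := by rw [sub_add_cancel]
  linarith

lemma eventually_lt_or_lt_of_mem_spectrum (hL : ∀ i j, IsLaurent 1 (fun z => A z i j))
    {κ ν : ℝ} (hκ : 0 < κ) (hω : 0 ≤ ω) (hν : 0 ≤ ν) (hκω : 4 * κ ≤ ω * ν)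
    (hblocks : ∀ n₀ : ℕ, ∃ n ≥ n₀,
      HasLargeBlocks A β ε n (bulk ν n) (Real.exp ((Λ - κ) * n)))
    (hrate : ExpBoundNear A β ε (Λ + κ)) (hdet : ExpBoundNear (fun z => (A z).det) β ε d) :
    ∀ᶠ r : ℚ in ratApprox β, ∀ x, ∀ μ ∈ spectrum ℂ (cocycle A r r.den (linePt x ε)),
      ‖μ‖ < Real.exp ((d - Λ + ω) * r.den) ∨ Real.exp ((Λ - ω) * r.den) < ‖μ‖ := by
  have hA := periodic_of_isLaurent hL
  obtain ⟨K, -, hK⟩ := hrate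
  obtain ⟨K', -, hK'⟩ := hdet
  obtain ⟨n₀, hn₀⟩ := eventually_atTop.mp
    (eventually_mul_pow_le_exp hκ (2 * (K + K * K') + 1) 0)
  obtain ⟨n, hn, hlarge⟩ := hblocks (max n₀ 1)
  have hexp := hn₀ n (le_of_max_le_left hn)
  rw [pow_zero, mul_one] at hexp
  have hn1 : (0 : ℝ) < n := Nat.cast_pos.mpr (le_of_max_le_right hn)
  have hlarge' := hlarge.eventually hA (continuous_of_isLaurent hL)
    (G' := Real.exp ((Λ - 2 * κ) * n)) (by gcongr; linarith)
  filter_upwards [(tendsto_ratCast_ratApprox β).eventually (hK.and (hK'.and hlarge'))]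
    with r ⟨hKr, hKr', hr⟩ x μ hμ
  by_contra! hcon
  have hμ0 : 0 < ‖μ‖ := (Real.exp_pos _).trans_le hcon.1
  have hq : (0 : ℝ) < r.den := Nat.cast_pos.mpr r.den_pos
  have hg : ‖μ‖ = Real.exp (Real.log ‖μ‖ / r.den * r.den) := by
    rw [div_mul_cancel₀ _ hq.ne', Real.exp_log hμ0]
  rw [hg, Real.exp_le_exp, Real.exp_le_exp, mul_le_mul_iff_left₀ hq,
    mul_le_mul_iff_left₀ hq] at hcon
  simp_rw [← det_cocycle] at hKr'
  have hle := hr.le_of_mem_spectrum hA hKr hKr' hμ hg hκ.le hω hν hκω hcon.2 (by linarith)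
  have hsplit : Real.exp ((Λ - 2 * κ) * n) = Real.exp (κ * n) * Real.exp ((Λ - 3 * κ) * n) := by
    rw [← Real.exp_add]
    ring_nf
  rw [hsplit, mul_le_mul_iff_left₀ (Real.exp_pos _)] at hle
  linarith

lemma HasBulkGrowth.eventually_exists_exp_le_norm_trace (h : HasBulkGrowth A β ε Λ)
    (hL : ∀ i j, IsLaurent 1 (fun z => A z i j)) (hrate : ∀ a > Λ, ExpBoundNear A β ε a)
    (hdet : ExpBoundNear (fun z => (A z).det) β ε d) (hω : 0 < ω) (hd : d < 2 * (Λ - ω))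
    (hdet' : ∀ᶠ n : ℕ in atTop, ∀ b : ℝ, ∃ x,
      Real.exp (2 * (d - Λ + ω) * n) ≤ ‖(cocycle A b n (linePt x ε)).det‖) :
    ∀ᶠ r : ℚ in ratApprox β, ∃ x,
      Real.exp ((Λ - ω) * r.den) ≤ 2 * ‖(cocycle A r r.den (linePt x ε)).trace‖ := by
  obtain ⟨ν, hν, hblocks⟩ := h
  obtain ⟨κ, hκblocks, hκ, hκω⟩ :=
    (hblocks.and (Ioo_mem_nhdsGT (show 0 < ω * ν / 4 by positivity))).exists
  have hspec := eventually_lt_or_lt_of_mem_spectrum hL hκ hω.le hν.le (by linarith) hκblocks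
    (hrate _ (by linarith)) hdet
  obtain ⟨K', -, hK'⟩ := hdet
  filter_upwards [hspec, (tendsto_ratCast_ratApprox β).eventually hK',
    (tendsto_den_ratApprox β).eventually (hdet'.and
      ((eventually_mul_pow_le_exp (sub_pos.mpr hd) K' 0).and
        (eventually_mul_pow_le_exp (sub_pos.mpr hd) 2 0)))]
    with r hspecr hKr' ⟨hlow, hK'r, htwo⟩
  rw [pow_zero, mul_one] at hK'r htwo
  simp_rw [← det_cocycle] at hKr'
  obtain ⟨x, hx⟩ := hlow r
  refine ⟨x, le_two_mul_norm_trace (ρ := Real.exp ((d - Λ + ω) * r.den)) (Real.exp_pos _).le ?_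
    (hspecr x) ?_ ?_⟩
  · calc _ ≤ Real.exp ((2 * (Λ - ω) - d) * r.den) * Real.exp ((d - Λ + ω) * r.den) := by gcongr
      _ = _ := by rw [← Real.exp_add]; ring_nf
  · refine hx.trans_eq' ?_
    rw [← Real.exp_nat_mul]
    push_cast
    ring_nf
  · calc _ ≤ K' * Real.exp (d * r.den) := hKr' _ x
      _ ≤ Real.exp ((2 * (Λ - ω) - d) * r.den) * Real.exp (d * r.den) := by gcongr
      _ = _ := by
        rw [← Real.exp_add, ← Real.exp_nat_mul]
        push_cast
        ring_nf

lemma norm_trace_le (M : Matrix (Fin 2) (Fin 2) ℂ) : ‖M.trace‖ ≤ 2 * ‖M‖ := by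
  rw [Matrix.trace_fin_two, two_mul]
  exact (norm_add_le _ _).trans (add_le_add (norm_entry_le _ _ _) (norm_entry_le _ _ _))

lemma isLaurent_trace_cocycle (hL : ∀ i j, IsLaurent 1 (fun z => A z i j)) (b : ℝ) (n : ℕ) :
    IsLaurent n (fun z => (cocycle A b n z).trace) := by
  have hentry (i : Fin 2) : IsLaurent n (fun z => cocycle A b n z i i) := by
    simpa using isLaurent_cocycle hL b n i i
  simp only [Matrix.trace_fin_two]
  exact (hentry 0).add (hentry 1)

/-- The trace over a period of a rational frequency has only three Fourier modes: the two extreme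
ones are bounded at the heights `±ε'`, the constant one on the real line. -/
lemma norm_trace_cocycle_den_le (hL : ∀ i j, IsLaurent 1 (fun z => A z i j)) {r : ℚ}
    {ε' B B₀ : ℝ} (hp : ∀ x, ‖cocycle A r r.den (linePt x ε')‖ ≤ B * Real.exp (2 * π * ε' * r.den))
    (hm : ∀ x, ‖cocycle A r r.den (linePt x (-ε'))‖ ≤ B * Real.exp (2 * π * ε' * r.den))
    (h0 : ∀ x, ‖cocycle A r r.den (linePt x 0)‖ ≤ B₀) (hε : 0 ≤ ε) (x : ℝ) :
    ‖(cocycle A r r.den (linePt x ε)).trace‖ ≤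
      2 * (2 * (B * Real.exp (2 * π * ε * r.den)) + B₀) := by
  obtain ⟨P, hP⟩ := isLaurent_trace_cocycle hL r r.den
  have htrace {B η : ℝ} (h : ∀ x, ‖cocycle A r r.den (linePt x η)‖ ≤ B) (x : ℝ) :
      ‖(cocycle A r r.den (linePt x η)).trace‖ ≤ 2 * B :=
    (norm_trace_le _).trans (by gcongr; exact h x)
  have hlow : ‖P.coeff 0‖ ≤ 2 * B := by
    refine le_of_mul_le_mul_right ?_ (Real.exp_pos (2 * π * ε' * r.den))
    refine (hP.norm_coeff_mul_le (htrace hp) 0).trans' (Eq.le ?_) |>.trans_eq (by ring)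
    push_cast
    ring_nf
  have hhigh : ‖P.coeff (2 * r.den)‖ ≤ 2 * B := by
    refine le_of_mul_le_mul_right ?_ (Real.exp_pos (2 * π * ε' * r.den))
    refine (hP.norm_coeff_mul_le (htrace hm) (2 * r.den)).trans' (Eq.le ?_) |>.trans_eq (by ring)
    push_cast
    ring_nf
  have hmid : ‖P.coeff r.den‖ ≤ 2 * B₀ := by
    simpa using hP.norm_coeff_mul_le (htrace h0) r.den
  have hB : 0 ≤ B := by linarith [norm_nonneg (P.coeff 0)]
  have hexp : Real.exp (-2 * π * ε * r.den) ≤ Real.exp (2 * π * ε * r.den) := by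
    have : 0 ≤ 2 * π * ε * r.den := by positivity
    exact Real.exp_le_exp.mpr (by linarith)
  calc _ ≤ ‖P.coeff 0‖ * Real.exp (2 * π * ε * r.den) + ‖P.coeff r.den‖ +
        ‖P.coeff (2 * r.den)‖ * Real.exp (-2 * π * ε * r.den) :=
        hP.norm_le_of_periodic r.den_pos (isPrimitiveRoot_ee r)
          (periodic_trace_cocycle_den (periodic_of_isLaurent hL) r) x ε
    _ ≤ 2 * B * Real.exp (2 * π * ε * r.den) + 2 * B₀ + 2 * B * Real.exp (2 * π * ε * r.den) := by
        gcongr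
    _ = _ := by ring

lemma eventually_two_mul_norm_trace_lt (hL : ∀ i j, IsLaurent 1 (fun z => A z i j))
    {ε' a a₀ a' : ℝ} (hp : ExpBoundNear A β ε' (a + 2 * π * ε'))
    (hm : ExpBoundNear A β (-ε') (a + 2 * π * ε')) (h0 : ExpBoundNear A β 0 a₀) (hε : 0 ≤ ε)
    (ha : a + 2 * π * ε < a') (ha₀ : a₀ < a') :
    ∀ᶠ r : ℚ in ratApprox β, ∀ x,
      2 * ‖(cocycle A r r.den (linePt x ε)).trace‖ < Real.exp (a' * r.den) := by
  obtain ⟨Kp, -, hKp⟩ := hp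
  obtain ⟨Km, -, hKm⟩ := hm
  obtain ⟨K₀, -, hK₀⟩ := h0
  filter_upwards [(tendsto_ratCast_ratApprox β).eventually (hKp.and (hKm.and hK₀)),
    (tendsto_den_ratApprox β).eventually
      ((eventually_mul_pow_le_exp (sub_pos.mpr ha) (32 * max Kp Km) 0).and
        (eventually_mul_pow_le_exp (sub_pos.mpr ha₀) (8 * K₀) 0))]
    with r ⟨hp, hm, h0⟩ ⟨hfar, hreal⟩ x
  rw [pow_zero, mul_one] at hfar hreal
  have hmax {K η : ℝ} (hK : K ≤ max Kp Km)
      (h : ∀ x, ‖cocycle A r r.den (linePt x η)‖ ≤ K * Real.exp ((a + 2 * π * ε') * r.den))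
      (x : ℝ) : ‖cocycle A r r.den (linePt x η)‖ ≤
        max Kp Km * Real.exp (a * r.den) * Real.exp (2 * π * ε' * r.den) := by
    rw [mul_assoc, ← Real.exp_add, ← add_mul]
    exact (h x).trans (by gcongr)
  have htrace := norm_trace_cocycle_den_le hL (hmax (le_max_left _ _) (hp r.den))
    (hmax (le_max_right _ _) (hm r.den)) (h0 r.den) hε x
  have hfar' : 32 * (max Kp Km * Real.exp (a * r.den) * Real.exp (2 * π * ε * r.den)) ≤
      Real.exp (a' * r.den) := by
    calc _ = 32 * max Kp Km * Real.exp ((a + 2 * π * ε) * r.den) := by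
          rw [mul_assoc (max _ _), ← Real.exp_add, ← add_mul, ← mul_assoc]
      _ ≤ Real.exp ((a' - (a + 2 * π * ε)) * r.den) * Real.exp ((a + 2 * π * ε) * r.den) := by
          gcongr
      _ = _ := by rw [← Real.exp_add]; ring_nf
  have hreal' : 8 * (K₀ * Real.exp (a₀ * r.den)) ≤ Real.exp (a' * r.den) := by
    calc _ = 8 * K₀ * Real.exp (a₀ * r.den) := by ring
      _ ≤ Real.exp ((a' - a₀) * r.den) * Real.exp (a₀ * r.den) := by gcongr
      _ = _ := by rw [← Real.exp_add]; ring_nf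
  linarith [Real.exp_pos (a' * r.den)]

end RatApprox

/-! ### Flatness of the growth rate at the real line -/

section Flat

variable {A : ℂ → Matrix (Fin 2) (Fin 2) ℂ} {β ε ε' Λ m d d' a a₀ : ℝ}

/-- If `a₀ < Λ`, then the traces over the periods of the rational approximants of `β` are at height
`ε` both at least of order `exp (Λ * q)` and of strictly smaller order. -/
lemma HasRate.le_of_expBoundNear_zero (h : HasRate A β ε Λ) (hβ : Irrational β)
    (hL : ∀ i j, IsLaurent 1 (fun z => A z i j)) (hε : 0 < ε) (hεε' : ε < ε')
    (hm : ∀ a > Λ, ExpBoundNear A β (-ε) a) (hfarp : ExpBoundNear A β ε' (m + 2 * π * ε'))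
    (hfarm : ExpBoundNear A β (-ε') (m + 2 * π * ε')) (hmΛ : m + 2 * π * ε < Λ)
    (hdet : ExpBoundNear (fun z => (A z).det) β ε d)
    (hdet' : ∀ᶠ n : ℕ in atTop, ∀ b : ℝ, ∃ x,
      Real.exp (d' * n) ≤ ‖(cocycle A b n (linePt x ε)).det‖)
    (hdΛ : d < 2 * Λ) (hdd' : 2 * (d - Λ) < d') (h0 : ExpBoundNear A β 0 a₀) : Λ ≤ a₀ := by
  by_contra! ha₀
  have hbound : 0 < min (min (Λ - a₀) (Λ - (m + 2 * π * ε)))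
      (min ((2 * Λ - d) / 2) ((d' - 2 * (d - Λ)) / 2)) :=
    lt_min (lt_min (by linarith) (by linarith)) (lt_min (by linarith) (by linarith))
  obtain ⟨ω, hω, hωlt⟩ := exists_between hbound
  simp only [lt_min_iff] at hωlt
  obtain ⟨⟨hωa₀, hωm⟩, hωd, hωd'⟩ := hωlt
  have hbulk : HasBulkGrowth A β ε Λ :=
    h.hasBulkGrowth hβ hL (neg_lt_self hε) hεε' hm hfarp (by linarith)
  have hlower := hbulk.eventually_exists_exp_le_norm_trace hL
    (fun a ha => (h.rateLT ha).expBoundNear_of_isLaurent hL)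
    hdet hω (by linarith) (hdet'.mono fun n hn b => (hn b).imp fun x hx => hx.trans' <| by
      gcongr
      linarith)
  have hupper := eventually_two_mul_norm_trace_lt hL hfarp hfarm h0 hε.le
    (a' := Λ - ω) (by linarith) (by linarith)
  have := neBot_ratApprox hβ
  obtain ⟨r, ⟨x, hx⟩, hr⟩ := (hlower.and hupper).exists
  exact (hr x).not_ge hx

lemma HasRate.le_of_rateLT (h : HasRate A β 0 Λ) (hL : ∀ i j, IsLaurent 1 (fun z => A z i j))
    (heven : ∀ {ε a}, RateLT A β ε a → RateLT A β (-ε) a) (hε : 0 ≤ ε) (ha : RateLT A β ε a) :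
    Λ ≤ a :=
  le_of_forall_gt_imp_ge_of_dense fun _ ha' => h.1 <| RateLT.zero_of_two_lines hL hε
    (ha.expBoundNear_of_isLaurent hL) ((heven ha).expBoundNear_of_isLaurent hL) ha'

/-- For even cocycles whose determinants grow at the rate `2 * m`, and which grow at the rate
`m + 2 * π * ε` at large heights `ε`, a growth rate above `m` does not change near the real line. -/
lemma HasRate.exists_pos_forall_rateLT (h : HasRate A β 0 Λ) (hmΛ : m < Λ) (hβ : Irrational β)
    (hL : ∀ i j, IsLaurent 1 (fun z => A z i j))
    (heven : ∀ {ε a}, RateLT A β ε a → RateLT A β (-ε) a)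
    (hfar : ∀ a > m, ∀ ε₀, ∃ ε ≥ ε₀, RateLT A β ε (a + 2 * π * ε))
    (hdet : ∀ a > 2 * m, ExpBoundNear (fun z => (A z).det) β 0 a)
    (hdet' : ∀ (b : ℝ) (n : ℕ), ∃ x, Real.exp (2 * m * n) ≤ ‖(cocycle A b n (linePt x 0)).det‖) :
    ∃ ε > 0, ∀ a > Λ, RateLT A β ε a := by
  set δ := Λ - m
  have hδ0 : 0 < δ := sub_pos.mpr hmΛ
  set ε := δ / (10 * π) with hε
  have hπε : π * ε = δ / 10 := by rw [hε]; field_simp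
  have hε0 : 0 < ε := by positivity
  have hnot {a : ℝ} (ha : a < Λ) : ¬RateLT A β ε a := fun hlt =>
    (h.le_of_rateLT hL heven hε0.le hlt).not_gt ha
  obtain ⟨Λ', -, hΛ'⟩ := exists_hasRate hL (hnot (sub_one_lt Λ))
  have hΛΛ' : Λ ≤ Λ' := le_of_forall_gt_imp_ge_of_dense fun _ ha =>
    h.le_of_rateLT hL heven hε0.le (hΛ'.rateLT ha)
  obtain ⟨ε', hεε', hε'⟩ := hfar (m + δ / 10) (by linarith) (ε + 1)
  have habs : |0 - ε| = ε := by rw [zero_sub, abs_neg, abs_of_pos hε0]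
  have hdetε := expBoundNear_det_of_line hL (hdet (2 * m + δ / 10) (by linarith))
    (κ := δ / 10) (by positivity) ε
  have hdetε' := eventually_exists_exp_le_norm_det hL hdet' (a' := 2 * m - δ / 2) (ε' := ε)
    (by rw [← abs_sub_comm, habs]; linarith)
  rw [habs] at hdetε
  refine ⟨ε, hε0, fun a ha => hΛ'.rateLT (ha.trans_le' ?_)⟩
  refine le_of_forall_gt_imp_ge_of_dense fun a₀ ha₀ => ?_
  exact hΛ'.le_of_expBoundNear_zero hβ hL hε0 (by linarith)
    (fun a ha => (heven (hΛ'.rateLT ha)).expBoundNear_of_isLaurent hL)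
    (hε'.expBoundNear_of_isLaurent hL) ((heven hε').expBoundNear_of_isLaurent hL)
    (by linarith) hdetε hdetε' (by linarith) (by linarith)
    ((h.rateLT ha₀).expBoundNear_of_isLaurent hL)

lemma HasRate.hasBulkGrowth_zero (h : HasRate A β 0 Λ) (hmΛ : m < Λ) (hβ : Irrational β)
    (hL : ∀ i j, IsLaurent 1 (fun z => A z i j))
    (heven : ∀ {ε a}, RateLT A β ε a → RateLT A β (-ε) a)
    (hfar : ∀ a > m, ∀ ε₀, ∃ ε ≥ ε₀, RateLT A β ε (a + 2 * π * ε))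
    (hdet : ∀ a > 2 * m, ExpBoundNear (fun z => (A z).det) β 0 a)
    (hdet' : ∀ (b : ℝ) (n : ℕ), ∃ x, Real.exp (2 * m * n) ≤ ‖(cocycle A b n (linePt x 0)).det‖) :
    HasBulkGrowth A β 0 Λ := by
  obtain ⟨ε, hε, hrate⟩ := h.exists_pos_forall_rateLT hmΛ hβ hL heven hfar hdet hdet'
  have hπε : 0 < π * ε := by positivity
  exact h.hasBulkGrowth hβ hL (neg_neg_of_pos hε) hε
    (fun a ha => (heven (hrate a ha)).expBoundNear_of_isLaurent hL)
    ((hrate (Λ + π * ε) (by linarith)).expBoundNear_of_isLaurent hL) (by linarith)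

end Flat

section Harper

variable {l1 l2 l3 β Λ : ℝ} {E : ℂ}

lemma OuterCoupling.hasBulkGrowth_harperA (h : OuterCoupling l1 l2 l3) (h13 : 1 ≤ l1 + l3)
    (hβ : Irrational β) (hΛ : HasRate (harperA l1 l2 l3 β E) β 0 Λ)
    (hmΛ : Real.log (max l1 l3) < Λ) : HasBulkGrowth (harperA l1 l2 l3 β E) β 0 Λ := by
  refine hΛ.hasBulkGrowth_zero hmΛ hβ isLaurent_harperA RateLT.harperA_neg (fun a ha ε₀ => ?_)
    (fun a ha => ?_) fun b n => ?_
  · simpa using exists_rateLT_harperA_far (l2 := l2) (β := β) (E := E) h13 (sub_pos.mpr ha) ε₀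
  · simpa using h.expBoundNear_det_harperA (E := E) hβ (sub_pos.mpr ha)
  · simpa using (h.logMean_det_cocycle β E b n).exists_exp_le fun x => norm_nonneg _

end Harper

/-! ### Localization of approximate solutions -/

section ApproximateOrbits

lemma norm_mulVec_le {m n : Type*} [Fintype m] [Fintype n] (M : Matrix m n ℂ) (v : n → ℂ) :
    ‖M *ᵥ v‖ ≤ Fintype.card n * ‖M‖ * ‖v‖ := by
  refine (pi_norm_le_iff_of_nonneg (by positivity)).mpr fun i => ?_
  calc ‖∑ j, M i j * v j‖ ≤ ∑ j, ‖M i j‖ * ‖v j‖ :=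
        (norm_sum_le _ _).trans_eq (by simp_rw [norm_mul])
    _ ≤ ∑ _j : n, ‖M‖ * ‖v‖ := by
        gcongr with j
        exacts [norm_entry_le M i j, norm_le_pi_norm v j]
    _ = Fintype.card n * ‖M‖ * ‖v‖ := by simp [mul_assoc]

lemma norm_adjugate_fin_two (M : Matrix (Fin 2) (Fin 2) ℂ) : ‖M.adjugate‖ = ‖M‖ := by
  rw [← sq_eq_sq₀ (norm_nonneg _) (norm_nonneg _), norm_sq_eq_sum_norm_entry_sq,
    norm_sq_eq_sum_norm_entry_sq, Matrix.adjugate_fin_two]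
  simp [Fin.sum_univ_two]
  ring

lemma norm_mulVec_sub_smul_le {M R : ℕ → Matrix (Fin 2) (Fin 2) ℂ} {a : ℕ → ℂ}
    {u e : ℕ → Fin 2 → ℂ} {B F : ℝ} (hB : 1 ≤ B) (hM : ∀ j, ‖M j‖ ≤ B) (ha : ∀ j, ‖a j‖ ≤ B)
    (hR0 : R 0 = 1) (hR : ∀ j, R (j + 1) = M j * R j)
    (hu : ∀ j, M j *ᵥ u j = a j • u (j + 1) - e j) {n : ℕ} (he : ∀ j < n, ‖e j‖ ≤ F) :
    ‖R n *ᵥ u 0 - (∏ j ∈ Finset.range n, a j) • u n‖ ≤ (2 * B) ^ n * n * F := by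
  induction n with
  | zero => simp [hR0]
  | succ n ih =>
    set p := ∏ j ∈ Finset.range n, a j with hp
    have hpn : ‖p‖ ≤ (2 * B) ^ (n + 1) := by
      calc ‖p‖ ≤ ∏ _j ∈ Finset.range n, 2 * B := by
            rw [hp, norm_prod]
            gcongr with j
            linarith [ha j]
        _ = (2 * B) ^ n := by simp
        _ ≤ (2 * B) ^ (n + 1) := pow_le_pow_right₀ (by linarith) n.le_succ
    have hsplit : R (n + 1) *ᵥ u 0 - (∏ j ∈ Finset.range (n + 1), a j) • u (n + 1) =
        M n *ᵥ (R n *ᵥ u 0 - p • u n) - p • e n := by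
      rw [hR, ← Matrix.mulVec_mulVec, Matrix.mulVec_sub, Matrix.mulVec_smul, hu,
        Finset.prod_range_succ, smul_sub, smul_smul]
      abel
    have hmul : ‖M n *ᵥ (R n *ᵥ u 0 - p • u n)‖ ≤ 2 * B * ((2 * B) ^ n * n * F) := by
      refine (norm_mulVec_le _ _).trans ?_
      rw [Fintype.card_fin, Nat.cast_ofNat]
      gcongr
      exacts [hM n, ih fun j hj => he j (hj.trans n.lt_succ_self)]
    have herr : ‖p • e n‖ ≤ (2 * B) ^ (n + 1) * F := by
      rw [norm_smul]
      gcongr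
      exact he n n.lt_succ_self
    rw [hsplit]
    refine (norm_sub_le _ _).trans ((add_le_add hmul herr).trans_eq ?_)
    push_cast
    ring

/-- Propagation of an approximate orbit `M j *ᵥ u j ≈ a j • u (j + 1)` with errors `e j`. -/
lemma norm_mulVec_le_of_step {M R : ℕ → Matrix (Fin 2) (Fin 2) ℂ} {a : ℕ → ℂ}
    {u e : ℕ → Fin 2 → ℂ} {B D F S : ℝ} (hB : 1 ≤ B) (hM : ∀ j, ‖M j‖ ≤ B) (ha : ∀ j, ‖a j‖ ≤ B)
    (hR0 : R 0 = 1) (hR : ∀ j, R (j + 1) = M j * R j)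
    (hu : ∀ j, M j *ᵥ u j = a j • u (j + 1) - e j) {i n : ℕ} (hin : i ≤ n) (hF : 0 ≤ F)
    (he : ∀ j < i, ‖e j‖ ≤ F) (hS : ‖u i‖ ≤ S) (hD : ‖∏ j ∈ Finset.range i, a j‖ ≤ D) :
    ‖R i *ᵥ u 0‖ ≤ D * S + (2 * B) ^ n * n * F := by
  have hsub := norm_mulVec_sub_smul_le hB hM ha hR0 hR hu he
  have hmono : (2 * B) ^ i * i * F ≤ (2 * B) ^ n * n * F := by
    gcongr
    linarith
  have hmain : ‖(∏ j ∈ Finset.range i, a j) • u i‖ ≤ D * S := by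
    rw [norm_smul]
    exact mul_le_mul hD hS (norm_nonneg _) ((norm_nonneg _).trans hD)
  linarith [norm_sub_norm_le (R i *ᵥ u 0) ((∏ j ∈ Finset.range i, a j) • u i)]

end ApproximateOrbits

section WindowSum

variable {F : Type*} [SeminormedAddCommGroup F]

lemma norm_vec_le {a b : F} {S : ℝ} (ha : ‖a‖ ≤ S) (hb : ‖b‖ ≤ S) : ‖![a, b]‖ ≤ S := by
  refine (pi_norm_le_iff_of_nonneg ((norm_nonneg a).trans ha)).mpr fun m => ?_
  fin_cases m
  · exact ha
  · exact hb

/-- The sum of the norms of `f` over the window of radius `N` around `k`. -/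
def windowSum (N : ℕ) (f : ℤ → F) (k : ℤ) : ℝ := ∑ j ∈ Finset.Icc (-N : ℤ) N, ‖f (k + j)‖

lemma windowSum_nonneg (N : ℕ) (f : ℤ → F) (k : ℤ) : 0 ≤ windowSum N f k :=
  Finset.sum_nonneg fun _ _ => norm_nonneg _

lemma norm_le_windowSum {N : ℕ} (f : ℤ → F) {k i : ℤ} (h₁ : k - N ≤ i) (h₂ : i ≤ k + N) :
    ‖f i‖ ≤ windowSum N f k := by
  have := Finset.single_le_sum (f := fun j => ‖f (k + j)‖) (fun j _ => norm_nonneg _)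
    (show i - k ∈ Finset.Icc (-N : ℤ) N from Finset.mem_Icc.mpr ⟨by linarith, by linarith⟩)
  rwa [add_sub_cancel] at this

lemma norm_vec_le_windowSum {N : ℕ} (f : ℤ → F) {k i : ℤ} (h₁ : k - N < i) (h₂ : i ≤ k + N) :
    ‖![f i, f (i - 1)]‖ ≤ windowSum N f k :=
  norm_vec_le (norm_le_windowSum f h₁.le h₂)
    (norm_le_windowSum f (Int.le_sub_one_of_lt h₁) ((sub_one_lt i).le.trans h₂))

end WindowSum

section Residual

variable {l1 l2 l3 β E θ : ℝ} {ψ φ : ℤ → ℂ}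

/-- The extended Harper difference expression with phase `θ`, on arbitrary sequences. -/
def harperAction (l1 l2 l3 β θ : ℝ) (ψ : ℤ → ℂ) (k : ℤ) : ℂ :=
  ((2 * Real.cos (2 * π * (θ + β * k)) : ℝ) : ℂ) * ψ k +
    harperC l1 l2 l3 β ((θ + β * k : ℝ) : ℂ) * ψ (k + 1) +
    (starRingEnd ℂ) (harperC l1 l2 l3 β ((θ + β * (k - 1) : ℝ) : ℂ)) * ψ (k - 1)

/-- `φ = (H - E) ψ` for the extended Harper operator `H` with phase `θ`, without requiring
square summability. -/
def IsResidual (l1 l2 l3 β E θ : ℝ) (ψ φ : ℤ → ℂ) : Prop :=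
  ∀ k : ℤ, φ k = harperAction l1 l2 l3 β θ ψ k - E * ψ k

lemma IsResidual.eq (h : IsResidual l1 l2 l3 β E θ ψ φ) (k : ℤ) :
    (E - 2 * Complex.cos (2 * π * ((θ + β * k : ℝ) : ℂ))) * ψ k -
      harperCt l1 l2 l3 β (((θ + β * k : ℝ) : ℂ) - β) * ψ (k - 1) =
    harperC l1 l2 l3 β ((θ + β * k : ℝ) : ℂ) * ψ (k + 1) - φ k := by
  have hβ : ((θ + β * k : ℝ) : ℂ) - β = ((θ + β * (k - 1) : ℝ) : ℂ) := by push_cast; ring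
  rw [h k, harperAction, conj_harperC, hβ]
  push_cast
  ring

lemma IsResidual.mulVec_eq (h : IsResidual l1 l2 l3 β E θ ψ φ) (k : ℤ) :
    harperA l1 l2 l3 β E ((θ + β * k : ℝ) : ℂ) *ᵥ ![ψ k, ψ (k - 1)] =
      harperC l1 l2 l3 β ((θ + β * k : ℝ) : ℂ) • ![ψ (k + 1), ψ k] - ![φ k, 0] := by
  have hk := h.eq k
  ext i
  fin_cases i
  · simpa [harperA, Matrix.mulVec, dotProduct, Fin.sum_univ_two, sub_eq_add_neg] using hk
  · simp [harperA, Matrix.mulVec, dotProduct, Fin.sum_univ_two]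

lemma IsResidual.adjugate_mulVec_eq (h : IsResidual l1 l2 l3 β E θ ψ φ) (k : ℤ) :
    (harperA l1 l2 l3 β E ((θ + β * k : ℝ) : ℂ)).adjugate *ᵥ ![ψ (k + 1), ψ k] =
      harperCt l1 l2 l3 β (((θ + β * k : ℝ) : ℂ) - β) • ![ψ k, ψ (k - 1)] - ![0, φ k] := by
  have hk := h.eq k
  ext i
  fin_cases i
  · simp [harperA, Matrix.mulVec, dotProduct, Fin.sum_univ_two, Matrix.adjugate_fin_two]
  · simp [harperA, Matrix.mulVec, dotProduct, Fin.sum_univ_two, Matrix.adjugate_fin_two]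
    push_cast at hk
    linear_combination hk

lemma norm_harperC_le_norm_harperA (E : ℂ) (z : ℂ) :
    ‖harperC l1 l2 l3 β z‖ ≤ ‖harperA l1 l2 l3 β E z‖ :=
  norm_entry_le (harperA l1 l2 l3 β E z) 1 0

lemma IsResidual.norm_forward_le (h : IsResidual l1 l2 l3 β E θ ψ φ) {B D : ℝ} (hB : 1 ≤ B)
    (hA : ∀ x : ℝ, ‖harperA l1 l2 l3 β E x‖ ≤ B) {i n : ℕ} (hin : i ≤ n)
    (hD : ∀ x : ℝ, ‖cocycle (harperC l1 l2 l3 β) β i x‖ ≤ D) (k : ℤ) :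
    ‖cocycle (harperA l1 l2 l3 β E) β i ((θ + β * k : ℝ) : ℂ) *ᵥ ![ψ k, ψ (k - 1)]‖ ≤
      D * windowSum (n + 1) ψ k + (2 * B) ^ n * n * windowSum (n + 1) φ k := by
  have hx (j : ℕ) : ((θ + β * k : ℝ) : ℂ) + j * β = ((θ + β * (k + j : ℤ) : ℝ) : ℂ) := by
    push_cast
    ring
  have hstep := norm_mulVec_le_of_step
    (M := fun j => harperA l1 l2 l3 β E ((θ + β * (k + j : ℤ) : ℝ) : ℂ))
    (R := fun j => cocycle (harperA l1 l2 l3 β E) β j ((θ + β * k : ℝ) : ℂ))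
    (a := fun j => harperC l1 l2 l3 β ((θ + β * (k + j : ℤ) : ℝ) : ℂ))
    (u := fun j => ![ψ (k + j), ψ (k + j - 1)]) (e := fun j => ![φ (k + j), 0])
    (D := D) (F := windowSum (n + 1) φ k) (S := windowSum (n + 1) ψ k) hB (fun j => hA _)
    (fun j => (norm_harperC_le_norm_harperA E _).trans (hA _)) rfl
    (fun j => by rw [cocycle_succ', hx])
    (fun j => by
      rw [h.mulVec_eq, Nat.cast_succ, ← add_assoc, add_sub_cancel_right])
    hin (windowSum_nonneg _ _ _)
    (fun j hj => norm_vec_le (norm_le_windowSum φ (by lia) (by lia))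
      (norm_zero.trans_le (windowSum_nonneg _ _ _)))
    (norm_vec_le_windowSum ψ (by lia) (by lia))
    (by simpa only [cocycle_eq_prod, hx] using hD (θ + β * k))
  simpa only [Nat.cast_zero, add_zero] using hstep

lemma norm_prod_harperCt_eq {k : ℤ} {i : ℕ} :
    ‖∏ j ∈ Finset.range i, harperCt l1 l2 l3 β ((θ + β * (k - j - 1 : ℤ) - β : ℝ) : ℂ)‖ =
      ‖cocycle (harperC l1 l2 l3 β) β i ((θ + β * (k - i - 1 : ℤ) : ℝ) : ℂ)‖ := by
  rw [cocycle_eq_prod, norm_prod, norm_prod, ← Finset.prod_range_reflect]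
  refine Finset.prod_congr rfl fun j hj => ?_
  rw [norm_harperCt, Nat.sub_sub, Nat.cast_sub (by have := Finset.mem_range.mp hj; lia)]
  congr 2
  push_cast
  ring

lemma IsResidual.norm_backward_le (h : IsResidual l1 l2 l3 β E θ ψ φ) {B D : ℝ} (hB : 1 ≤ B)
    (hA : ∀ x : ℝ, ‖harperA l1 l2 l3 β E x‖ ≤ B) {i n : ℕ} (hin : i ≤ n)
    (hD : ∀ x : ℝ, ‖cocycle (harperC l1 l2 l3 β) β i x‖ ≤ D) (k : ℤ) :
    ‖(cocycle (harperA l1 l2 l3 β E) β i ((θ + β * k - i * β : ℝ) : ℂ)).adjugate *ᵥ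
      ![ψ k, ψ (k - 1)]‖ ≤
      D * windowSum (n + 1) ψ k + (2 * B) ^ n * n * windowSum (n + 1) φ k := by
  have hx (j : ℕ) : θ + β * k - (j + 1 : ℕ) * β = θ + β * (k - j - 1 : ℤ) := by
    push_cast
    ring
  have hstep := norm_mulVec_le_of_step
    (M := fun j => (harperA l1 l2 l3 β E ((θ + β * (k - j - 1 : ℤ) : ℝ) : ℂ)).adjugate)
    (R := fun j => (cocycle (harperA l1 l2 l3 β E) β j ((θ + β * k - j * β : ℝ) : ℂ)).adjugate)
    (a := fun j => harperCt l1 l2 l3 β ((θ + β * (k - j - 1 : ℤ) - β : ℝ) : ℂ))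
    (u := fun j => ![ψ (k - j), ψ (k - j - 1)]) (e := fun j => ![0, φ (k - j - 1)])
    (D := D) (F := windowSum (n + 1) φ k) (S := windowSum (n + 1) ψ k) hB
    (fun j => (norm_adjugate_fin_two _).trans_le (hA _))
    (fun j => by
      rw [norm_harperCt]
      exact (norm_harperC_le_norm_harperA E _).trans (hA _))
    (by simp)
    (fun j => by
      rw [← Matrix.adjugate_mul_distrib, cocycle_succ, hx]
      congr 3
      push_cast
      ring)
    (fun j => by
      have hadj := h.adjugate_mulVec_eq (k - j - 1)
      rw [sub_add_cancel, ← ofReal_sub] at hadj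
      rw [hadj, Nat.cast_succ, sub_add_eq_sub_sub])
    hin (windowSum_nonneg _ _ _)
    (fun j hj => norm_vec_le (norm_zero.trans_le (windowSum_nonneg _ _ _))
      (norm_le_windowSum φ (by lia) (by lia)))
    (norm_vec_le_windowSum ψ (by lia) (by lia))
    (norm_prod_harperCt_eq.trans_le (hD _))
  simpa only [Nat.cast_zero, sub_zero, zero_mul] using hstep

end Residual

section LocalEstimate

variable {l1 l2 l3 β E θ Λ : ℝ} {ψ φ : ℤ → ℂ}

lemma mul_le_of_le_exp_of_le_exp {p w K₁ K₂ κ ω ν g s t S R : ℝ} (hw : 0 ≤ w) (hK₁ : 0 ≤ K₁)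
    (hK₂ : 0 ≤ K₂) (hS : 0 ≤ S) (hR : 0 ≤ R) (hp : p ≤ K₁ * Real.exp ((Λ + κ) * s))
    (hwle : w ≤ K₂ * Real.exp (g * t) * S + R) (hκ : 0 ≤ κ) (hω : 0 ≤ ω) (hκω : 4 * κ ≤ ω * ν)
    (hg : g ≤ Λ - ω) (hs : 0 ≤ s) (ht : 0 ≤ t) (hνt : ν * (s + t) ≤ t) :
    p * w ≤ K₁ * K₂ * Real.exp ((Λ - 3 * κ) * (s + t)) * S +
      K₁ * Real.exp (|Λ + κ| * (s + t)) * R := by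
  calc p * w ≤ K₁ * Real.exp ((Λ + κ) * s) * (K₂ * Real.exp (g * t) * S + R) := by gcongr
    _ = K₁ * K₂ * Real.exp ((Λ + κ) * s + g * t) * S + K₁ * Real.exp ((Λ + κ) * s) * R := by
        rw [Real.exp_add]
        ring
    _ ≤ _ := by
        gcongr
        · exact add_mul_add_mul_le_of_mul_add_le hκ hω hκω hg ht (by positivity) hνt
        · exact le_abs_self _
        · exact le_add_of_nonneg_right ht

lemma IsResidual.mul_norm_le (h : IsResidual l1 l2 l3 β E θ ψ φ) {B K₁ K₂ κ ω ν g G : ℝ} {n : ℕ}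
    (hlarge : HasLargeBlocks (harperA l1 l2 l3 β E) β 0 n (bulk ν n) G) (hB : 1 ≤ B)
    (hA : ∀ x : ℝ, ‖harperA l1 l2 l3 β E x‖ ≤ B)
    (hK₁ : ∀ (i : ℕ) (x : ℝ), ‖cocycle (harperA l1 l2 l3 β E) β i x‖ ≤
      K₁ * Real.exp ((Λ + κ) * i))
    (hK₂ : ∀ (i : ℕ) (x : ℝ), ‖cocycle (harperC l1 l2 l3 β) β i x‖ ≤ K₂ * Real.exp (g * i))
    (hκ : 0 ≤ κ) (hω : 0 ≤ ω) (hν : 0 ≤ ν) (hκω : 4 * κ ≤ ω * ν) (hg : g ≤ Λ - ω) (k : ℤ) :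
    G * ‖ψ k‖ ≤ 4 * (K₁ * K₂ * Real.exp ((Λ - 3 * κ) * n)) * windowSum (n + 1) ψ k +
      4 * (K₁ * Real.exp (|Λ + κ| * n) * ((2 * B) ^ n * n)) * windowSum (n + 1) φ k := by
  have hK₁0 : 0 ≤ K₁ := nonneg_of_mul_nonneg_left ((norm_nonneg _).trans (hK₁ 0 0)) (Real.exp_pos _)
  have hK₂0 : 0 ≤ K₂ := nonneg_of_mul_nonneg_left ((norm_nonneg _).trans (hK₂ 0 0)) (Real.exp_pos _)
  obtain ⟨j, ⟨hjl, hju⟩, hG⟩ := hlarge (θ + β * k)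
  have hjn : j ≤ n := Nat.cast_le.mp
    (hju.trans (mul_le_of_le_one_left (Nat.cast_nonneg (α := ℝ) n) (by linarith)))
  obtain ⟨i, rfl⟩ := Nat.exists_eq_add_of_le' hjn
  rw [linePt_zero, cocycle_add, ofReal_sub, ofReal_mul, ofReal_natCast, sub_add_cancel,
    ← ofReal_natCast, ← ofReal_mul, ← ofReal_sub] at hG
  set n := i + j
  set P := cocycle (harperA l1 l2 l3 β E) β i ((θ + β * k : ℝ) : ℂ)
  set Q := cocycle (harperA l1 l2 l3 β E) β j ((θ + β * k - j * β : ℝ) : ℂ)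
  set v : Fin 2 → ℂ := ![ψ k, ψ (k - 1)]
  set R := (2 * B) ^ n * n * windowSum (n + 1) φ k
  have hS0 := windowSum_nonneg (n + 1) ψ k
  have hR0 : 0 ≤ R := mul_nonneg (by positivity) (windowSum_nonneg _ _ _)
  have hn : (n : ℝ) = i + j := Nat.cast_add i j
  rw [hn] at hjl hju
  have hforward : ‖Q‖ * ‖P *ᵥ v‖ ≤ K₁ * K₂ * Real.exp ((Λ - 3 * κ) * n) * windowSum (n + 1) ψ k +
      K₁ * Real.exp (|Λ + κ| * n) * R := by
    rw [hn, add_comm (i : ℝ)]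
    exact mul_le_of_le_exp_of_le_exp (norm_nonneg _) hK₁0 hK₂0 hS0 hR0 (hK₁ j _)
      (h.norm_forward_le hB hA (Nat.le_add_right i j) (hK₂ i) k) hκ hω hκω hg (Nat.cast_nonneg j)
      (Nat.cast_nonneg i) (by linarith)
  have hbackward : ‖P‖ * ‖Q.adjugate *ᵥ v‖ ≤
      K₁ * K₂ * Real.exp ((Λ - 3 * κ) * n) * windowSum (n + 1) ψ k +
        K₁ * Real.exp (|Λ + κ| * n) * R := by
    rw [hn]
    exact mul_le_of_le_exp_of_le_exp (norm_nonneg _) hK₁0 hK₂0 hS0 hR0 (hK₁ i _)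
      (h.norm_backward_le hB hA (Nat.le_add_left j i) (hK₂ j) k) hκ hω hκω hg (Nat.cast_nonneg i)
      (Nat.cast_nonneg j) (by linarith)
  calc G * ‖ψ k‖ ≤ ‖P * Q‖ * ‖v‖ := by
        gcongr
        exact norm_le_pi_norm v 0
    _ ≤ 2 * (‖P *ᵥ v‖ * ‖Q‖ + ‖P‖ * ‖Q.adjugate *ᵥ v‖) := norm_mul_mul_norm_le P Q v
    _ ≤ _ := by rw [mul_comm ‖P *ᵥ v‖]; linarith

lemma mul_div_exp_le_half {K κ : ℝ} {n : ℕ} (hK : 0 ≤ K)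
    (h : 24 * K * (n + 1) ≤ Real.exp (2 * κ * n)) :
    (2 * (n + 1 : ℕ) + 1) * (4 * (K * Real.exp ((Λ - 3 * κ) * n)) / Real.exp ((Λ - κ) * n)) ≤
      1 / 2 := by
  have hexp : Real.exp ((Λ - κ) * n) = Real.exp (2 * κ * n) * Real.exp ((Λ - 3 * κ) * n) := by
    rw [← Real.exp_add]
    ring_nf
  rw [hexp, ← mul_assoc 4, mul_div_mul_right _ _ (Real.exp_pos _).ne', ← mul_div_assoc,
    div_le_iff₀ (Real.exp_pos _)]
  push_cast
  linarith [mul_nonneg hK (Nat.cast_nonneg (α := ℝ) n)]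

/-- Localization: up to the residual, every value of `ψ` is a small multiple of its neighbours. -/
lemma OuterCoupling.exists_norm_le_windowSum (h : OuterCoupling l1 l2 l3) (hβ : Irrational β)
    (hbulk : HasBulkGrowth (harperA l1 l2 l3 β E) β 0 Λ)
    (hΛ : HasRate (harperA l1 l2 l3 β E) β 0 Λ) (hmΛ : Real.log (max l1 l3) < Λ) (θ : ℝ) :
    ∃ (N : ℕ) (s C : ℝ), 0 ≤ s ∧ 0 ≤ C ∧ (2 * N + 1) * s ≤ 1 / 2 ∧
      ∀ ψ φ : ℤ → ℂ, IsResidual l1 l2 l3 β E θ ψ φ → ∀ k : ℤ,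
        ‖ψ k‖ ≤ s * windowSum N ψ k + C * windowSum N φ k := by
  obtain ⟨ν, hν, hblocks⟩ := hbulk
  set ω := (Λ - Real.log (max l1 l3)) / 2 with hω_def
  have hω : 0 < ω := half_pos (sub_pos.mpr hmΛ)
  obtain ⟨κ, hblocks, hκ, hκlt⟩ :=
    (hblocks.and (Ioo_mem_nhdsGT (show 0 < min ω (ω * ν / 4) by positivity))).exists
  obtain ⟨hκω, hκν⟩ := lt_min_iff.mp hκlt
  obtain ⟨K₁, hK₁1, hK₁⟩ := (hΛ.rateLT (lt_add_of_pos_right Λ hκ)).expBoundNear_of_isLaurent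
    isLaurent_harperA
  obtain ⟨K₂, hK₂1, hK₂⟩ := h.expBoundNear_harperC hβ hκ
  obtain ⟨B, hB1, hB⟩ := exists_norm_linePt_le (periodic_harperA (l1 := l1) (l2 := l2) (l3 := l3)
    (β := β) (E := E)) continuous_harperA 0
  replace hK₁ := hK₁.self_of_nhds
  replace hK₂ := hK₂.self_of_nhds
  simp only [linePt_zero] at hK₁ hK₂ hB
  obtain ⟨n₀, hn₀⟩ := eventually_atTop.mp
    (eventually_mul_pow_le_exp (κ := 2 * κ) (by positivity) (24 * (K₁ * K₂)) 1)
  obtain ⟨n, hn, hlarge⟩ := hblocks n₀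
  have hsmall := hn₀ n hn
  rw [pow_one] at hsmall
  set G := Real.exp ((Λ - κ) * n)
  have hG : 0 < G := Real.exp_pos _
  refine ⟨n + 1, 4 * (K₁ * K₂ * Real.exp ((Λ - 3 * κ) * n)) / G,
    4 * (K₁ * Real.exp (|Λ + κ| * n) * ((2 * B) ^ n * n)) / G, by positivity, by positivity, ?_,
    fun ψ φ hres k => ?_⟩
  · exact mul_div_exp_le_half (by positivity) hsmall
  · have := hres.mul_norm_le hlarge hB1 hB hK₁ hK₂ hκ.le hω.le hν.le (by linarith) (by linarith) k
    rwa [div_mul_eq_mul_div, div_mul_eq_mul_div, ← add_div, le_div_iff₀' hG]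

end LocalEstimate

/-! ### The operator on `ℓ²(ℤ)` -/

section WindowEstimate

variable {F : Type*} [NormedAddCommGroup F] {p : ℝ≥0∞}

lemma summable_norm_rpow_add (hp : 0 < p.toReal) (f : lp (fun _ : ℤ => F) p) (j : ℤ) :
    Summable fun k => ‖f (k + j)‖ ^ p.toReal :=
  (Equiv.addRight j).summable_iff.mpr ((lp.memℓp f).summable hp)

/-- The sequence `k ↦ ‖f (k + j)‖`, whose sum over `j` turns pointwise bounds into `ℓᵖ` bounds. -/
def normShift (hp : 0 < p.toReal) (f : lp (fun _ : ℤ => F) p) (j : ℤ) : lp (fun _ : ℤ => ℝ) p :=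
  ⟨fun k => ‖f (k + j)‖, (memℓp_gen_iff hp).mpr (by
    simpa only [norm_norm] using summable_norm_rpow_add hp f j)⟩

lemma norm_normShift (hp : 0 < p.toReal) (f : lp (fun _ : ℤ => F) p) (j : ℤ) :
    ‖normShift hp f j‖ = ‖f‖ := by
  rw [lp.norm_eq_tsum_rpow hp, lp.norm_eq_tsum_rpow hp]
  congr 1
  simp only [normShift, norm_norm]
  exact (Equiv.addRight j).tsum_eq fun k => ‖f k‖ ^ p.toReal

lemma norm_sum_normShift_le [Fact (1 ≤ p)] (hp : 0 < p.toReal) (f : lp (fun _ : ℤ => F) p)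
    (N : ℕ) : ‖∑ j ∈ Finset.Icc (-N : ℤ) N, normShift hp f j‖ ≤ (2 * N + 1) * ‖f‖ := by
  have hcard : (Finset.Icc (-N : ℤ) N).card = 2 * N + 1 := by
    rw [Int.card_Icc]
    lia
  refine (norm_sum_le _ _).trans_eq ?_
  simp [norm_normShift, hcard]

lemma norm_le_of_norm_le_windowSum [Fact (1 ≤ p)] (hp : p ≠ ∞) {f g : lp (fun _ : ℤ => F) p}
    {N : ℕ} {s C : ℝ} (hs : 0 ≤ s) (hC : 0 ≤ C) (hsN : (2 * N + 1) * s ≤ 1 / 2)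
    (h : ∀ k, ‖f k‖ ≤ s * windowSum N f k + C * windowSum N g k) :
    ‖f‖ ≤ 2 * ((2 * N + 1) * C) * ‖g‖ := by
  have hp0 : 0 < p.toReal := ENNReal.toReal_pos (one_pos.trans_le Fact.out).ne' hp
  have hp1 : p ≠ 0 := (one_pos.trans_le Fact.out).ne'
  have hsum (u : lp (fun _ : ℤ => F) p) (k : ℤ) :
      (∑ j ∈ Finset.Icc (-N : ℤ) N, normShift hp0 u j) k = windowSum N u k := by
    rw [lp.coeFn_sum, Finset.sum_apply]
    rfl
  have hle : ‖f‖ ≤ s * ((2 * N + 1) * ‖f‖) + C * ((2 * N + 1) * ‖g‖) := by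
    calc ‖f‖ ≤ ‖s • ∑ j ∈ Finset.Icc (-N : ℤ) N, normShift hp0 f j +
            C • ∑ j ∈ Finset.Icc (-N : ℤ) N, normShift hp0 g j‖ := by
          refine lp.norm_mono hp1 fun k => (h k).trans ((Real.le_norm_self _).trans_eq ?_)
          rw [← hsum, ← hsum]
          rfl
      _ ≤ s * ((2 * N + 1) * ‖f‖) + C * ((2 * N + 1) * ‖g‖) := by
          refine (norm_add_le _ _).trans ?_
          rw [norm_smul, norm_smul, Real.norm_of_nonneg hs, Real.norm_of_nonneg hC]
          gcongr <;> exact norm_sum_normShift_le hp0 _ N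
  linarith [mul_le_mul_of_nonneg_right hsN (norm_nonneg f)]

end WindowEstimate

lemma isUnit_of_isSelfAdjoint_of_norm_le {𝕜 V : Type*} [RCLike 𝕜] [NormedAddCommGroup V]
    [InnerProductSpace 𝕜 V] [CompleteSpace V] {T : V →L[𝕜] V} (hT : IsSelfAdjoint T) {C : ℝ}
    (hC : 0 ≤ C) (h : ∀ v, ‖v‖ ≤ C * ‖T v‖) : IsUnit T := by
  have hker : LinearMap.ker (T : V →ₗ[𝕜] V) = ⊥ := (Submodule.eq_bot_iff _).mpr fun v hv => by
    have hTv : T v = 0 := hv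
    simpa [hTv] using h v
  rw [ContinuousLinearMap.isUnit_iff_bijective,
    ContinuousLinearMap.bijective_iff_dense_range_and_antilipschitz]
  refine ⟨?_, ⟨C, hC⟩, ContinuousLinearMap.antilipschitz_of_bound _ h⟩
  rw [Submodule.topologicalClosure_eq_top_iff, ContinuousLinearMap.orthogonal_range,
    hT.adjoint_eq, hker]

section HarperOperator

variable {l1 l2 l3 β θ : ℝ} {H : lp (fun _ : ℤ => ℂ) 2 →L[ℂ] lp (fun _ : ℤ => ℂ) 2}

/-- `H` is the extended Harper operator with phase `θ`, acting on square-summable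
sequences. -/
def IsHarperOperator (l1 l2 l3 β θ : ℝ)
    (H : lp (fun _ : ℤ => ℂ) 2 →L[ℂ] lp (fun _ : ℤ => ℂ) 2) : Prop :=
  ∀ (ψ : lp (fun _ : ℤ => ℂ) 2) (k : ℤ), H ψ k = harperAction l1 l2 l3 β θ ψ k

lemma IsHarperOperator.isResidual (hH : IsHarperOperator l1 l2 l3 β θ H) (E : ℝ)
    (ψ : lp (fun _ : ℤ => ℂ) 2) :
    IsResidual l1 l2 l3 β E θ ψ ((H - algebraMap ℂ _ (E : ℂ)) ψ : lp (fun _ : ℤ => ℂ) 2) :=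
  fun k => by rw [← hH]; rfl

lemma IsHarperOperator.apply_single (hH : IsHarperOperator l1 l2 l3 β θ H) (k : ℤ) :
    H (lp.single 2 k 1) =
      ((2 * Real.cos (2 * π * (θ + β * k)) : ℝ) : ℂ) • lp.single 2 k (1 : ℂ) +
      harperC l1 l2 l3 β ((θ + β * (k - 1) : ℝ) : ℂ) • lp.single 2 (k - 1) (1 : ℂ) +
      (starRingEnd ℂ) (harperC l1 l2 l3 β ((θ + β * k : ℝ) : ℂ)) •
        lp.single 2 (k + 1) (1 : ℂ) := by
  ext i
  rw [hH, harperAction]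
  simp only [lp.coeFn_add, lp.coeFn_smul, Pi.add_apply, Pi.smul_apply, lp.coeFn_single,
    Pi.single_apply, smul_eq_mul]
  rcases eq_or_ne i k with rfl | hk
  · simp [show i ≠ i - 1 by lia]
  rcases eq_or_ne i (k - 1) with rfl | hpred
  · simp [show k - 1 - 1 ≠ k by lia, show k - 1 ≠ k + 1 by lia]
  rcases eq_or_ne i (k + 1) with rfl | hsucc
  · simp [show k + 1 + 1 ≠ k by lia, show k + 1 ≠ k - 1 by lia]
  · simp [hk, hpred, hsucc, show i + 1 ≠ k by lia, show i - 1 ≠ k by lia]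

lemma IsHarperOperator.isSelfAdjoint (hH : IsHarperOperator l1 l2 l3 β θ H) :
    IsSelfAdjoint H := by
  rw [ContinuousLinearMap.isSelfAdjoint_iff']
  ext ψ k
  have hcoord (χ : lp (fun _ : ℤ => ℂ) 2) : χ k = inner ℂ (lp.single 2 k (1 : ℂ)) χ := by
    simp [lp.inner_single_left]
  rw [hcoord, ContinuousLinearMap.adjoint_inner_right, hH.apply_single, hH, harperAction]
  simp only [inner_add_left, inner_smul_left, lp.inner_single_left, Complex.conj_ofReal,
    RCLike.conj_conj, RCLike.inner_apply, map_one, mul_one]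
  ring

lemma IsHarperOperator.isUnit_sub_algebraMap (hH : IsHarperOperator l1 l2 l3 β θ H) {E C : ℝ}
    (hC : 0 ≤ C) (h : ∀ ψ, ‖ψ‖ ≤ C * ‖(H - algebraMap ℂ _ (E : ℂ)) ψ‖) :
    IsUnit (H - algebraMap ℂ _ (E : ℂ)) :=
  isUnit_of_isSelfAdjoint_of_norm_le
    (hH.isSelfAdjoint.sub (IsSelfAdjoint.algebraMap _ (conj_eq_iff_im.mpr (ofReal_im E)))) hC h

lemma OuterCoupling.notMem_spectrum_of_lt_lyapunov (h : OuterCoupling l1 l2 l3)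
    (h13 : 1 ≤ l1 + l3) (hβ : Irrational β) (hH : IsHarperOperator l1 l2 l3 β θ H) {E : ℝ}
    (hlt : ((Real.log (max l1 l3) : ℝ) : EReal) <
      lyapunov β (fun x : ℝ => harperA l1 l2 l3 β (E : ℂ) (x : ℂ))) :
    (E : ℂ) ∉ spectrum ℂ H := by
  obtain ⟨a, hma, ha⟩ := EReal.lt_iff_exists_real_btwn.mp hlt
  obtain ⟨Λ, haΛ, hΛ⟩ := exists_hasRate isLaurent_harperA fun hrate : RateLT _ β 0 a =>
    hrate.lyapunov_le.not_gt ha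
  have hmΛ : Real.log (max l1 l3) < Λ := (EReal.coe_lt_coe_iff.mp hma).trans_le haΛ
  obtain ⟨N, s, C, hs, hC, hsN, hlocal⟩ :=
    h.exists_norm_le_windowSum hβ (h.hasBulkGrowth_harperA h13 hβ hΛ hmΛ) hΛ hmΛ θ
  have hunit := hH.isUnit_sub_algebraMap (E := E) (by positivity) fun ψ =>
    norm_le_of_norm_le_windowSum ENNReal.ofNat_ne_top hs hC hsN
      (hlocal _ _ (hH.isResidual E ψ))
  rw [spectrum.mem_iff, not_not, ← IsUnit.neg_iff, neg_sub]
  exact hunit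

end HarperOperator

end ExtendedHarper

/-- For irrational `β` and coupling `λ` in region III
(`max {1, λ₂} ≤ λ₁ + λ₃`), for every real energy `E` in the spectrum of the extended Harper
operator, the Lyapunov exponent of the transfer-matrix cocycle equals `log (max λ₁ λ₃)`
(equivalently, the Lyapunov exponent `L(β, B^E)` vanishes on the spectrum in region III). -/
theorem extendedHarper_lyapunov_regionIII
    (β lam1 lam2 lam3 θ : ℝ) (hβ : Irrational β)
    (h1 : 0 ≤ lam1) (h2 : 0 ≤ lam2) (h3 : 0 ≤ lam3)
    (hpos : 0 < lam1 ∨ 0 < lam2 ∨ 0 < lam3)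
    (hIII : max 1 lam2 ≤ lam1 + lam3)
    (H : lp (fun _ : ℤ => ℂ) 2 →L[ℂ] lp (fun _ : ℤ => ℂ) 2)
    (hH : ∀ (ψ : lp (fun _ : ℤ => ℂ) 2) (k : ℤ),
      H ψ k = ((2 * Real.cos (2 * π * (θ + β * k)) : ℝ) : ℂ) * ψ k +
        harperC lam1 lam2 lam3 β ((θ + β * k : ℝ) : ℂ) * ψ (k + 1) +
        (starRingEnd ℂ) (harperC lam1 lam2 lam3 β ((θ + β * (k - 1) : ℝ) : ℂ)) * ψ (k - 1))
    (E : ℝ) (hE : (E : ℂ) ∈ spectrum ℂ H) :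
    lyapunov β (fun x : ℝ => harperA lam1 lam2 lam3 β (E : ℂ) (x : ℂ)) =
      ((Real.log (max lam1 lam3) : ℝ) : EReal) := by
  have hsum : 1 ≤ lam1 + lam3 := (le_max_left _ _).trans hIII
  have h : ExtendedHarper.OuterCoupling lam1 lam2 lam3 :=
    ⟨h1, h2, h3, lt_max_iff.mpr (by by_contra! hc; linarith), (le_max_right _ _).trans hIII⟩
  refine le_antisymm ?_ (h.log_max_le_lyapunov β E)
  by_contra! hlt
  exact h.notMem_spectrum_of_lt_lyapunov hsum hβ hH hlt hE
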